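/- Case B1, all powers: Let l1, l2 be distinct odd primes with l1 ≡ 3 (mod 4) and l2 ≡ 1 (mod 4), let r1, r2 ≥ 1, and let N = l1^{r1} l2^{r2}. Assume the multiplicative order of p modulo l1^{r1} is φ(l1^{r1}), the multiplicative order of p modulo l2^{r2} is φ(l2^{r2}), and f = φ(N)/2. Set h12 = h(Q(√-l1 l2)). Then there exist integers a', b' with 4 p^{h12} = (a')² + l1 l2 (b')² and a' ≡ 2 p^{h12/2} (mod l1) such that for all integers t1, t2 with 0 ≤ t1 < r1 and 0 ≤ t2 < r2: G(χ^{l1^{t1} l2^{t2}}) = p^{(f - h12 · l1^{t1} l2^{t2})/2} · ((a' + b' √-(l1 l2))/2)^{l1^{t1} l2^{t2}}; G(χ^{l1^{r1} l2^{t2}}) = p^{f/2}; and G(χ^{l1^{t1} l2^{r2}}) = -p^{f/2}. -/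

import Mathlib

open Complex Polynomial IntermediateField

/-- The complex primitive `p`-th root of unity `exp(2πi/p)`. -/
noncomputable def zetaP (p : ℕ) : ℂ := Complex.exp (2 * Real.pi * Complex.I / p)

/-- The Gauss sum `G(χ^λ) = ∑_{x ∈ F, x ≠ 0} χ^λ(x) ζ_p^{T(x)}`, where
`T` is the trace map from `F` down to `ZMod p`. -/
noncomputable def gaussSumN (p : ℕ) {F : Type} [Field F] [Fintype F] [Algebra (ZMod p) F]
    (χ : MulChar F ℂ) (lam : ℕ) : ℂ :=
  letI : DecidableEq F := Classical.decEq F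
  ∑ x ∈ Finset.univ.filter (fun x : F => x ≠ 0),
    (χ ^ lam) x * zetaP p ^ (Algebra.trace (ZMod p) F x).val

/-- `√-m = i√m ∈ ℂ`. -/
noncomputable def sqrtNeg (m : ℕ) : ℂ := Real.sqrt m * Complex.I

theorem sqrtNeg_sq (m : ℕ) : sqrtNeg m ^ 2 = -(m : ℂ) := by
  have h : ((Real.sqrt m : ℝ) : ℂ) ^ 2 = ((m : ℝ) : ℂ) := by
    rw [← Complex.ofReal_pow, Real.sq_sqrt (by positivity)]
  simp only [sqrtNeg, mul_pow, Complex.I_sq, h]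
  push_cast
  ring

theorem isIntegral_sqrtNeg (m : ℕ) : IsIntegral ℚ (sqrtNeg m) := by
  refine ⟨X ^ 2 + C (m : ℚ), monic_X_pow_add_C _ (by norm_num), ?_⟩
  simp [sqrtNeg_sq]

/-- The class number `h(ℚ(√-m))` of the quadratic field `ℚ(√-m) ⊆ ℂ`. -/
noncomputable def classNumSqrtNeg (m : ℕ) : ℕ :=
  haveI : FiniteDimensional ℚ ℚ⟮sqrtNeg m⟯ :=
    IntermediateField.adjoin.finiteDimensional (isIntegral_sqrtNeg m)
  haveI : CharZero ℚ⟮sqrtNeg m⟯ :=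
    charZero_of_injective_algebraMap (algebraMap ℚ ℚ⟮sqrtNeg m⟯).injective
  haveI : NumberField ℚ⟮sqrtNeg m⟯ := ⟨⟩
  NumberField.classNumber ℚ⟮sqrtNeg m⟯

/-- `√p* = √p` if `p ≡ 1 (mod 4)` and `i√p` if `p ≡ 3 (mod 4)`. -/
noncomputable def sqrtPStar (p : ℕ) : ℂ :=
  if p % 4 = 1 then (Real.sqrt p : ℂ) else (Real.sqrt p : ℂ) * Complex.I

/-!
The idea. Put `D = l1 * l2`. Since `p` generates the kernel of the Jacobi symbol modulo `D` among
the units modulo `N`, the Gauss sum `G(χ ^ m)` with `m * D ∣ N` lies in `ℚ(√-D)`, where its norm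
is `p ^ f`. Reducing Jacobi sums at a place above `p` (Stickelberger) bounds the valuations of
`G(χ ^ m)` and of its conjugate below by exponents which add up to `f`, so both bounds are sharp.
The difference of these exponents is a sum of residues against the Jacobi symbol, and the class
number formula for `ℚ(√-D)`, obtained from the value at `1` of the `L`-function of the symbol,
shows that it is `± m * h`. Hence `G(χ) = p ^ w * (a + b√-D) / 2` with `a ^ 2 + D * b ^ 2 =
4 * p ^ h`, and `G(χ) ^ m` times the conjugate of `G(χ ^ m)` is a power of `p` up to a unit of
`ℚ(√-D)`, that is, up to sign. The sign, and the residue of `a` modulo `l1`, are found in a field of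
characteristic `l1`: there the part of `χ` of `l1`-power order disappears, and what remains is a
Gauss sum whose order is a power of `l2`. Such a sum, like those of `l1`-power order, is
semi-primitive: `-1` is a power of `p` modulo the order, so its square is `p ^ f`, and reduction
modulo the prime dividing the order fixes its sign.
-/

/-! ### The Jacobi symbol as a Dirichlet character -/

/-- The Jacobi symbol `a ↦ (a / D)` as an integer-valued Dirichlet character modulo `D`. -/
def jacobiChar (D : ℕ) [NeZero D] : DirichletCharacter ℤ D where
  toFun a := jacobiSym a.cast D
  map_one' := by
    rw [← Int.cast_one, ZMod.coe_intCast, ← jacobiSym.mod_left, jacobiSym.one_left]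
  map_mul' x y := by
    rw [← jacobiSym.mul_left]
    conv_lhs => rw [← ZMod.intCast_zmod_cast x, ← ZMod.intCast_zmod_cast y, ← Int.cast_mul,
      ZMod.coe_intCast, ← jacobiSym.mod_left]
  map_nonunit' a ha := by
    refine jacobiSym.eq_zero_iff_not_coprime.2 fun hcop ↦ ?_
    obtain ⟨u, v, huv⟩ := Int.isCoprime_iff_gcd_eq_one.2 hcop
    refine ha (IsUnit.of_mul_eq_one u ?_)
    simpa [mul_comm] using congrArg (Int.cast (R := ZMod D)) huv

section JacobiChar

variable (D : ℕ) [NeZero D]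

theorem jacobiChar_intCast (n : ℤ) : jacobiChar D (n : ZMod D) = jacobiSym n D := by
  change jacobiSym ((n : ZMod D).cast) D = _
  rw [ZMod.coe_intCast, ← jacobiSym.mod_left]

theorem jacobiChar_natCast (n : ℕ) : jacobiChar D (n : ZMod D) = jacobiSym n D := by
  exact_mod_cast jacobiChar_intCast D n

theorem jacobiChar_isQuadratic : (jacobiChar D).IsQuadratic := fun _ ↦ jacobiSym.trichotomy _ _

theorem exists_modEq_one_and_jacobiSym_eq_neg_one {l m : ℕ} (hl : l.Prime) (hodd : Odd l)
    (hm : m ≠ 0) (hlm : l.Coprime m) : ∃ n : ℕ, n ≡ 1 [MOD m] ∧ jacobiSym n (l * m) = -1 := by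
  have : Fact l.Prime := ⟨hl⟩
  have hchar : ringChar (ZMod l) ≠ 2 := by
    rw [ZMod.ringChar_zmod_n]
    rintro rfl
    exact absurd hodd (by decide)
  obtain ⟨a, ha⟩ := FiniteField.exists_nonsquare hchar
  obtain ⟨n, hna, hn1⟩ := Nat.chineseRemainder hlm a.val 1
  have hcast : ((n : ℤ) : ZMod l) = a := by
    simpa using (ZMod.natCast_eq_natCast_iff _ _ _).2 hna
  have hnl : jacobiSym n l = -1 := by
    rwa [← jacobiSym.legendreSym.to_jacobiSym, legendreSym.eq_neg_one_iff, hcast]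
  have hnm : jacobiSym n m = 1 := by
    rw [jacobiSym.mod_left' (a₂ := 1) (by exact_mod_cast hn1), jacobiSym.one_left]
  exact ⟨n, hn1, by rw [jacobiSym.mul_right' _ hl.ne_zero hm, hnl, hnm]; rfl⟩

variable {D}

theorem jacobiChar_neg (hD : D % 4 = 3) (a : ZMod D) : jacobiChar D (-a) = -jacobiChar D a := by
  obtain ⟨n, rfl⟩ := ZMod.intCast_surjective a
  rw [← Int.cast_neg, jacobiChar_intCast, jacobiChar_intCast,
    jacobiSym.neg _ (Nat.odd_iff.2 (by omega)), ZMod.χ₄_nat_three_mod_four hD, neg_one_mul]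

theorem jacobiChar_ne_one (hD : D % 4 = 3) : jacobiChar D ≠ 1 := by
  intro h
  have hneg := jacobiChar_neg hD 1
  rw [h, MulChar.one_apply isUnit_one.neg, MulChar.one_apply isUnit_one] at hneg
  omega

variable (D) in
/-- The Jacobi symbol modulo `D` as a complex Dirichlet character. -/
abbrev complexJacobiChar : DirichletCharacter ℂ D :=
  (jacobiChar D).ringHomComp (Int.castRingHom ℂ)

variable (D) in
theorem complexJacobiChar_apply (a : ZMod D) : complexJacobiChar D a = jacobiChar D a := rfl

variable (D) in
theorem complexJacobiChar_inv : (complexJacobiChar D)⁻¹ = complexJacobiChar D :=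
  ((jacobiChar_isQuadratic D).comp _).inv

theorem complexJacobiChar_neg (hD : D % 4 = 3) (a : ZMod D) :
    complexJacobiChar D (-a) = -complexJacobiChar D a := by
  rw [complexJacobiChar_apply, jacobiChar_neg hD, Int.cast_neg, complexJacobiChar_apply]

theorem complexJacobiChar_ne_one (hD : D % 4 = 3) : complexJacobiChar D ≠ 1 :=
  (MulChar.ringHomComp_ne_one_iff Int.cast_injective).2 (jacobiChar_ne_one hD)

theorem complexJacobiChar_isPrimitive (hsq : Squarefree D) (hodd : Odd D) :
    (complexJacobiChar D).IsPrimitive := by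
  by_contra hne
  rw [DirichletCharacter.isPrimitive_def] at hne
  set e := (complexJacobiChar D).conductor
  have heD : e ∣ D := (complexJacobiChar D).conductor_dvd_level
  obtain ⟨q, hq⟩ := id heD
  have hq1 : q ≠ 1 := by
    rintro rfl
    exact hne (by rw [← mul_one e, ← hq])
  obtain ⟨l, hl, c, rfl⟩ := Nat.exists_prime_and_dvd hq1
  have hD : D = l * (e * c) := by rw [hq]; ring
  have hlm : l.Coprime (e * c) := ((Nat.squarefree_mul_iff).1 (hD ▸ hsq)).1
  have hm : e * c ≠ 0 := fun h ↦ NeZero.ne D (by rw [hD, h, mul_zero])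
  obtain ⟨n, hn1, hn⟩ := exists_modEq_one_and_jacobiSym_eq_neg_one hl
    (hodd.of_dvd_nat ⟨_, hD⟩) hm hlm
  rw [← hD] at hn
  have hχn : complexJacobiChar D n = -1 := by
    rw [complexJacobiChar_apply, jacobiChar_natCast, hn]
    simp
  have hunit : IsUnit (n : ZMod D) := by
    by_contra hu
    rw [MulChar.map_nonunit _ hu] at hχn
    norm_num at hχn
  have hker := (DirichletCharacter.factorsThrough_iff_ker_unitsMap heD).1
    (complexJacobiChar D).factorsThrough_conductor
  have hmem : hunit.unit ∈ (ZMod.unitsMap heD).ker := by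
    ext
    rw [ZMod.unitsMap_val, IsUnit.unit_spec, ZMod.cast_natCast heD]
    simpa using (ZMod.natCast_eq_natCast_iff _ _ _).2 (hn1.of_dvd (dvd_mul_right e c))
  have hone := congrArg Units.val (MonoidHom.mem_ker.1 (hker hmem))
  rw [MulChar.coe_toUnitHom, IsUnit.unit_spec, hχn] at hone
  norm_num at hone

theorem sum_complexJacobiChar_mul_stdAddChar (hsq : Squarefree D) (hodd : Odd D) (a : ZMod D) :
    ∑ b : ZMod D, complexJacobiChar D b * ZMod.stdAddChar (a * b) =
      complexJacobiChar D a * gaussSum (complexJacobiChar D) ZMod.stdAddChar := by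
  have h := gaussSum_mulShift_of_isPrimitive (e := ZMod.stdAddChar)
    (complexJacobiChar_isPrimitive hsq hodd) a
  rwa [complexJacobiChar_inv] at h

theorem gaussSum_complexJacobiChar_sq (hsq : Squarefree D) (hD : D % 4 = 3) :
    gaussSum (complexJacobiChar D) ZMod.stdAddChar ^ 2 = -(D : ℂ) := by
  set τ := gaussSum (complexJacobiChar D) ZMod.stdAddChar
  have hdft : ZMod.dft (complexJacobiChar D) = (-τ) • (complexJacobiChar D : ZMod D → ℂ) := by
    ext k
    rw [(complexJacobiChar_isPrimitive hsq
      (Nat.odd_iff.2 (by omega))).fourierTransform_eq_inv_mul_gaussSum, complexJacobiChar_inv,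
      complexJacobiChar_neg hD, Pi.smul_apply, smul_eq_mul]
    ring
  have hinv := congrFun (ZMod.dft_dft (complexJacobiChar D)) 1
  rw [hdft, map_smul, hdft, complexJacobiChar_neg hD] at hinv
  simpa [sq] using hinv

end JacobiChar

theorem sum_zmod_eq_sum_range {M : Type*} [AddCommMonoid M] (n : ℕ) [NeZero n] (g : ZMod n → M) :
    ∑ a : ZMod n, g a = ∑ k ∈ Finset.range n, g k := by
  obtain ⟨m, rfl⟩ := Nat.exists_eq_succ_of_ne_zero (NeZero.ne n)
  rw [← Fin.sum_univ_eq_sum_range (fun k ↦ g k)]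
  exact Finset.sum_congr rfl fun a _ ↦ congrArg g (ZMod.natCast_zmod_val a).symm

/-! ### Integers of imaginary quadratic fields -/

theorem isIntegral_conj {z : ℂ} (hz : IsIntegral ℤ z) : IsIntegral ℤ (starRingEnd ℂ z) :=
  hz.map (starRingEnd ℂ).toIntAlgHom

theorem exists_int_eq_of_isIntegral_ratCast {K : Type*} [Field K] [CharZero K] {r : ℚ}
    (hr : IsIntegral ℤ (r : K)) : ∃ n : ℤ, r = n := by
  rw [← eq_ratCast (algebraMap ℚ K), isIntegral_algebraMap_iff (algebraMap ℚ K).injective,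
    IsIntegrallyClosed.isIntegral_iff] at hr
  obtain ⟨n, hn⟩ := hr
  exact ⟨n, by rw [← hn, eq_intCast]⟩

theorem exists_int_eq_of_squarefree_mul_sq {D : ℕ} (hD : Squarefree D) {b : ℚ} {m : ℤ}
    (h : (D : ℚ) * b ^ 2 = m) : ∃ n : ℤ, b = n := by
  have hD0 : (D : ℚ) ≠ 0 := mod_cast hD.ne_zero
  have hint : IsIntegral ℤ (D * b) := by
    refine IsIntegral.of_pow two_pos ?_
    rw [show (D * b) ^ 2 = ((D * m : ℤ) : ℚ) by push_cast; rw [← h]; ring]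
    exact isIntegral_algebraMap
  obtain ⟨c, hc⟩ := exists_int_eq_of_isIntegral_ratCast (K := ℚ) (by simpa using hint)
  have hc2 : (D : ℤ) ∣ c ^ 2 := ⟨m, by
    have : (c : ℚ) ^ 2 = D * m := by rw [← hc, ← h]; ring
    exact_mod_cast this⟩
  obtain ⟨n, rfl⟩ := ((Int.squarefree_natCast.2 hD).dvd_pow_iff_dvd two_ne_zero).1 hc2
  refine ⟨n, mul_left_cancel₀ hD0 ?_⟩
  rw [hc, Int.cast_mul, Int.cast_natCast]

theorem exists_int_eq_two_mul_of_trace_norm {D : ℕ} (hD4 : D % 4 = 3) (hD : Squarefree D)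
    {u v : ℚ} {t n : ℤ} (ht : 2 * u = t) (hn : u ^ 2 + D * v ^ 2 = n) :
    ∃ a b : ℤ, 2 * u = a ∧ 2 * v = b ∧ 2 ∣ a - b := by
  have h1 : (D : ℚ) * (2 * v) ^ 2 = ((4 * n - t ^ 2 : ℤ) : ℚ) := by
    push_cast
    rw [← ht, ← hn]
    ring
  obtain ⟨b, hb⟩ := exists_int_eq_of_squarefree_mul_sq hD h1
  refine ⟨t, b, ht, hb, ?_⟩
  rw [hb] at h1
  have h2 : (D : ℤ) * b ^ 2 = 4 * n - t ^ 2 := mod_cast h1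
  have : ¬ 2 ∣ (D : ℤ) := by omega
  have hdvd : (2 : ℤ) ∣ D * b ^ 2 ↔ 2 ∣ t ^ 2 := by omega
  rw [Int.prime_two.dvd_mul, Int.prime_two.dvd_pow_iff_dvd two_ne_zero,
    Int.prime_two.dvd_pow_iff_dvd two_ne_zero] at hdvd
  omega

theorem mem_adjoin_sqrtNeg_iff {D : ℕ} {z : ℂ} :
    z ∈ ℚ⟮sqrtNeg D⟯ ↔ ∃ u v : ℚ, z = u + v * sqrtNeg D := by
  constructor
  · rw [← mem_toSubalgebra,
      adjoin_simple_toSubalgebra_of_isAlgebraic (isIntegral_sqrtNeg D).isAlgebraic]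
    intro hz
    induction hz using Algebra.adjoin_induction with
    | mem z hz => exact ⟨0, 1, by simp [Set.mem_singleton_iff.1 hz]⟩
    | algebraMap r => exact ⟨r, 0, by simp⟩
    | add a b _ _ ha hb =>
      obtain ⟨u, v, rfl⟩ := ha
      obtain ⟨u', v', rfl⟩ := hb
      exact ⟨u + u', v + v', by push_cast; ring⟩
    | mul a b _ _ ha hb =>
      obtain ⟨u, v, rfl⟩ := ha
      obtain ⟨u', v', rfl⟩ := hb
      refine ⟨u * u' - D * v * v', u * v' + v * u', ?_⟩
      push_cast
      linear_combination (v * v' : ℂ) * sqrtNeg_sq D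
  · rintro ⟨u, v, rfl⟩
    exact add_mem (SubfieldClass.ratCast_mem _ u)
      (mul_mem (SubfieldClass.ratCast_mem _ v) (mem_adjoin_simple_self ℚ _))

theorem star_sqrtNeg (D : ℕ) : starRingEnd ℂ (sqrtNeg D) = -sqrtNeg D := by
  rw [sqrtNeg, map_mul, conj_ofReal, conj_I, mul_neg]

theorem star_add_mul_sqrtNeg (D : ℕ) (u v : ℚ) :
    starRingEnd ℂ (u + v * sqrtNeg D) = u - v * sqrtNeg D := by
  rw [map_add, map_mul, map_ratCast, map_ratCast, star_sqrtNeg, mul_neg, sub_eq_add_neg]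

theorem exists_int_add_star_eq {D : ℕ} {z : ℂ} (hz : z ∈ ℚ⟮sqrtNeg D⟯) (hint : IsIntegral ℤ z) :
    ∃ t : ℤ, z + starRingEnd ℂ z = t := by
  obtain ⟨u, v, rfl⟩ := mem_adjoin_sqrtNeg_iff.1 hz
  have htrace : u + v * sqrtNeg D + starRingEnd ℂ (u + v * sqrtNeg D) = ((2 * u : ℚ) : ℂ) := by
    rw [star_add_mul_sqrtNeg]
    push_cast
    ring
  obtain ⟨t, ht⟩ := exists_int_eq_of_isIntegral_ratCast (htrace ▸ hint.add (isIntegral_conj hint))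
  exact ⟨t, by rw [htrace, ht, Rat.cast_intCast]⟩

theorem star_mem_adjoin_sqrtNeg {D : ℕ} {z : ℂ} (hz : z ∈ ℚ⟮sqrtNeg D⟯) :
    starRingEnd ℂ z ∈ ℚ⟮sqrtNeg D⟯ := by
  obtain ⟨u, v, rfl⟩ := mem_adjoin_sqrtNeg_iff.1 hz
  exact mem_adjoin_sqrtNeg_iff.2 ⟨u, -v, by rw [star_add_mul_sqrtNeg]; push_cast; ring⟩

theorem exists_eq_div_two_of_isIntegral {D : ℕ} (hD4 : D % 4 = 3) (hD : Squarefree D) {z : ℂ}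
    (hz : z ∈ ℚ⟮sqrtNeg D⟯) (hint : IsIntegral ℤ z) :
    ∃ a b : ℤ, z = (a + b * sqrtNeg D) / 2 ∧ 2 ∣ a - b := by
  obtain ⟨u, v, rfl⟩ := mem_adjoin_sqrtNeg_iff.1 hz
  have hconj := isIntegral_conj hint
  have htrace := hint.add hconj
  have hnorm := hint.mul hconj
  rw [star_add_mul_sqrtNeg] at htrace hnorm
  obtain ⟨t, ht⟩ := exists_int_eq_of_isIntegral_ratCast (K := ℂ) (r := 2 * u) (by
    rwa [show ((2 * u : ℚ) : ℂ) = u + v * sqrtNeg D + (u - v * sqrtNeg D) by push_cast; ring])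
  obtain ⟨n, hn⟩ := exists_int_eq_of_isIntegral_ratCast (K := ℂ) (r := u ^ 2 + D * v ^ 2) (by
    rwa [show ((u ^ 2 + D * v ^ 2 : ℚ) : ℂ) = (u + v * sqrtNeg D) * (u - v * sqrtNeg D) by
      push_cast
      linear_combination (v ^ 2 : ℂ) * sqrtNeg_sq D])
  obtain ⟨a, b, ha, hb, hab⟩ := exists_int_eq_two_mul_of_trace_norm hD4 hD ht hn
  refine ⟨a, b, ?_, hab⟩
  rw [← Rat.cast_intCast a, ← Rat.cast_intCast b, ← ha, ← hb]
  push_cast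
  ring

/-! ### The quadratic order of discriminant `-D` -/

theorem quadraticAlgebra_trace_eq {R : Type*} [CommRing R] (a b : R) (z : QuadraticAlgebra R a b) :
    Algebra.trace R (QuadraticAlgebra R a b) z = 2 * z.re + b * z.im := by
  rw [Algebra.trace_eq_matrix_trace (QuadraticAlgebra.basis a b), Matrix.trace, Fin.sum_univ_two]
  simp only [Matrix.diag_apply, Algebra.leftMulMatrix_apply, Algebra.coe_lmul_eq_mul,
    LinearMap.toMatrix_apply, LinearMap.mul_apply_apply, QuadraticAlgebra.basis,
    Module.Basis.coe_ofEquivFun, Module.Basis.ofEquivFun_repr_apply,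
    QuadraticAlgebra.linearEquivTuple_symm_apply, QuadraticAlgebra.linearEquivTuple_apply,
    QuadraticAlgebra.re_mul, QuadraticAlgebra.im_mul, Pi.single_eq_same, Matrix.cons_val_zero,
    Matrix.cons_val_one, Pi.single_eq_of_ne zero_ne_one, Pi.single_eq_of_ne one_ne_zero]
  ring

theorem quadraticAlgebra_discr_basis {R : Type*} [CommRing R] (a b : R) :
    Algebra.discr R (QuadraticAlgebra.basis a b) = b ^ 2 + 4 * a := by
  rw [Algebra.discr_def, Matrix.det_fin_two]
  simp only [Algebra.traceMatrix_apply, Algebra.traceForm_apply, quadraticAlgebra_trace_eq,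
    QuadraticAlgebra.basis, Module.Basis.coe_ofEquivFun,
    QuadraticAlgebra.linearEquivTuple_symm_apply, QuadraticAlgebra.mk_mul_mk, Pi.single_eq_same,
    Pi.single_eq_of_ne zero_ne_one, Pi.single_eq_of_ne one_ne_zero]
  ring

/-- The quadratic order `ℤ[(1 + √-D)/2]` of discriminant `-D`, for `D ≡ 3 (mod 4)`; its generator
satisfies `ω² = ω - (D + 1)/4`. -/
abbrev QuadraticOrder (D : ℕ) : Type := QuadraticAlgebra ℤ (-((D + 1) / 4)) 1

theorem quadraticOrder_unit_eq_one_or_neg_one {D : ℕ} (hD4 : D % 4 = 3) (hD : 3 < D)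
    (u : (QuadraticOrder D)ˣ) : u = 1 ∨ u = -1 := by
  have hnorm := Int.isUnit_iff.1 (QuadraticAlgebra.isUnit_iff_norm_isUnit.1 u.isUnit)
  rw [QuadraticAlgebra.norm_def] at hnorm
  set x := (u : QuadraticOrder D).re
  set y := (u : QuadraticOrder D).im
  have hc : 4 * (((D : ℤ) + 1) / 4) = D + 1 := by omega
  have hform : (2 * x + y) ^ 2 + D * y ^ 2 ≤ 4 := by
    rcases hnorm with h | h <;> linear_combination 4 * h - y ^ 2 * hc
  have hy0 : y = 0 := by
    by_contra! hne
    have hD4 : (4 : ℤ) < D := by omega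
    have hy1 : 0 < y ^ 2 := by positivity
    nlinarith [sq_nonneg (2 * x + y)]
  have hx1 : x ^ 2 = 1 := by
    rcases hnorm with h | h
    · linear_combination h - (x + (D + 1) / 4 * y) * hy0
    · nlinarith [sq_nonneg x]
  rcases sq_eq_one_iff.1 hx1 with h | h
  · exact .inl (Units.ext (QuadraticAlgebra.ext h hy0))
  · exact .inr (Units.ext (QuadraticAlgebra.ext h (hy0.trans neg_zero.symm)))

section NumberField

open NumberField

variable {K : Type*} [Field K] [NumberField K]

theorem nrComplexPlaces_eq_one_of_discr_neg (hrank : Module.finrank ℚ K = 2)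
    (hdiscr : discr K < 0) : InfinitePlace.nrComplexPlaces K = 1 := by
  have hsign := sign_discr K
  have hcard := InfinitePlace.card_add_two_mul_card_eq_rank K
  rw [Int.sign_eq_neg_one_of_neg hdiscr] at hsign
  rw [hrank] at hcard
  obtain ⟨k, hk⟩ := (neg_one_pow_eq_neg_one_iff_odd (by decide)).1 hsign.symm
  omega

theorem nrRealPlaces_eq_zero_of_discr_neg (hrank : Module.finrank ℚ K = 2)
    (hdiscr : discr K < 0) : InfinitePlace.nrRealPlaces K = 0 := by
  have hcard := InfinitePlace.card_add_two_mul_card_eq_rank K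
  rw [hrank, nrComplexPlaces_eq_one_of_discr_neg hrank hdiscr] at hcard
  omega

theorem regulator_eq_one_of_unitsRank_eq_zero (hrank : Units.rank K = 0) :
    Units.regulator K = 1 := by
  classical
  have hempty : IsEmpty {w : InfinitePlace K // w ≠ Units.dirichletUnitTheorem.w₀} :=
    (Units.equivFinRank K).symm.isEmpty_congr.2 (by rw [hrank]; infer_instance)
  rw [Units.regulator_eq_det',
    Matrix.det_eq_one_of_card_eq_zero (Fintype.card_eq_zero_iff.2 hempty), abs_one]

theorem torsionOrder_eq_two (hunits : ∀ u : (𝓞 K)ˣ, u = 1 ∨ u = -1) :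
    Units.torsionOrder K = 2 := by
  have hsub : (Units.torsion K : Set (𝓞 K)ˣ) ⊆ {1, -1} := fun u _ ↦ hunits u
  have hle : Units.torsionOrder K ≤ 2 := by
    refine (Set.ncard_le_ncard hsub (Set.toFinite _)).trans ((Set.ncard_insert_le _ _).trans ?_)
    rw [Set.ncard_singleton]
  obtain ⟨k, hk⟩ := Units.even_torsionOrder K
  have := Units.torsionOrder_pos K
  omega

variable {D : ℕ}

theorem finrank_eq_two_of_algEquiv_quadraticOrder (e : QuadraticOrder D ≃ₐ[ℤ] 𝓞 K) :
    Module.finrank ℚ K = 2 := by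
  rw [← RingOfIntegers.rank, ← e.toLinearEquiv.finrank_eq, QuadraticAlgebra.finrank_eq_two]

theorem discr_eq_neg_of_algEquiv_quadraticOrder (hD4 : D % 4 = 3)
    (e : QuadraticOrder D ≃ₐ[ℤ] 𝓞 K) : discr K = -D := by
  rw [← NumberField.discr_eq_discr K ((QuadraticAlgebra.basis _ _).map e.toLinearEquiv),
    Module.Basis.coe_map, AlgEquiv.coe_toLinearEquiv, ← Algebra.discr_eq_discr_of_algEquiv,
    quadraticAlgebra_discr_basis]
  omega

theorem dedekindZeta_residue_eq_of_algEquiv_quadraticOrder (hD4 : D % 4 = 3) (hD : 3 < D)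
    (e : QuadraticOrder D ≃ₐ[ℤ] 𝓞 K) :
    dedekindZeta_residue K = Real.pi * classNumber K / Real.sqrt D := by
  have hrank := finrank_eq_two_of_algEquiv_quadraticOrder e
  have hdiscr := discr_eq_neg_of_algEquiv_quadraticOrder hD4 e
  have hneg : discr K < 0 := by omega
  have hreal := nrRealPlaces_eq_zero_of_discr_neg hrank hneg
  have hcomplex := nrComplexPlaces_eq_one_of_discr_neg hrank hneg
  have hreg : Units.regulator K = 1 := regulator_eq_one_of_unitsRank_eq_zero (by
    rw [Units.rank, InfinitePlace.card_eq_nrRealPlaces_add_nrComplexPlaces, hreal, hcomplex])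
  have htors : Units.torsionOrder K = 2 := torsionOrder_eq_two fun u ↦ by
    obtain ⟨v, rfl⟩ := (Units.mapEquiv e.toMulEquiv).surjective u
    rcases quadraticOrder_unit_eq_one_or_neg_one hD4 hD v with rfl | rfl
    · exact .inl (map_one _)
    · exact .inr (Units.ext (by simp))
  have hsqrt : Real.sqrt D ≠ 0 := by positivity
  rw [dedekindZeta_residue_def, hreal, hcomplex, hreg, htors, hdiscr, Int.cast_neg, abs_neg,
    Int.cast_natCast, Nat.abs_cast]
  push_cast
  field_simp

end NumberField

theorem isIntegral_one_add_div_two {A : Type*} [Field A] [CharZero A] {D : ℕ} (hD4 : D % 4 = 3)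
    {s : A} (hs : s ^ 2 = -D) : IsIntegral ℤ ((1 + s) / 2) := by
  obtain ⟨k, rfl⟩ : ∃ k, D = 4 * k + 3 := ⟨D / 4, by omega⟩
  refine ⟨X ^ 2 - (X - C ((k + 1 : ℕ) : ℤ)), monic_X_pow_sub (by rw [degree_X_sub_C]; norm_num), ?_⟩
  simp only [eval₂_sub, eval₂_pow, eval₂_X, eval₂_C]
  push_cast at hs ⊢
  linear_combination hs / 4

theorem exists_algHom_quadraticOrder {D : ℕ} (hD4 : D % 4 = 3) :
    ∃ φ : QuadraticOrder D →ₐ[ℤ] NumberField.RingOfIntegers ℚ⟮sqrtNeg D⟯, ∀ z : QuadraticOrder D,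
      algebraMap ℚ⟮sqrtNeg D⟯ ℂ (φ z) = z.re + z.im * ((1 + sqrtNeg D) / 2) := by
  let K := ℚ⟮sqrtNeg D⟯
  let s : K := AdjoinSimple.gen ℚ (sqrtNeg D)
  have hs : s ^ 2 = -D := Subtype.ext (by simpa [s] using sqrtNeg_sq D)
  let w : NumberField.RingOfIntegers K := ⟨(1 + s) / 2, isIntegral_one_add_div_two hD4 hs⟩
  have hwK : algebraMap _ K w = (1 + s) / 2 := rfl
  have hw : w * w = (-((D + 1) / 4) : ℤ) • 1 + (1 : ℤ) • w := by
    refine NumberField.RingOfIntegers.ext ?_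
    obtain ⟨c, hc, hc'⟩ : ∃ c : ℤ, (D : ℤ) = 4 * c - 1 ∧ ((D : ℤ) + 1) / 4 = c :=
      ⟨(D + 1) / 4, by omega⟩
    have hcK : (D : K) = 4 * c - 1 := mod_cast congrArg (Int.cast (R := K)) hc
    simp only [hc', one_zsmul, zsmul_one, map_mul, map_add, map_intCast, hwK]
    push_cast
    linear_combination hs / 4 - hcK / 4
  have hwC : algebraMap K ℂ ((1 + s) / 2) = (1 + sqrtNeg D) / 2 := by
    rw [map_div₀, map_add, map_one, map_ofNat]
    rfl
  refine ⟨QuadraticAlgebra.lift ⟨w, hw⟩, fun z ↦ ?_⟩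
  rw [← hwC, ← hwK]
  simp only [QuadraticAlgebra.lift_apply_apply, zsmul_eq_mul, mul_one, map_add, map_mul,
    map_intCast]
  rfl

theorem nonempty_algEquiv_quadraticOrder {D : ℕ} (hD4 : D % 4 = 3) (hD : Squarefree D) :
    Nonempty (QuadraticOrder D ≃ₐ[ℤ] NumberField.RingOfIntegers ℚ⟮sqrtNeg D⟯) := by
  obtain ⟨φ, hφ⟩ := exists_algHom_quadraticOrder hD4
  refine ⟨AlgEquiv.ofBijective φ ⟨?_, fun x ↦ ?_⟩⟩
  · refine (injective_iff_map_eq_zero φ).2 fun z hz ↦ ?_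
    have hz0 := hφ z
    simp only [hz, map_zero] at hz0
    have him : z.im = 0 := by
      simpa [sqrtNeg, hD.ne_zero] using congrArg Complex.im hz0
    rw [him, Int.cast_zero, zero_mul, add_zero] at hz0
    exact QuadraticAlgebra.ext (mod_cast hz0.symm) him
  · obtain ⟨a, b, hab, k, hk⟩ := exists_eq_div_two_of_isIntegral hD4 hD (x : ℚ⟮sqrtNeg D⟯).2
      (x.2.map (algebraMap ℚ⟮sqrtNeg D⟯ ℂ).toIntAlgHom)
    refine ⟨⟨k, b⟩, NumberField.RingOfIntegers.ext ((algebraMap ℚ⟮sqrtNeg D⟯ ℂ).injective ?_)⟩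
    have hak : (a : ℂ) = b + 2 * k := mod_cast (by omega : a = b + 2 * k)
    exact (hφ _).trans (by rw [hak]; ring) |>.trans hab.symm

/-! ### Counting ideals of given norm -/

section IdealCount

open Ideal

variable {O : Type*} [CommRing O]

theorem span_natCast_sup_span_natCast_eq_top {m n : ℕ} (hmn : m.Coprime n) :
    span {(m : O)} ⊔ span {(n : O)} = ⊤ := by
  rw [← isCoprime_iff_sup_eq, isCoprime_span_singleton_iff]
  exact hmn.cast

variable [IsDedekindDomain O] [Module.Free ℤ O]

theorem natCast_mem_of_absNorm_eq {I : Ideal O} {n : ℕ} (hI : absNorm I = n) : (n : O) ∈ I :=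
  hI ▸ absNorm_mem I

theorem dvd_span_natCast_of_absNorm_eq {I : Ideal O} {n : ℕ} (hI : absNorm I = n) :
    I ∣ span {(n : O)} :=
  dvd_span_singleton.2 (natCast_mem_of_absNorm_eq hI)

theorem eq_of_dvd_of_absNorm_eq {I J : Ideal O} (hd : I ∣ J) (hn : absNorm I = absNorm J)
    (h0 : absNorm I ≠ 0) : I = J := by
  obtain ⟨L, rfl⟩ := hd
  rw [map_mul, left_eq_mul₀ h0, absNorm_eq_one_iff] at hn
  rw [hn, Ideal.mul_top]

theorem mul_sup_span_natCast_eq_left {m n : ℕ} (hmn : m.Coprime n) {I J : Ideal O}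
    (hI : absNorm I = m) (hJ : absNorm J = n) : I * J ⊔ span {(m : O)} = I := by
  have hIm : span {(m : O)} ≤ I := (span_singleton_le_iff_mem _).2 (natCast_mem_of_absNorm_eq hI)
  have hJn : span {(n : O)} ≤ J := (span_singleton_le_iff_mem _).2 (natCast_mem_of_absNorm_eq hJ)
  have htop : J ⊔ span {(m : O)} = ⊤ := top_le_iff.1 <|
    (span_natCast_sup_span_natCast_eq_top hmn.symm).ge.trans (sup_le_sup_right hJn _)
  refine le_antisymm (sup_le mul_le_left hIm) ?_
  calc I = I * J ⊔ I * span {(m : O)} := by rw [← Ideal.mul_sup, htop, Ideal.mul_top]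
    _ ≤ I * J ⊔ span {(m : O)} := sup_le_sup_left mul_le_right _

theorem sup_mul_sup_eq_of_absNorm_eq_mul {m n : ℕ} (hmn : m.Coprime n) {I : Ideal O}
    (hI : absNorm I = m * n) : (I ⊔ span {(m : O)}) * (I ⊔ span {(n : O)}) = I := by
  have hmnI : (m * n : O) ∈ I := by exact_mod_cast natCast_mem_of_absNorm_eq hI
  have htop : (I ⊔ span {(m : O)}) ⊔ (I ⊔ span {(n : O)}) = ⊤ := top_le_iff.1 <|
    (span_natCast_sup_span_natCast_eq_top hmn).ge.trans (sup_le_sup le_sup_right le_sup_right)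
  apply le_antisymm
  · rw [Ideal.sup_mul, Ideal.mul_sup, Ideal.mul_sup, span_singleton_mul_span_singleton]
    exact sup_le (sup_le mul_le_left mul_le_left)
      (sup_le mul_le_right ((span_singleton_le_iff_mem _).2 hmnI))
  · rw [mul_eq_inf_of_coprime htop]
    exact le_inf le_sup_left le_sup_left

variable (O) in
/-- The number of ideals of norm `n`, i.e. the `n`-th coefficient of the Dedekind zeta function. -/
noncomputable def idealCount (n : ℕ) : ℕ := {I : Ideal O | absNorm I = n}.ncard

theorem idealCount_one : idealCount O 1 = 1 := by
  rw [idealCount, Set.ncard_eq_one]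
  exact ⟨⊤, Set.ext fun I ↦ absNorm_eq_one_iff⟩

variable [Module.Finite ℤ O]

theorem absNorm_sup_span_natCast_dvd_pow (I : Ideal O) (m : ℕ) :
    absNorm (I ⊔ span {(m : O)}) ∣ m ^ Module.finrank ℤ O := by
  rw [← absNorm_span_natCast]
  exact absNorm_dvd_absNorm_of_le le_sup_right

theorem absNorm_sup_span_natCast {m n : ℕ} (hmn : m.Coprime n) {I : Ideal O}
    (hI : absNorm I = m * n) : absNorm (I ⊔ span {(m : O)}) = m := by
  have hmul : absNorm (I ⊔ span {(m : O)}) * absNorm (I ⊔ span {(n : O)}) = m * n := by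
    rw [← map_mul, sup_mul_sup_eq_of_absNorm_eq_mul hmn hI, hI]
  have hcop₁ : (absNorm (I ⊔ span {(m : O)})).Coprime n :=
    (hmn.pow_left _).coprime_dvd_left (absNorm_sup_span_natCast_dvd_pow I m)
  have hcop₂ : m.Coprime (absNorm (I ⊔ span {(n : O)})) :=
    (hmn.pow_right _).coprime_dvd_right (absNorm_sup_span_natCast_dvd_pow I n)
  exact Nat.dvd_antisymm (hcop₁.dvd_of_dvd_mul_right (hmul ▸ dvd_mul_right _ _))
    (hcop₂.dvd_of_dvd_mul_right (hmul ▸ dvd_mul_right _ _))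

theorem idealCount_mul_of_coprime {m n : ℕ} (hmn : m.Coprime n) :
    idealCount O (m * n) = idealCount O m * idealCount O n := by
  have himage : (fun x : Ideal O × Ideal O ↦ x.1 * x.2) ''
      ({I | absNorm I = m} ×ˢ {J | absNorm J = n}) = {I | absNorm I = m * n} := by
    ext I
    refine ⟨?_, fun hI ↦ ⟨(I ⊔ span {(m : O)}, I ⊔ span {(n : O)}), ⟨?_, ?_⟩, ?_⟩⟩
    · rintro ⟨⟨I, J⟩, ⟨hI, hJ⟩, rfl⟩
      exact (map_mul absNorm I J).trans (congrArg₂ _ hI hJ)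
    · exact absNorm_sup_span_natCast hmn hI
    · exact absNorm_sup_span_natCast hmn.symm (hI.trans (mul_comm _ _))
    · exact sup_mul_sup_eq_of_absNorm_eq_mul hmn hI
  rw [idealCount, ← himage, Set.InjOn.ncard_image, Set.ncard_prod, idealCount, idealCount]
  rintro ⟨I, J⟩ ⟨hI, hJ⟩ ⟨I', J'⟩ ⟨hI', hJ'⟩ (heq : I * J = I' * J')
  refine Prod.ext ?_ ?_
  · rw [← mul_sup_span_natCast_eq_left hmn hI hJ, heq, mul_sup_span_natCast_eq_left hmn hI' hJ']
  · rw [← mul_sup_span_natCast_eq_left hmn.symm hJ hI, mul_comm, heq, mul_comm,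
      mul_sup_span_natCast_eq_left hmn.symm hJ' hI']

end IdealCount

section PrimePower

open Ideal

variable {O : Type*} [CommRing O] [IsDedekindDomain O]

theorem exists_eq_pow_of_dvd_pow {P I : Ideal O} (hP : Prime P) {k : ℕ} (h : I ∣ P ^ k) :
    ∃ i, I = P ^ i := by
  obtain ⟨i, -, hi⟩ := (dvd_prime_pow hP k).1 h
  exact ⟨i, associated_iff_eq.1 hi⟩

theorem pow_mul_pow_injOn {P Q : Ideal O} (hP : Prime P) (hQ : Prime Q) (hne : P ≠ Q) (k : ℕ) :
    Set.InjOn (fun i ↦ P ^ i * Q ^ (k - i)) (Finset.range (k + 1)) := by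
  have hndvd : ¬ P ∣ Q := fun h ↦ hne (associated_iff_eq.1 ((hP.dvd_prime_iff_associated hQ).1 h))
  have hcount (i : ℕ) : emultiplicity P (P ^ i * Q ^ (k - i)) = i := by
    rw [emultiplicity_mul hP, emultiplicity_pow_self_of_prime hP,
      emultiplicity_eq_zero.2 fun h ↦ hndvd (hP.dvd_of_dvd_pow h), add_zero]
  intro i _ j _ heq
  exact_mod_cast (hcount i).symm.trans ((congrArg _ heq).trans (hcount j))

variable [Module.Free ℤ O] {p : ℕ}

theorem prime_of_absNorm_eq (hp : p.Prime) {P : Ideal O} (hP : absNorm P = p) : Prime P := by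
  refine prime_of_isPrime ?_ (isPrime_of_irreducible_absNorm (hP ▸ hp))
  rintro rfl
  exact hp.ne_zero (hP ▸ absNorm_bot)

theorem dvd_span_natCast_pow_of_absNorm_eq_pow {I : Ideal O} {k : ℕ} (hI : absNorm I = p ^ k) :
    I ∣ span {(p : O)} ^ k := by
  rw [span_singleton_pow]
  exact_mod_cast dvd_span_natCast_of_absNorm_eq hI

theorem setOf_absNorm_eq_prime_pow (hp : p.Prime) {P Q : Ideal O} (hP : absNorm P = p)
    (hQ : absNorm Q = p) (hPQ : span {(p : O)} = P * Q) (k : ℕ) :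
    {I : Ideal O | absNorm I = p ^ k} =
      (fun i ↦ P ^ i * Q ^ (k - i)) '' (Finset.range (k + 1)) := by
  ext I
  constructor
  · intro hI
    have hd := dvd_span_natCast_pow_of_absNorm_eq_pow hI
    rw [hPQ, mul_pow] at hd
    obtain ⟨A, B, hA, hB, rfl⟩ := exists_dvd_and_dvd_of_dvd_mul hd
    obtain ⟨i, rfl⟩ := exists_eq_pow_of_dvd_pow (prime_of_absNorm_eq hp hP) hA
    obtain ⟨j, rfl⟩ := exists_eq_pow_of_dvd_pow (prime_of_absNorm_eq hp hQ) hB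
    have hij : i + j = k := by
      refine Nat.pow_right_injective hp.two_le ?_
      simpa only [Set.mem_ofPred_eq, map_mul, map_pow, hP, hQ, ← pow_add] using hI
    exact ⟨i, Finset.mem_coe.2 (Finset.mem_range.2 (by lia)),
      by simp only [← hij, add_tsub_cancel_left]⟩
  · rintro ⟨i, hi, rfl⟩
    have hik : i ≤ k := Finset.mem_range_succ_iff.1 hi
    simp only [Set.mem_ofPred_eq, map_mul, map_pow, hP, hQ, ← pow_add, Nat.add_sub_cancel' hik]

variable [Module.Finite ℤ O]

theorem absNorm_span_natCast_of_finrank_eq_two (h2 : Module.finrank ℤ O = 2) :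
    absNorm (span {(p : O)}) = p ^ 2 := by
  rw [absNorm_span_natCast, h2]

theorem exists_absNorm_eq_and_span_natCast_eq_mul (h2 : Module.finrank ℤ O = 2) (hp : p.Prime)
    {P : Ideal O} (hP : absNorm P = p) :
    ∃ Q : Ideal O, absNorm Q = p ∧ span {(p : O)} = P * Q := by
  obtain ⟨Q, hQ⟩ := dvd_span_natCast_of_absNorm_eq hP
  have hnorm := congrArg absNorm hQ
  rw [absNorm_span_natCast_of_finrank_eq_two h2, map_mul, hP, sq] at hnorm
  exact ⟨Q, (Nat.eq_of_mul_eq_mul_left hp.pos hnorm).symm, hQ⟩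

theorem span_natCast_eq_mul_of_ne (h2 : Module.finrank ℤ O = 2) (hp : p.Prime) {P Q : Ideal O}
    (hP : absNorm P = p) (hQ : absNorm Q = p) (hne : P ≠ Q) : span {(p : O)} = P * Q := by
  obtain ⟨J, hJ, hPJ⟩ := exists_absNorm_eq_and_span_natCast_eq_mul h2 hp hP
  have h0 : absNorm Q ≠ 0 := hQ ▸ hp.ne_zero
  rcases (prime_of_absNorm_eq hp hQ).dvd_or_dvd (hPJ ▸ dvd_span_natCast_of_absNorm_eq hQ) with h | h
  · exact absurd (eq_of_dvd_of_absNorm_eq h (hQ.trans hP.symm) h0).symm hne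
  · rw [hPJ, eq_of_dvd_of_absNorm_eq h (hQ.trans hJ.symm) h0]

theorem idealCount_prime_pow_of_idealCount_eq_one (h2 : Module.finrank ℤ O = 2) (hp : p.Prime)
    (h1 : idealCount O p = 1) (k : ℕ) : idealCount O (p ^ k) = 1 := by
  obtain ⟨P, hset⟩ := Set.ncard_eq_one.1 h1
  have hP : absNorm P = p := hset.ge rfl
  obtain ⟨Q, hQ, hPQ⟩ := exists_absNorm_eq_and_span_natCast_eq_mul h2 hp hP
  obtain rfl : Q = P := hset.le hQ
  rw [idealCount, setOf_absNorm_eq_prime_pow hp hP hP hPQ, Set.ncard_eq_one]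
  refine ⟨Q ^ k, Set.eq_singleton_iff_unique_mem.2 ⟨⟨k, ?_, ?_⟩, ?_⟩⟩
  · exact Finset.mem_coe.2 (Finset.self_mem_range_succ k)
  · simp only [tsub_self, pow_zero, mul_one]
  · rintro _ ⟨i, hi, rfl⟩
    exact pow_mul_pow_sub Q (Finset.mem_range_succ_iff.1 hi)

theorem idealCount_prime_pow_of_idealCount_eq_two (h2 : Module.finrank ℤ O = 2) (hp : p.Prime)
    (htwo : idealCount O p = 2) (k : ℕ) : idealCount O (p ^ k) = k + 1 := by
  obtain ⟨P, Q, hne, hset⟩ := Set.ncard_eq_two.1 htwo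
  have hP : absNorm P = p := hset.ge (Or.inl rfl)
  have hQ : absNorm Q = p := hset.ge (Or.inr rfl)
  rw [idealCount, setOf_absNorm_eq_prime_pow hp hP hQ (span_natCast_eq_mul_of_ne h2 hp hP hQ hne),
    (pow_mul_pow_injOn (prime_of_absNorm_eq hp hP) (prime_of_absNorm_eq hp hQ) hne k).ncard_image,
    Set.ncard_coe_finset, Finset.card_range]

theorem prime_span_natCast_of_forall_absNorm_ne (h2 : Module.finrank ℤ O = 2) (hp : p.Prime)
    (hno : ∀ I : Ideal O, absNorm I ≠ p) : Prime (span {(p : O)}) := by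
  have hnorm := absNorm_span_natCast_of_finrank_eq_two (p := p) h2
  have hp2 : p ^ 2 ≠ 0 := pow_ne_zero 2 hp.ne_zero
  have hne : span {(p : O)} ≠ ⊤ := fun h ↦
    (Nat.one_lt_pow two_ne_zero hp.one_lt).ne' (hnorm.symm.trans (h ▸ absNorm_top))
  obtain ⟨M, hM, hle⟩ := exists_le_maximal _ hne
  obtain ⟨i, hi, hMi⟩ := (Nat.dvd_prime_pow hp).1 (hnorm ▸ absNorm_dvd_absNorm_of_le hle)
  obtain rfl : i = 2 := by
    interval_cases i
    · exact absurd (absNorm_eq_one_iff.1 hMi) hM.ne_top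
    · exact absurd (hMi.trans (pow_one p)) (hno M)
    · rfl
  rw [← eq_of_dvd_of_absNorm_eq (dvd_iff_le.2 hle) (hMi.trans hnorm.symm) (hMi ▸ hp2)]
  refine prime_of_isPrime ?_ hM.isPrime
  rintro rfl
  exact hp2 (hMi ▸ absNorm_bot)

theorem idealCount_prime_pow_of_idealCount_eq_zero [CharZero O] (h2 : Module.finrank ℤ O = 2)
    (hp : p.Prime) (h0 : idealCount O p = 0) (k : ℕ) :
    idealCount O (p ^ k) = if Even k then 1 else 0 := by
  have hempty := (Set.ncard_eq_zero (finite_setOfPred_absNorm_eq (S := O) p)).1 h0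
  have hprime := prime_span_natCast_of_forall_absNorm_ne h2 hp fun I hI ↦ hempty.le hI
  have hnorm (i : ℕ) : absNorm (span {(p : O)} ^ i) = p ^ (2 * i) := by
    rw [map_pow, absNorm_span_natCast_of_finrank_eq_two h2, pow_mul]
  have hpow {I : Ideal O} (hI : absNorm I = p ^ k) : ∃ i, I = span {(p : O)} ^ i ∧ 2 * i = k := by
    obtain ⟨i, rfl⟩ :=
      exists_eq_pow_of_dvd_pow hprime (dvd_span_natCast_pow_of_absNorm_eq_pow hI)
    exact ⟨i, rfl, Nat.pow_right_injective hp.two_le ((hnorm i).symm.trans hI)⟩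
  split_ifs with hk
  · obtain ⟨j, rfl⟩ := even_iff_exists_two_mul.1 hk
    refine Set.ncard_eq_one.2 ⟨span {(p : O)} ^ j, Set.eq_singleton_iff_unique_mem.2
      ⟨hnorm j, fun I hI ↦ ?_⟩⟩
    obtain ⟨i, rfl, hij⟩ := hpow hI
    rw [Nat.eq_of_mul_eq_mul_left two_pos hij]
  · refine (Set.ncard_eq_zero (finite_setOfPred_absNorm_eq (S := O) _)).2
      (Set.eq_empty_of_forall_notMem fun I hI ↦ ?_)
    obtain ⟨i, -, rfl⟩ := hpow hI
    exact hk (even_two_mul i)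

end PrimePower

section CoefficientFormula

open Ideal

theorem absNorm_ker_zmod {O : Type*} [CommRing O] [IsDedekindDomain O] [Module.Free ℤ O] {p : ℕ}
    (φ : O →+* ZMod p) : absNorm (RingHom.ker φ) = p := by
  rw [absNorm_apply, Submodule.cardQuot_apply, Nat.card_congr
    (RingHom.quotientKerEquivOfSurjective (ZMod.ringHom_surjective φ)).toEquiv, Nat.card_zmod]

theorem exists_ker_zmod_eq_of_absNorm_eq {O : Type*} [CommRing O] [IsDedekindDomain O]
    [Module.Free ℤ O] {p : ℕ} (hp : p.Prime) {I : Ideal O} (hI : absNorm I = p) :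
    ∃ φ : O →+* ZMod p, RingHom.ker φ = I := by
  have hcard : Nat.card (O ⧸ I) = p := by rw [← hI, absNorm_apply, Submodule.cardQuot_apply]
  have : Finite (O ⧸ I) := Nat.finite_of_card_ne_zero (hcard ▸ hp.ne_zero)
  have : Fintype (O ⧸ I) := Fintype.ofFinite _
  let e := ZMod.ringEquivOfPrime (O ⧸ I) hp (Nat.card_eq_fintype_card.symm.trans hcard)
  refine ⟨(e.symm : (O ⧸ I) →+* ZMod p).comp (Ideal.Quotient.mk I), ?_⟩
  exact (RingHom.ker_equiv_comp _ e.symm).trans mk_ker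

theorem idealCount_prime_eq_card_ringHom (O : Type*) [CommRing O] [IsDedekindDomain O]
    [Module.Free ℤ O] {p : ℕ} (hp : p.Prime) : idealCount O p = Nat.card (O →+* ZMod p) := by
  rw [idealCount, ← Nat.card_coe_set_eq]
  refine (Nat.card_eq_of_bijective
    (fun φ : O →+* ZMod p ↦ (⟨RingHom.ker φ, absNorm_ker_zmod φ⟩ : {I : Ideal O | absNorm I = p}))
    ⟨fun φ ψ h ↦ ZMod.ringHom_eq_of_ker_eq φ ψ (congrArg Subtype.val h), fun ⟨I, hI⟩ ↦ ?_⟩).symm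
  obtain ⟨φ, hφ⟩ := exists_ker_zmod_eq_of_absNorm_eq hp hI
  exact ⟨φ, Subtype.ext hφ⟩

theorem card_quadraticOrder_algHom (D : ℕ) (R : Type*) [CommRing R] :
    Nat.card (QuadraticOrder D →ₐ[ℤ] R) = {u : R | u ^ 2 = u - (((D + 1) / 4 : ℤ) : R)}.ncard := by
  rw [← Nat.card_coe_set_eq, Nat.card_congr (QuadraticAlgebra.lift (A := R)).symm]
  refine Nat.card_congr (Equiv.subtypeEquivRight fun u ↦ ?_)
  rw [Set.mem_ofPred_eq, sq, neg_smul, zsmul_one, one_smul, neg_add_eq_sub]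

theorem ncard_setOf_sq_eq_sub_zmod_two {D : ℕ} (hD : D % 4 = 3) :
    ({u : ZMod 2 | u ^ 2 = u - (((D + 1) / 4 : ℤ) : ZMod 2)}.ncard : ℤ) = 1 + jacobiSym 2 D := by
  rw [jacobiSym.at_two (Nat.odd_iff.2 (by lia)), ZMod.χ₈_nat_eq_if_mod_eight]
  have hcast : (((D + 1) / 4 : ℤ) : ZMod 2) = (((D + 1) / 4 % 2 : ℤ) : ZMod 2) :=
    (ZMod.intCast_mod _ 2).symm
  rcases (by lia : D % 8 = 3 ∨ D % 8 = 7) with h8 | h8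
  · have hempty : {u : ZMod 2 | u ^ 2 = u - 1} = ∅ :=
      Set.eq_empty_iff_forall_notMem.2 (by decide)
    rw [hcast, (by lia : ((D : ℤ) + 1) / 4 % 2 = 1), Int.cast_one, hempty, Set.ncard_empty]
    simp [h8, (by lia : D % 2 = 1)]
  · have huniv : {u : ZMod 2 | u ^ 2 = u - 0} = Set.univ := Set.eq_univ_iff_forall.2 (by decide)
    rw [hcast, (by lia : ((D : ℤ) + 1) / 4 % 2 = 0), Int.cast_zero, huniv, Set.ncard_univ]
    simp [h8, (by lia : D % 2 = 1)]

theorem jacobiSym_eq_legendreSym_neg {D p : ℕ} [Fact p.Prime] (hD : D % 4 = 3) (hp : p ≠ 2) :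
    jacobiSym p D = legendreSym p (-D) := by
  have hodd : Odd p := (Fact.out : p.Prime).odd_of_ne_two hp
  rw [jacobiSym.legendreSym.to_jacobiSym, neg_eq_neg_one_mul, jacobiSym.mul_left,
    jacobiSym.at_neg_one hodd]
  rcases Nat.odd_mod_four_iff.1 (Nat.odd_iff.1 hodd) with hp4 | hp4
  · rw [ZMod.χ₄_nat_one_mod_four hp4, one_mul]
    exact jacobiSym.quadratic_reciprocity_one_mod_four hp4 (Nat.odd_iff.2 (by lia))
  · rw [ZMod.χ₄_nat_three_mod_four hp4, neg_one_mul,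
      jacobiSym.quadratic_reciprocity_three_mod_four hp4 hD]

theorem ncard_setOf_sq_eq_sub_zmod {D p : ℕ} [Fact p.Prime] (hD : D % 4 = 3) (hp : p ≠ 2) :
    ({u : ZMod p | u ^ 2 = u - (((D + 1) / 4 : ℤ) : ZMod p)}.ncard : ℤ) = 1 + jacobiSym p D := by
  rw [jacobiSym_eq_legendreSym_neg hD hp, add_comm 1 (legendreSym _ _),
    ← legendreSym.card_sqrts p hp, ← Set.ncard_eq_toFinset_card']
  have h2 : (2 : ZMod p) ≠ 0 :=
    Ring.two_ne_zero ((ZMod.ringChar_zmod_n p).symm ▸ hp)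
  have hc : (4 : ZMod p) * (((D + 1) / 4 : ℤ) : ZMod p) = D + 1 := by
    exact_mod_cast congrArg (Int.cast (R := ZMod p))
      (by lia : (4 : ℤ) * ((D + 1) / 4) = D + 1)
  push_cast
  refine congrArg _ (Set.ncard_congr (fun u _ ↦ 2 * u - 1) (fun u hu ↦ ?_) (fun u v _ _ huv ↦ ?_)
    fun x hx ↦ ⟨(x + 1) / 2, ?_, by field_simp; ring⟩)
  · rw [Set.mem_ofPred_eq] at hu ⊢
    linear_combination 4 * hu - hc
  · exact mul_left_cancel₀ h2 (sub_left_inj.1 huv)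
  · rw [Set.mem_ofPred_eq] at hx ⊢
    refine mul_left_cancel₀ (mul_ne_zero h2 h2) ?_
    field_simp
    linear_combination hx + hc

variable {O : Type*} [CommRing O] [IsDedekindDomain O] [Module.Free ℤ O] {D : ℕ}

theorem idealCount_prime (hD : D % 4 = 3) (e : QuadraticOrder D ≃ₐ[ℤ] O) {p : ℕ} (hp : p.Prime) :
    (idealCount O p : ℤ) = 1 + jacobiSym p D := by
  have : Fact p.Prime := ⟨hp⟩
  rw [idealCount_prime_eq_card_ringHom O hp,
    Nat.card_congr (RingHom.equivIntAlgHom O (ZMod p)),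
    ← Nat.card_congr (e.arrowCongr AlgEquiv.refl), card_quadraticOrder_algHom]
  rcases eq_or_ne p 2 with rfl | hp2
  · exact ncard_setOf_sq_eq_sub_zmod_two hD
  · exact ncard_setOf_sq_eq_sub_zmod hD hp2

variable [Module.Finite ℤ O] [CharZero O]

theorem idealCount_prime_pow (hD : D % 4 = 3) (e : QuadraticOrder D ≃ₐ[ℤ] O) {p : ℕ}
    (hp : p.Prime) (k : ℕ) :
    (idealCount O (p ^ k) : ℤ) = ∑ i ∈ Finset.range (k + 1), jacobiSym p D ^ i := by
  have h2 : Module.finrank ℤ O = 2 := by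
    rw [← e.toLinearEquiv.finrank_eq, QuadraticAlgebra.finrank_eq_two]
  have hcount := idealCount_prime hD e hp
  rcases jacobiSym.trichotomy p D with hj | hj | hj <;> rw [hj] at hcount ⊢
  · rw [idealCount_prime_pow_of_idealCount_eq_one h2 hp (by lia), Finset.sum_range_succ']
    simp
  · rw [idealCount_prime_pow_of_idealCount_eq_two h2 hp (by lia)]
    simp
  · rw [idealCount_prime_pow_of_idealCount_eq_zero h2 hp (by lia), neg_one_geom_sum]
    simp [Nat.even_add_one, apply_ite]

theorem idealCount_eq_sum_jacobiSym (hD : D % 4 = 3) (e : QuadraticOrder D ≃ₐ[ℤ] O) {n : ℕ}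
    (hn : n ≠ 0) : (idealCount O n : ℤ) = ∑ d ∈ n.divisors, jacobiSym d D := by
  induction n using Nat.recOnPosPrimePosCoprime with
  | zero => exact absurd rfl hn
  | one => simp [idealCount_one]
  | prime_pow p k hp _ =>
    simp only [idealCount_prime_pow hD e hp, Nat.sum_divisors_prime_pow hp, Nat.cast_pow,
      jacobiSym.pow_left]
  | coprime a b ha hb hab iha ihb =>
    rw [idealCount_mul_of_coprime hab, Nat.cast_mul, iha (by lia), ihb (by lia), Nat.divisors_mul,
      Finset.mul_def, Finset.sum_image hab.mul_injOn_divisors, Finset.sum_mul_sum,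
      ← Finset.sum_product']
    simp only [Nat.cast_mul, jacobiSym.mul_left]

end CoefficientFormula

/-! ### The odd Hurwitz zeta function at `1` -/

section HurwitzZetaOdd

open Filter Topology HurwitzZeta

theorem abs_rpow_neg_sub_rpow_neg_le {c s u v : ℝ} (hc : 0 < c) (hs : 0 ≤ s) (hu : c ≤ u)
    (hv : c ≤ v) : |u ^ (-s) - v ^ (-s)| ≤ s * c ^ (-s - 1) * |u - v| := by
  refine (convex_Ici c).norm_image_sub_le_of_norm_hasDerivWithin_le
    (f' := fun t ↦ -s * t ^ (-s - 1))
    (fun t ht ↦ (Real.hasDerivAt_rpow_const (Or.inl (hc.trans_le ht).ne')).hasDerivWithinAt)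
    (fun t ht ↦ ?_) hv hu
  rw [norm_mul, norm_neg, Real.norm_of_nonneg hs,
    Real.norm_of_nonneg (Real.rpow_nonneg (hc.le.trans ht) _)]
  exact mul_le_mul_of_nonneg_left (Real.rpow_le_rpow_of_nonpos hc ht (by linarith)) hs

/-- The `m`-th term of the Dirichlet series of `hurwitzZetaOdd x` at a real number `s`. -/
noncomputable def hurwitzOddTerm (x s : ℝ) (m : ℕ) : ℝ :=
  ((m + x) ^ (-s) - (m + 1 - x) ^ (-s)) / 2

variable {x : ℝ}

theorem abs_hurwitzOddTerm_le (hx : x ∈ Set.Ioo 0 1) {s : ℝ} (hs : s ∈ Set.Icc 1 2) (m : ℕ) :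
    |hurwitzOddTerm x s m| ≤ min x (1 - x) ^ (-3 : ℝ) * (1 / ((m + 1 : ℕ) : ℝ) ^ 2) := by
  obtain ⟨hs1, hs2⟩ := hs
  set c := min x (1 - x)
  have hc : 0 < c := lt_min hx.1 (sub_pos.2 hx.2)
  have hcx : c ≤ x := min_le_left _ _
  have hcx' : c ≤ 1 - x := min_le_right _ _
  have : (0 : ℝ) ≤ m := Nat.cast_nonneg m
  have hcm : 0 < c * (m + 1) := by positivity
  have hdiff : |(m + x) - (m + 1 - x)| ≤ 1 := abs_le.2 ⟨by linarith [hx.1], by linarith [hx.2]⟩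
  have : 0 ≤ (c * (m + 1)) ^ (-s - 1) := Real.rpow_nonneg hcm.le _
  calc |hurwitzOddTerm x s m| = |(m + x) ^ (-s) - (m + 1 - x) ^ (-s)| / 2 := by
        rw [hurwitzOddTerm, abs_div, abs_two]
    _ ≤ s * (c * (m + 1)) ^ (-s - 1) * |(m + x) - (m + 1 - x)| / 2 := by
        gcongr
        exact abs_rpow_neg_sub_rpow_neg_le hcm (by linarith) (by nlinarith) (by nlinarith)
    _ ≤ 2 * (c * (m + 1)) ^ (-s - 1) * 1 / 2 := by gcongr
    _ = c ^ (-s - 1) * (m + 1) ^ (-s - 1) := by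
        rw [mul_one, mul_div_cancel_left₀ _ two_ne_zero, Real.mul_rpow hc.le (by positivity)]
    _ ≤ c ^ (-3 : ℝ) * ((m : ℝ) + 1) ^ (-2 : ℝ) := by
        gcongr ?_ * ?_
        · exact Real.rpow_le_rpow_of_exponent_ge hc (by linarith) (by linarith)
        · exact Real.rpow_le_rpow_of_exponent_le (by linarith) (by linarith)
    _ = c ^ (-3 : ℝ) * (1 / ((m + 1 : ℕ) : ℝ) ^ 2) := by
        rw [Real.rpow_neg (x := (m : ℝ) + 1) (by positivity), Real.rpow_two, one_div, Nat.cast_succ]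

theorem summable_const_mul_one_div_succ_sq (a : ℝ) :
    Summable fun m : ℕ ↦ a * (1 / ((m + 1 : ℕ) : ℝ) ^ 2) :=
  ((summable_nat_add_iff 1).2 (Real.summable_one_div_nat_pow.2 one_lt_two)).mul_left a

theorem tendsto_hurwitzOddTerm (hx : x ∈ Set.Ioo 0 1) (m : ℕ) :
    Tendsto (hurwitzOddTerm x · m) (𝓝[>] 1) (𝓝 (hurwitzOddTerm x 1 m)) := by
  have : (0 : ℝ) ≤ m := Nat.cast_nonneg m
  have hpos : (m + x : ℝ) ≠ 0 := by linarith [hx.1]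
  have hpos' : (m + 1 - x : ℝ) ≠ 0 := by linarith [hx.2]
  exact ((((Real.continuous_const_rpow hpos).comp continuous_neg).sub
    ((Real.continuous_const_rpow hpos').comp continuous_neg)).div_const 2).continuousWithinAt

theorem tendsto_tsum_hurwitzOddTerm (hx : x ∈ Set.Ioo 0 1) :
    Tendsto (fun s ↦ ∑' m, hurwitzOddTerm x s m) (𝓝[>] 1) (𝓝 (∑' m, hurwitzOddTerm x 1 m)) := by
  refine tendsto_tsum_of_dominated_convergence
    (summable_const_mul_one_div_succ_sq (min x (1 - x) ^ (-3 : ℝ))) (tendsto_hurwitzOddTerm hx) ?_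
  filter_upwards [Ioo_mem_nhdsGT one_lt_two] with s hs m
  exact abs_hurwitzOddTerm_le hx (Set.Ioo_subset_Icc_self hs) m

theorem ofReal_tsum_hurwitzOddTerm (hx : x ∈ Set.Ioo 0 1) {s : ℝ} (hs : 1 < s) :
    ((∑' m, hurwitzOddTerm x s m : ℝ) : ℂ) = hurwitzZetaOdd x s := by
  rw [← (hasSum_nat_hurwitzZetaOdd_of_mem_Icc (Set.Ioo_subset_Icc_self hx)
    (s := s) hs).tsum_eq, ofReal_tsum]
  refine tsum_congr fun m ↦ ?_
  have : (0 : ℝ) ≤ m := Nat.cast_nonneg m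
  rw [hurwitzOddTerm, ofReal_div, ofReal_sub, ofReal_cpow (by linarith [hx.1]),
    ofReal_cpow (by linarith [hx.2])]
  push_cast
  rw [cpow_neg, cpow_neg, one_div, one_div]

theorem hurwitzZetaOdd_one_eq_tsum (hx : x ∈ Set.Ioo 0 1) :
    hurwitzZetaOdd x 1 = (∑' m, hurwitzOddTerm x 1 m : ℝ) := by
  have hzeta : Tendsto (fun s : ℝ ↦ hurwitzZetaOdd x s) (𝓝[>] 1) (𝓝 (hurwitzZetaOdd x 1)) := by
    rw [← ofReal_one]
    exact ((differentiable_hurwitzZetaOdd x).continuous.comp continuous_ofReal).continuousWithinAt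
  refine tendsto_nhds_unique hzeta
    (((continuous_ofReal.tendsto _).comp (tendsto_tsum_hurwitzOddTerm hx)).congr' ?_)
  filter_upwards [self_mem_nhdsWithin] with s hs
  exact ofReal_tsum_hurwitzOddTerm hx hs

theorem ofReal_mem_integerComplement (hx : x ∈ Set.Ioo 0 1) : (x : ℂ) ∈ integerComplement := by
  rintro ⟨n, hn⟩
  obtain rfl : (n : ℝ) = x := by exact_mod_cast hn
  have hpos : 0 < n := Int.cast_pos.1 hx.1
  have hlt : n < 1 := by exact_mod_cast hx.2
  lia

theorem sum_hurwitzOddTerm_one (x : ℝ) (M : ℕ) :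
    ((∑ m ∈ Finset.range M, hurwitzOddTerm x 1 m : ℝ) : ℂ) =
      (1 / x - 1 / (x + M) + ∑ m ∈ Finset.range M, cotTerm x m) / 2 := by
  have htel := Finset.sum_range_sub' (fun m : ℕ ↦ 1 / ((x : ℂ) + m)) M
  rw [Nat.cast_zero, add_zero] at htel
  rw [← htel, ← Finset.sum_add_distrib, Finset.sum_div, ofReal_sum]
  refine Finset.sum_congr rfl fun m _ ↦ ?_
  rw [hurwitzOddTerm, cotTerm, Real.rpow_neg_one, Real.rpow_neg_one,
    ← neg_sub ((m : ℂ) + 1) x, one_div_neg_eq_neg_one_div]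
  push_cast
  ring

theorem hurwitzZetaOdd_one (hx : x ∈ Set.Ioo 0 1) :
    hurwitzZetaOdd x 1 = (Real.pi / 2 : ℂ) * cot (Real.pi * x) := by
  have hsum : Summable (hurwitzOddTerm x 1) :=
    (summable_const_mul_one_div_succ_sq _).of_norm_bounded
      (abs_hurwitzOddTerm_le hx ⟨le_rfl, one_le_two⟩)
  have hzero : Tendsto (fun M : ℕ ↦ 1 / ((x : ℂ) + M)) atTop (𝓝 0) := by
    simp only [one_div]
    exact_mod_cast (continuous_ofReal.tendsto 0).comp (tendsto_inv_atTop_zero.comp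
      (tendsto_atTop_add_const_left _ x tendsto_natCast_atTop_atTop))
  have hlim := (((hzero.const_sub (1 / (x : ℂ))).add
    (tendsto_logDeriv_euler_cot_sub (ofReal_mem_integerComplement hx))).div_const 2)
  simp only [← sum_hurwitzOddTerm_one] at hlim
  rw [hurwitzZetaOdd_one_eq_tsum hx, tendsto_nhds_unique
    ((continuous_ofReal.tendsto _).comp hsum.hasSum.tendsto_sum_nat) hlim]
  ring

end HurwitzZetaOdd

/-! ### The value at `1` of an odd Dirichlet `L`-function -/

section LFunctionOne

theorem sub_one_mul_sum_natCast_mul_pow {R : Type*} [CommRing R] (z : R) (n : ℕ) :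
    (z - 1) * ∑ k ∈ Finset.range n, (k : R) * z ^ k =
      n * z ^ n - z * ∑ k ∈ Finset.range n, z ^ k := by
  induction n with
  | zero => simp
  | succ n ih =>
    rw [Finset.sum_range_succ, Finset.sum_range_succ, mul_add, ih]
    push_cast
    ring

variable {N : ℕ} [NeZero N]

theorem sum_val_mul_stdAddChar {b : ZMod N} (hb : b ≠ 0) :
    ∑ a : ZMod N, (a.val : ℂ) * ZMod.stdAddChar (a * b) =
      (N / 2 : ℂ) * (-1 - I * cot (Real.pi * (b.val / N : ℝ))) := by
  obtain ⟨z, hz⟩ : ∃ z : ℂ, z = ZMod.stdAddChar b := ⟨_, rfl⟩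
  have hz1 : z ≠ 1 := by
    rw [hz, ← AddChar.map_zero_eq_one (ZMod.stdAddChar (N := N))]
    exact fun h ↦ hb (ZMod.injective_stdAddChar h)
  have hpow (k : ℕ) : ZMod.stdAddChar ((k : ZMod N) * b) = z ^ k := by
    rw [hz, ← AddChar.map_nsmul_eq_pow, nsmul_eq_mul]
  have hzN : z ^ N = 1 := by rw [← hpow]; simp
  have hgeom : ∑ k ∈ Finset.range N, z ^ k = 0 := by
    have := geom_sum_mul z N
    rw [hzN, sub_self] at this
    exact (mul_eq_zero.1 this).resolve_right (sub_ne_zero.2 hz1)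
  have hsum : (z - 1) * ∑ a : ZMod N, (a.val : ℂ) * ZMod.stdAddChar (a * b) = N := by
    rw [sum_zmod_eq_sum_range, Finset.sum_congr rfl fun k hk ↦ by
      rw [hpow, ZMod.val_natCast_of_lt (Finset.mem_range.1 hk)],
      sub_one_mul_sum_natCast_mul_pow, hgeom, hzN, mul_one, mul_zero, sub_zero]
  have hexp : exp (2 * Real.pi * I * ((b.val / N : ℝ) : ℂ)) = z := by
    have := ZMod.stdAddChar_coe (N := N) (b.val : ℤ)
    rw [Int.cast_natCast, ZMod.natCast_zmod_val] at this
    rw [hz, this]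
    push_cast
    ring_nf
  have hsub : z - 1 ≠ 0 := sub_ne_zero.2 hz1
  have hsub' : 1 - z ≠ 0 := sub_ne_zero.2 hz1.symm
  rw [cot_pi_eq_exp_ratio, hexp]
  refine mul_left_cancel₀ hsub (hsum.trans ?_)
  field_simp
  ring

variable {χ : DirichletCharacter ℂ N}

theorem LFunction_one_eq_sum_cot (hχ : χ.Odd) :
    DirichletCharacter.LFunction χ 1 =
      (N : ℂ)⁻¹ * ∑ b : ZMod N, χ b * ((Real.pi / 2 : ℂ) * cot (Real.pi * (b.val / N : ℝ))) := by
  have hzero : χ 0 = 0 := hχ.to_fun.map_zero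
  change ZMod.LFunction _ 1 = _
  rw [ZMod.LFunction_def_odd hχ.to_fun, cpow_neg_one]
  congr 1
  refine Finset.sum_congr rfl fun b _ ↦ ?_
  obtain rfl | hb := eq_or_ne b 0
  · rw [hzero, zero_mul, zero_mul]
  · have hN : (0 : ℝ) < N := mod_cast NeZero.pos N
    have hval : 0 < b.val := Nat.pos_of_ne_zero (by simpa using hb)
    have hlt : (b.val : ℝ) < N := mod_cast ZMod.val_lt b
    rw [ZMod.toAddCircle_apply, hurwitzZetaOdd_one ⟨by positivity, (div_lt_one hN).2 hlt⟩]

theorem sum_mul_sum_val_mul_stdAddChar (hχ : χ.IsPrimitive) :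
    ∑ b : ZMod N, χ b * ∑ a : ZMod N, (a.val : ℂ) * ZMod.stdAddChar (a * b) =
      gaussSum χ ZMod.stdAddChar * ∑ a : ZMod N, (a.val : ℂ) * χ⁻¹ a := by
  simp only [Finset.mul_sum]
  rw [Finset.sum_comm]
  refine Finset.sum_congr rfl fun a _ ↦ ?_
  have hshift := gaussSum_mulShift_of_isPrimitive ZMod.stdAddChar hχ a
  rw [mul_left_comm, mul_comm (gaussSum _ _), ← hshift, gaussSum, Finset.mul_sum]
  refine Finset.sum_congr rfl fun b _ ↦ ?_
  rw [AddChar.mulShift_apply]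
  ring

theorem LFunction_one_eq_gaussSum_mul_sum (hodd : χ.Odd) (hprim : χ.IsPrimitive) :
    DirichletCharacter.LFunction χ 1 =
      (Real.pi * I / N ^ 2 : ℂ) * gaussSum χ ZMod.stdAddChar *
        ∑ a : ZMod N, (a.val : ℂ) * χ⁻¹ a := by
  have hN : (N : ℂ) ≠ 0 := mod_cast NeZero.ne N
  have hpi : (Real.pi : ℂ) ≠ 0 := mod_cast Real.pi_ne_zero
  have hzero : χ 0 = 0 := hodd.to_fun.map_zero
  have hterm (b : ZMod N) : χ b * ∑ a : ZMod N, (a.val : ℂ) * ZMod.stdAddChar (a * b) =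
      -(N / 2 : ℂ) * χ b + (-(N : ℂ) * I / Real.pi) *
        (χ b * ((Real.pi / 2 : ℂ) * cot (Real.pi * (b.val / N : ℝ)))) := by
    obtain rfl | hb := eq_or_ne b 0
    · simp only [hzero, zero_mul, mul_zero, add_zero]
    · rw [sum_val_mul_stdAddChar hb]
      field_simp
      ring
  have hne : χ ≠ 1 := by
    rintro rfl
    have := hodd
    rw [DirichletCharacter.Odd, MulChar.one_apply isUnit_one.neg] at this
    norm_num at this
  have hsum := sum_mul_sum_val_mul_stdAddChar hprim
  rw [Finset.sum_congr rfl fun b _ ↦ hterm b, Finset.sum_add_distrib, ← Finset.mul_sum,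
    ← Finset.mul_sum, MulChar.sum_eq_zero_of_ne_one hne, mul_zero, zero_add] at hsum
  rw [LFunction_one_eq_sum_cot hodd, mul_assoc, ← hsum]
  generalize ∑ b : ZMod N, χ b * _ = S
  field_simp
  rw [I_sq]
  ring

end LFunctionOne

/-! ### The class number formula -/

section ClassNumberFormula

open NumberField Filter Topology

theorem tendsto_ofReal_nhdsGT_nhdsNE (a : ℝ) :
    Tendsto (fun x : ℝ ↦ (x : ℂ)) (𝓝[>] a) (𝓝[≠] (a : ℂ)) :=
  tendsto_nhdsWithin_of_tendsto_nhds_of_eventually_within _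
    ((continuous_ofReal.tendsto a).mono_left nhdsWithin_le_nhds)
    (eventually_mem_nhdsWithin.mono fun _ hx ↦ ofReal_injective.ne (ne_of_gt hx))

section QuadraticField

variable {D : ℕ} [NeZero D]

theorem complexJacobiChar_odd (hD : D % 4 = 3) : (complexJacobiChar D).Odd := by
  rw [DirichletCharacter.Odd, complexJacobiChar_neg hD, map_one]

variable (D) in
theorem sum_val_mul_complexJacobiChar :
    ∑ a : ZMod D, (a.val : ℂ) * complexJacobiChar D a =
      ((∑ k ∈ Finset.range D, (k : ℤ) * jacobiSym k D : ℤ) : ℂ) := by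
  rw [sum_zmod_eq_sum_range]
  push_cast
  refine Finset.sum_congr rfl fun k hk ↦ ?_
  rw [complexJacobiChar_apply, jacobiChar_natCast, ZMod.val_natCast_of_lt (Finset.mem_range.1 hk)]

theorem norm_LFunction_complexJacobiChar_one_sq (hD : D % 4 = 3) (hsq : Squarefree D) :
    ‖DirichletCharacter.LFunction (complexJacobiChar D) 1‖ ^ 2 =
      Real.pi ^ 2 / (D : ℝ) ^ 3 * (∑ k ∈ Finset.range D, (k : ℤ) * jacobiSym k D : ℤ) ^ 2 := by
  have hD0 : (D : ℝ) ≠ 0 := mod_cast NeZero.ne D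
  have hgauss : ‖gaussSum (complexJacobiChar D) ZMod.stdAddChar‖ ^ 2 = D := by
    rw [← norm_pow, gaussSum_complexJacobiChar_sq hsq hD, norm_neg, Complex.norm_natCast]
  rw [LFunction_one_eq_gaussSum_mul_sum (complexJacobiChar_odd hD)
    (complexJacobiChar_isPrimitive hsq (Nat.odd_iff.2 (by omega))), complexJacobiChar_inv,
    sum_val_mul_complexJacobiChar, norm_mul, norm_mul, mul_pow, mul_pow, hgauss,
    Complex.norm_intCast, sq_abs, norm_div, norm_mul, norm_pow, Complex.norm_natCast, norm_I,
    norm_real, Real.norm_eq_abs, mul_one, div_pow, sq_abs]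
  field_simp

variable {K : Type*} [Field K] [NumberField K]

theorem dedekindZeta_eq_riemannZeta_mul_LFunction (hD : D % 4 = 3) (e : QuadraticOrder D ≃ₐ[ℤ] 𝓞 K)
    {z : ℂ} (hz : 1 < z.re) :
    dedekindZeta K z =
      riemannZeta z * DirichletCharacter.LFunction (complexJacobiChar D) z := by
  rw [DirichletCharacter.LFunction_eq_LSeries _ hz, ← LSeries_one_eq_riemannZeta hz,
    ← LSeries_convolution' (LSeriesSummable_one_iff.2 hz)
      (DirichletCharacter.LSeriesSummable_of_one_lt_re (complexJacobiChar D) hz)]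
  refine LSeries_congr (fun {n} hn ↦ ?_) z
  have hcount := congrArg (Int.cast (R := ℂ)) (idealCount_eq_sum_jacobiSym hD e hn)
  rw [Int.cast_natCast, Int.cast_sum] at hcount
  rw [LSeries.convolution_def]
  refine hcount.trans ?_
  simp only [Pi.one_apply, one_mul]
  rw [Nat.sum_divisorsAntidiagonal' (f := fun _ d ↦ complexJacobiChar D (d : ZMod D))]
  refine Finset.sum_congr rfl fun d _ ↦ ?_
  rw [complexJacobiChar_apply, jacobiChar_natCast]

theorem LFunction_complexJacobiChar_one (hD4 : D % 4 = 3) (hD : 3 < D)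
    (e : QuadraticOrder D ≃ₐ[ℤ] 𝓞 K) :
    DirichletCharacter.LFunction (complexJacobiChar D) 1 =
      ((Real.pi * classNumber K / Real.sqrt D : ℝ) : ℂ) := by
  have hresidue := tendsto_sub_one_mul_dedekindZeta_nhdsGT K
  rw [dedekindZeta_residue_eq_of_algEquiv_quadraticOrder hD4 hD e] at hresidue
  have hcoe : Tendsto (fun x : ℝ ↦ (x : ℂ)) (𝓝[>] 1) (𝓝[≠] 1) :=
    mod_cast tendsto_ofReal_nhdsGT_nhdsNE 1
  have hcont :=
    (DirichletCharacter.differentiable_LFunction (complexJacobiChar_ne_one hD4)).continuous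
  have hprod := (riemannZeta_residue_one.comp hcoe).mul
    (((hcont.tendsto 1).mono_left nhdsWithin_le_nhds).comp hcoe)
  rw [one_mul] at hprod
  refine tendsto_nhds_unique (hprod.congr' ?_) hresidue
  filter_upwards [self_mem_nhdsWithin] with x hx
  simp only [Function.comp_apply]
  rw [dedekindZeta_eq_riemannZeta_mul_LFunction hD4 e (by simpa using hx), mul_assoc]

theorem mul_classNumber_eq_abs_sum (hD4 : D % 4 = 3) (hsq : Squarefree D) (hD : 3 < D)
    (e : QuadraticOrder D ≃ₐ[ℤ] 𝓞 K) :
    (D : ℤ) * classNumber K = |∑ k ∈ Finset.range D, (k : ℤ) * jacobiSym k D| := by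
  have hnorm := norm_LFunction_complexJacobiChar_one_sq hD4 hsq
  rw [LFunction_complexJacobiChar_one hD4 hD e, norm_real, Real.norm_eq_abs, sq_abs, div_pow,
    mul_pow, Real.sq_sqrt (Nat.cast_nonneg D)] at hnorm
  set S := ∑ k ∈ Finset.range D, (k : ℤ) * jacobiSym k D
  have hD0 : (D : ℝ) ≠ 0 := mod_cast NeZero.ne D
  have hpi : Real.pi ≠ 0 := Real.pi_ne_zero
  field_simp at hnorm
  have hsqS : ((D : ℤ) * classNumber K) ^ 2 = S ^ 2 := by
    rw [mul_pow, mul_comm]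
    exact_mod_cast hnorm
  rw [← (sq_eq_sq_iff_abs_eq_abs _ _).1 hsqS, abs_of_nonneg (by positivity)]

end QuadraticField

theorem mul_classNumSqrtNeg_eq_abs_sum {D : ℕ} (hD4 : D % 4 = 3) (hsq : Squarefree D)
    (hD : 3 < D) :
    (D : ℤ) * classNumSqrtNeg D = |∑ k ∈ Finset.range D, (k : ℤ) * jacobiSym k D| := by
  have : NeZero D := ⟨by omega⟩
  have : FiniteDimensional ℚ ℚ⟮sqrtNeg D⟯ := adjoin.finiteDimensional (isIntegral_sqrtNeg D)
  have : NumberField ℚ⟮sqrtNeg D⟯ := {}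
  obtain ⟨e⟩ := nonempty_algEquiv_quadraticOrder hD4 hsq
  exact mul_classNumber_eq_abs_sum hD4 hsq hD e

end ClassNumberFormula

/-! ### Gauss sums over finite fields -/

theorem isIntegral_mulChar_apply {R A : Type*} [CommRing R] [Finite R] [CommRing A]
    (χ : MulChar R A) (x : R) : IsIntegral ℤ (χ x) := by
  by_cases hx : IsUnit x
  · obtain ⟨u, rfl⟩ := hx
    refine IsIntegral.of_pow (Nat.card_pos (α := Rˣ)) ?_
    rw [← map_pow, ← Units.val_pow_eq_pow_val, pow_card_eq_one', Units.val_one, map_one]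
    exact isIntegral_one
  · rw [χ.map_nonunit hx]
    exact isIntegral_zero

theorem isIntegral_addChar_apply {G A : Type*} [AddGroup G] [Finite G] [CommRing A]
    (ψ : AddChar G A) (x : G) : IsIntegral ℤ (ψ x) := by
  refine IsIntegral.of_pow (Nat.card_pos (α := G)) ?_
  rw [← AddChar.map_nsmul_eq_pow, card_nsmul_eq_zero', AddChar.map_zero_eq_one]
  exact isIntegral_one

theorem isIntegral_gaussSum {R A : Type*} [CommRing R] [Fintype R] [CommRing A] (χ : MulChar R A)
    (ψ : AddChar R A) : IsIntegral ℤ (gaussSum χ ψ) :=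
  IsIntegral.sum _ fun x _ ↦ (isIntegral_mulChar_apply χ x).mul (isIntegral_addChar_apply ψ x)

theorem isIntegral_jacobiSum {R A : Type*} [CommRing R] [Fintype R] [CommRing A]
    (χ φ : MulChar R A) : IsIntegral ℤ (jacobiSum χ φ) :=
  IsIntegral.sum _ fun x _ ↦ (isIntegral_mulChar_apply χ x).mul (isIntegral_mulChar_apply φ _)

theorem star_gaussSum_of_apply_neg_one {F : Type*} [Field F] [Fintype F] {χ : MulChar F ℂ}
    (hχ : χ (-1) = 1) (ψ : AddChar F ℂ) :
    starRingEnd ℂ (gaussSum χ ψ) = gaussSum χ⁻¹ ψ := by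
  rw [← mul_gaussSum_inv_eq_gaussSum χ⁻¹ ψ, MulChar.inv_apply', inv_neg, inv_one, hχ, one_mul]
  exact star_gaussSum_eq χ ψ

theorem gaussSum_mul_star_gaussSum {F : Type*} [Field F] [Fintype F] {χ : MulChar F ℂ}
    (hχ : χ ≠ 1) {ψ : AddChar F ℂ} (hψ : ψ ≠ 1) :
    gaussSum χ ψ * starRingEnd ℂ (gaussSum χ ψ) = Fintype.card F := by
  rw [← gaussSum_mul_gaussSum_eq_card hχ (AddChar.IsPrimitive.of_ne_one hψ)]
  exact congrArg _ (star_gaussSum_eq χ ψ)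

theorem zetaP_isPrimitiveRoot {p : ℕ} (hp : p ≠ 0) : IsPrimitiveRoot (zetaP p) p := by
  simpa only [zetaP] using Complex.isPrimitiveRoot_exp p hp

section TraceChar

/-- The additive character `x ↦ exp (2πi Tr(x) / p)` of an algebra over `ZMod p`. -/
noncomputable def traceChar (p : ℕ) [NeZero p] (F : Type*) [CommRing F] [Algebra (ZMod p) F] :
    AddChar F ℂ :=
  (AddChar.zmodChar p (zetaP_isPrimitiveRoot (NeZero.ne p)).pow_eq_one).compAddMonoidHom
    (Algebra.trace (ZMod p) F).toAddMonoidHom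

theorem traceChar_apply {p : ℕ} [NeZero p] {F : Type*} [CommRing F] [Algebra (ZMod p) F] (x : F) :
    traceChar p F x = zetaP p ^ (Algebra.trace (ZMod p) F x).val := by
  simp [traceChar, AddChar.zmodChar_apply]

variable {p : ℕ} [Fact p.Prime]

theorem sum_traceChar_smul {F : Type*} [CommRing F] [Algebra (ZMod p) F] (x : F) :
    ∑ a : ZMod p, traceChar p F (a • x) =
      if Algebra.trace (ZMod p) F x = 0 then (p : ℂ) else 0 := by
  have hp : p.Prime := Fact.out
  have hζ := zetaP_isPrimitiveRoot hp.ne_zero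
  let η : AddChar (ZMod p) ℂ := AddChar.zmodChar p hζ.pow_eq_one
  have hη : η.IsPrimitive := AddChar.zmodChar_primitive_of_primitive_root p hζ
  have h := AddChar.sum_mulShift (Algebra.trace (ZMod p) F x) hη
  rw [ZMod.card, Nat.cast_ite, Nat.cast_zero] at h
  refine Eq.trans (Finset.sum_congr rfl fun a _ ↦ ?_) h
  rw [traceChar_apply, map_smul, smul_eq_mul, AddChar.zmodChar_apply]

section Field

variable {F : Type*} [Field F] [Algebra (ZMod p) F]

theorem traceChar_ne_one [Finite F] : traceChar p F ≠ 1 := by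
  have hp : p.Prime := Fact.out
  have : Fact (1 < p) := ⟨hp.one_lt⟩
  obtain ⟨x, hx⟩ := Algebra.trace_surjective (ZMod p) F 1
  rw [AddChar.ne_one_iff]
  refine ⟨x, ?_⟩
  rw [traceChar_apply, hx, ZMod.val_one, pow_one]
  exact (zetaP_isPrimitiveRoot hp.ne_zero).ne_one hp.one_lt

theorem traceChar_pow_char [Finite F] (x : F) : traceChar p F (x ^ p) = traceChar p F x := by
  have h := Algebra.trace_eq_of_algEquiv (FiniteField.frobeniusAlgEquivOfAlgebraic (ZMod p) F) x
  rw [FiniteField.coe_frobeniusAlgEquivOfAlgebraic, Fintype.card_eq_nat_card, Nat.card_zmod] at h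
  rw [traceChar_apply, traceChar_apply, h]

theorem gaussSum_pow_char_pow [Fintype F] (χ : MulChar F ℂ) (i : ℕ) :
    gaussSum (χ ^ p ^ i) (traceChar p F) = gaussSum χ (traceChar p F) := by
  have hp : p.Prime := Fact.out
  induction i with
  | zero => rw [pow_zero, pow_one]
  | succ i ih =>
    rw [← ih, pow_succ, pow_mul]
    let σ := FiniteField.frobeniusAlgEquivOfAlgebraic (ZMod p) F
    have hσ : ∀ x, σ x = x ^ p := fun x ↦ by simp [σ]
    refine (Finset.sum_congr rfl fun x _ ↦ ?_).trans
      (σ.toEquiv.sum_comp fun x ↦ (χ ^ p ^ i) x * traceChar p F x)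
    rw [MulChar.pow_apply' _ hp.ne_zero, ← map_pow, ← traceChar_pow_char, ← hσ x]
    rfl

end Field

theorem gaussSumN_eq_gaussSum {F : Type} [Field F] [Fintype F] [Algebra (ZMod p) F]
    (χ : MulChar F ℂ) (m : ℕ) : gaussSumN p χ m = gaussSum (χ ^ m) (traceChar p F) := by
  classical
  rw [gaussSumN, gaussSum, Finset.sum_filter]
  refine Finset.sum_congr rfl fun x _ ↦ ?_
  rw [traceChar_apply]
  split_ifs with hx
  · rfl
  · rw [not_not.1 hx, MulChar.map_zero, zero_mul]

end TraceChar

/-! ### Reduction of algebraic integers modulo a prime -/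

theorem exists_integralClosure_ringHom (l : ℕ) [Fact l.Prime] :
    ∃ (k : Type) (_ : Field k) (_ : IsAlgClosed k) (_ : CharP k l),
      Nonempty (integralClosure ℤ ℂ →+* k) := by
  have hl : Prime (l : ℤ) := Nat.prime_iff_prime_int.1 Fact.out
  let P : Ideal ℤ := Ideal.span {(l : ℤ)}
  have : P.IsMaximal := PrincipalIdealRing.isMaximal_of_irreducible hl.irreducible
  obtain ⟨Q, hQ, hPQ⟩ := Ideal.exists_ideal_over_maximal_of_isIntegral
    (S := integralClosure ℤ ℂ) P (by
      rw [(RingHom.injective_iff_ker_eq_bot _).1 (FaithfulSMul.algebraMap_injective ℤ _)]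
      exact bot_le)
  let : Field (integralClosure ℤ ℂ ⧸ Q) := Ideal.Quotient.field Q
  have hl0 : (l : integralClosure ℤ ℂ ⧸ Q) = 0 := by
    have hmem : (l : ℤ) ∈ Q.comap (algebraMap ℤ _) := hPQ ▸ Ideal.mem_span_singleton_self _
    rw [Ideal.mem_comap, map_natCast] at hmem
    exact Ideal.Quotient.eq_zero_iff_mem.2 hmem
  have : CharP (integralClosure ℤ ℂ ⧸ Q) l := (CharP.charP_iff_prime_eq_zero Fact.out).2 hl0
  exact ⟨AlgebraicClosure (integralClosure ℤ ℂ ⧸ Q), inferInstance, inferInstance,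
    charP_of_injective_algebraMap (algebraMap (integralClosure ℤ ℂ ⧸ Q) _).injective l,
    ⟨(algebraMap _ _).comp (Ideal.Quotient.mk Q)⟩⟩

section Reduce

variable {R k : Type*} [CommRing R] [CommRing k] (φ : integralClosure ℤ ℂ →+* k)

/-- The reduction of a complex multiplicative character along a homomorphism `φ` from the ring of
all algebraic integers. -/
noncomputable def reduceMulChar [Finite R] (χ : MulChar R ℂ) : MulChar R k where
  toFun x := φ ⟨χ x, isIntegral_mulChar_apply χ x⟩
  map_one' := (congrArg φ (Subtype.ext (map_one χ))).trans (map_one φ)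
  map_mul' x y := (congrArg φ (Subtype.ext (map_mul χ x y))).trans
    (map_mul φ ⟨χ x, isIntegral_mulChar_apply χ x⟩ ⟨χ y, isIntegral_mulChar_apply χ y⟩)
  map_nonunit' _ hx := (congrArg φ (Subtype.ext (χ.map_nonunit hx))).trans (map_zero φ)

theorem reduceMulChar_apply [Finite R] (χ : MulChar R ℂ) (x : R) :
    reduceMulChar φ χ x = φ ⟨χ x, isIntegral_mulChar_apply χ x⟩ := rfl

theorem reduceMulChar_pow [Finite R] (χ : MulChar R ℂ) (n : ℕ) :
    reduceMulChar φ (χ ^ n) = reduceMulChar φ χ ^ n := by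
  ext x
  rw [MulChar.pow_apply_coe, reduceMulChar_apply, reduceMulChar_apply, ← map_pow]
  congr 1
  exact Subtype.ext (MulChar.pow_apply_coe χ n x)

/-- The reduction of a complex additive character along a homomorphism `φ` from the ring of all
algebraic integers. -/
noncomputable def reduceAddChar [Finite R] (ψ : AddChar R ℂ) : AddChar R k where
  toFun x := φ ⟨ψ x, isIntegral_addChar_apply ψ x⟩
  map_zero_eq_one' := 
    (congrArg φ (Subtype.ext ψ.map_zero_eq_one)).trans (map_one φ)
  map_add_eq_mul' x y := (congrArg φ (Subtype.ext (ψ.map_add_eq_mul x y))).trans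
    (map_mul φ ⟨ψ x, isIntegral_addChar_apply ψ x⟩ ⟨ψ y, isIntegral_addChar_apply ψ y⟩)

theorem reduceAddChar_apply [Finite R] (ψ : AddChar R ℂ) (x : R) :
    reduceAddChar φ ψ x = φ ⟨ψ x, isIntegral_addChar_apply ψ x⟩ := rfl

theorem gaussSum_reduce [Fintype R] (χ : MulChar R ℂ) (ψ : AddChar R ℂ) :
    gaussSum (reduceMulChar φ χ) (reduceAddChar φ ψ) =
      φ ⟨gaussSum χ ψ, isIntegral_gaussSum χ ψ⟩ := by
  simp only [gaussSum, reduceMulChar_apply, reduceAddChar_apply, ← map_mul, ← map_sum]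
  congr 1
  exact Subtype.ext (by simp)

end Reduce

/-! ### Stickelberger's lower bound for the valuation of a Gauss sum -/

/-- The sum of the least residues modulo `N` of `a, p a, …, p ^ (f - 1) a`. For a character of
order `N` of a field with `p ^ f` elements, Stickelberger's exponent is this sum divided by `N`. -/
def stickelbergerSum (p N f a : ℕ) : ℕ := ∑ i ∈ Finset.range f, p ^ i * a % N

theorem sub_one_mul_sum_div_pow_add_sum_digits {p : ℕ} (hp : 1 < p) {f : ℕ} {n : ℕ}
    (hn : n < p ^ f) :
    (p - 1) * ∑ i ∈ Finset.range f, n / p ^ (i + 1) + (p.digits n).sum = n := by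
  induction f generalizing n with
  | zero => simp [Nat.lt_one_iff.1 hn]
  | succ f ih =>
    rcases Nat.eq_zero_or_pos n with rfl | hn0
    · simp
    have hdiv : n / p < p ^ f := Nat.div_lt_of_lt_mul (by rwa [← pow_succ'])
    have hsum : ∑ i ∈ Finset.range (f + 1), n / p ^ (i + 1) =
        n / p + ∑ i ∈ Finset.range f, n / p / p ^ (i + 1) := by
      rw [Finset.sum_range_succ', zero_add, pow_one, add_comm]
      simp only [Nat.div_div_eq_div_mul, ← pow_succ']
    rw [hsum, Nat.digits_def' hp hn0, List.sum_cons]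
    have := ih hdiv
    have := Nat.mod_add_div n p
    obtain ⟨q, rfl⟩ : ∃ q, p = q + 1 := ⟨p - 1, by omega⟩
    rw [Nat.add_sub_cancel] at *
    linarith

theorem pow_mul_mod_pow_sub_one {p f i n : ℕ} (hp : 0 < p) (hi : i ≤ f) (hn : n < p ^ f - 1) :
    (p : ℤ) ^ i * n - ((p : ℤ) ^ f - 1) * (n / p ^ (f - i) : ℕ) =
      (p ^ i * n % (p ^ f - 1) : ℕ) := by
  have hpf : p ^ f = p ^ i * p ^ (f - i) := by rw [← pow_add, Nat.add_sub_cancel' hi]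
  have hQ : ((p ^ f - 1 : ℕ) : ℤ) = (p : ℤ) ^ f - 1 := by
    rw [Nat.cast_sub (Nat.one_le_pow _ _ hp)]; push_cast; rfl
  have hdiv := Nat.div_add_mod n (p ^ (f - i))
  have ha : n / p ^ (f - i) < p ^ i := Nat.div_lt_of_lt_mul (by rw [mul_comm, ← hpf]; omega)
  have hb : n % p ^ (f - i) < p ^ (f - i) := Nat.mod_lt _ (Nat.pow_pos hp)
  set a := n / p ^ (f - i)
  set b := n % p ^ (f - i)
  have heq : p ^ i * n = a + p ^ i * b + (p ^ f - 1) * a := by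
    zify [hQ]
    rw [← hdiv, show (p : ℤ) ^ f = p ^ i * p ^ (f - i) by exact_mod_cast hpf]
    push_cast; ring
  have hlt : a + p ^ i * b < p ^ f - 1 := by
    by_contra! hle
    have hb1 : p ^ i * (b + 1) ≤ p ^ f := hpf ▸ Nat.mul_le_mul_left _ hb
    have : p ^ i * n < p ^ i * (p ^ f - 1) := Nat.mul_lt_mul_of_pos_left hn (Nat.pow_pos hp)
    nlinarith
  rw [heq, Nat.add_mul_mod_self_left, Nat.mod_eq_of_lt hlt, ← hQ]
  have : ((p ^ i * n : ℕ) : ℤ) = _ := congrArg _ heq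
  push_cast at this ⊢
  linarith

theorem sub_one_mul_sum_pow_mul_mod {p f n : ℕ} (hp : 1 < p) (hn : n < p ^ f - 1) :
    (p - 1) * ∑ i ∈ Finset.range f, p ^ i * n % (p ^ f - 1) =
      (p ^ f - 1) * (p.digits n).sum := by
  have hgeom := geom_sum_mul (p : ℤ) f
  have hdigits := sub_one_mul_sum_div_pow_add_sum_digits hp (hn.trans_le (Nat.sub_le _ _))
  have hreflect := Finset.sum_range_reflect (fun i ↦ ((n / p ^ (i + 1) : ℕ) : ℤ)) f
  have hmod : ∑ i ∈ Finset.range f, ((p ^ i * n % (p ^ f - 1) : ℕ) : ℤ) =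
      (∑ i ∈ Finset.range f, (p : ℤ) ^ i) * n -
        ((p : ℤ) ^ f - 1) * ∑ i ∈ Finset.range f, ((n / p ^ (i + 1) : ℕ) : ℤ) := by
    rw [← hreflect, Finset.sum_mul, Finset.mul_sum, ← Finset.sum_sub_distrib]
    refine Finset.sum_congr rfl fun i hi ↦ ?_
    have hif := Finset.mem_range.1 hi
    rw [← pow_mul_mod_pow_sub_one hp.le hif.le hn, show f - 1 - i + 1 = f - i by omega]
  apply_fun ((↑) : ℕ → ℤ) using Nat.cast_injective
  apply_fun ((↑) : ℕ → ℤ) at hdigits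
  rw [Nat.cast_add, Nat.cast_mul, Nat.cast_sub hp.le, Nat.cast_sum, Nat.cast_one] at hdigits
  rw [Nat.cast_mul, Nat.cast_sub hp.le, Nat.cast_sum, hmod, Nat.cast_mul,
    Nat.cast_sub (Nat.one_le_pow f p hp.le), Nat.cast_pow, Nat.cast_one]
  linear_combination (n : ℤ) * hgeom - ((p : ℤ) ^ f - 1) * hdigits

theorem valuation_le_one_of_isIntegral {K Γ₀ : Type*} [Field K]
    [LinearOrderedCommGroupWithZero Γ₀] (v : Valuation K Γ₀) {x : K} (hx : IsIntegral ℤ x) :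
    v x ≤ 1 :=
  (Valuation.integer.integers v).mem_of_integral hx.tower_top

theorem exists_valuationSubring_of_ringHom {K k : Type*} [Field K] [CommRing k] [Nontrivial k]
    {A : Subring K} (φ : A →+* k) :
    ∃ V : ValuationSubring K, ∀ a : A, φ a = 0 → V.valuation (a : K) < 1 := by
  obtain ⟨V, -, hV⟩ := Ideal.image_subset_nonunits_valuationSubring _ (RingHom.ker_ne_top φ)
  exact ⟨V, fun a ha ↦ V.mem_nonunits_iff.1 (hV ⟨a, ha, rfl⟩)⟩

section PrimitiveRoot

variable {K Γ₀ : Type*} [Field K] [LinearOrderedCommGroupWithZero Γ₀] (v : Valuation K Γ₀)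

theorem valuation_sub_one_le_of_pow_eq_one {n : ℕ} [NeZero n] {ζ μ : K} (hζ : IsPrimitiveRoot ζ n)
    (hμ : μ ^ n = 1) : v (μ - 1) ≤ v (ζ - 1) := by
  obtain ⟨i, -, rfl⟩ := hζ.eq_pow_of_pow_eq_one hμ
  have hgeom : IsIntegral ℤ (∑ j ∈ Finset.range i, ζ ^ j) :=
    IsIntegral.sum _ fun j _ ↦ (hζ.isIntegral (NeZero.pos n)).pow j
  rw [← geom_sum_mul, map_mul]
  exact mul_le_of_le_one_left' (valuation_le_one_of_isIntegral v hgeom)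

theorem valuation_prime_eq_pow {p : ℕ} [Fact p.Prime] {ζ : K} (hζ : IsPrimitiveRoot ζ p) :
    v p = v (ζ - 1) ^ (p - 1) := by
  have hp : p.Prime := Fact.out
  have hprod : (p : K) = ∏ μ ∈ primitiveRoots p K, (1 - μ) := by
    rw [← eval_one_cyclotomic_prime (R := K) (p := p), cyclotomic_eq_prod_X_sub_primitiveRoots hζ,
      eval_prod]
    simp only [eval_sub, eval_X, eval_C]
  rw [hprod, map_prod, ← Nat.totient_prime hp, ← hζ.card_primitiveRoots]
  refine Finset.prod_eq_pow_card fun μ hμ ↦ ?_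
  have hμ' := isPrimitiveRoot_of_mem_primitiveRoots hμ
  rw [Valuation.map_sub_swap]
  exact le_antisymm (valuation_sub_one_le_of_pow_eq_one v hζ hμ'.pow_eq_one)
    (valuation_sub_one_le_of_pow_eq_one v hμ' hζ.pow_eq_one)

end PrimitiveRoot

theorem isPrimitiveRoot_map_of_neZero {A k : Type*} [CommRing A] [IsDomain A] [CommRing k]
    [IsDomain k] (φ : A →+* k) {n : ℕ} [NeZero (n : k)] {ζ : A} (hζ : IsPrimitiveRoot ζ n) :
    IsPrimitiveRoot (φ ζ) n := by
  have hn : 0 < n := Nat.pos_of_ne_zero fun h ↦ NeZero.ne (n : k) (by rw [h, Nat.cast_zero])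
  have h := (hζ.isRoot_cyclotomic hn).map (f := φ)
  rwa [map_cyclotomic, isRoot_cyclotomic_iff] at h

/-- `ω` is a Teichmüller character with respect to `φ`: its values lift the elements of `F`, viewed
in the residue ring `k` through `ι`, along the reduction map `φ` of algebraic integers. -/
def IsTeichmuller {F k : Type*} [CommRing F] [Finite F] [CommRing k]
    (φ : integralClosure ℤ ℂ →+* k) (ι : F →+* k) (ω : MulChar F ℂ) : Prop :=
  ∀ x, reduceMulChar φ ω x = ι x

namespace IsTeichmuller

variable {F k : Type*} [Field F] [Field k] {φ : integralClosure ℤ ℂ →+* k}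
  {ι : F →+* k} {ω : MulChar F ℂ}

theorem orderOf_eq [Fintype F] (hω : IsTeichmuller φ ι ω) : orderOf ω = Fintype.card F - 1 := by
  classical
  refine Nat.dvd_antisymm (MulChar.orderOf_dvd_card_sub_one F ω) ?_
  obtain ⟨g, hg⟩ := IsCyclic.exists_generator (α := Fˣ)
  rw [← Fintype.card_units, ← Nat.card_eq_fintype_card,
    ← orderOf_eq_card_of_forall_mem_zpowers hg, orderOf_dvd_iff_pow_eq_one]
  refine Units.ext (ι.injective ?_)
  rw [Units.val_pow_eq_pow_val, map_pow, ← hω, ← MulChar.pow_apply_coe, ← reduceMulChar_pow,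
    pow_orderOf_eq_one, Units.val_one, map_one, reduceMulChar_apply]
  exact (congrArg φ (Subtype.ext (MulChar.one_apply_coe g))).trans (map_one φ)

theorem exists_eq_pow [Finite F] (hω : IsTeichmuller φ ι ω) (χ : MulChar F ℂ) :
    ∃ a : ℕ, ω ^ a = χ := by
  classical
  have := Fintype.ofFinite F
  have hcard : Nat.card (MulChar F ℂ) = orderOf ω := by
    rw [MulChar.card_eq_card_units_of_hasEnoughRootsOfUnity, hω.orderOf_eq,
      Nat.card_eq_fintype_card, Fintype.card_units]
  have htop : Subgroup.zpowers ω = ⊤ :=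
    Subgroup.eq_top_of_card_eq _ (by rw [Nat.card_zpowers, hcard])
  exact (mem_powers_iff_mem_zpowers).2 (htop ▸ Subgroup.mem_top χ)

theorem exists_isTeichmuller [Finite F] (φ : integralClosure ℤ ℂ →+* k) (ι : F →+* k) :
    ∃ ω : MulChar F ℂ, IsTeichmuller φ ι ω := by
  classical
  have := Fintype.ofFinite F
  obtain ⟨g, hg⟩ := IsCyclic.exists_generator (α := Fˣ)
  have : NeZero (Fintype.card Fˣ) := ⟨Fintype.card_ne_zero⟩
  have : NeZero ((Fintype.card Fˣ : ℕ) : k) := ⟨by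
    rw [Fintype.card_units, Nat.cast_sub Fintype.card_pos, ← map_natCast ι,
      FiniteField.cast_card_eq_zero, map_zero, Nat.cast_one, zero_sub]
    exact neg_ne_zero.2 one_ne_zero⟩
  obtain ⟨ζ, hζ⟩ : ∃ ζ : integralClosure ℤ ℂ, IsPrimitiveRoot ζ (Fintype.card Fˣ) :=
    have h := Complex.isPrimitiveRoot_exp (Fintype.card Fˣ) Fintype.card_ne_zero
    ⟨⟨_, h.isIntegral Fintype.card_pos⟩, IsPrimitiveRoot.of_map_of_injective
      (f := (integralClosure ℤ ℂ).subtype) h Subtype.val_injective⟩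
  obtain ⟨i, -, hi⟩ := (isPrimitiveRoot_map_of_neZero φ hζ).eq_pow_of_pow_eq_one (ξ := ι g) (by
    rw [← map_pow, ← Units.val_pow_eq_pow_val, pow_card_eq_one, Units.val_one, map_one])
  have hpow : (ζ ^ i : ℂ) ^ Fintype.card Fˣ = 1 := by
    rw [pow_right_comm, ← SubmonoidClass.coe_pow, hζ.pow_eq_one, OneMemClass.coe_one, one_pow]
  let ω := MulChar.ofRootOfUnity (rootsOfUnity.mkOfPowEq _ hpow).2 hg
  have hω : reduceMulChar φ ω = MulChar.ofUnitHom (Units.map ι.toMonoidHom) := by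
    rw [MulChar.eq_iff hg, MulChar.ofUnitHom_coe, reduceMulChar_apply]
    refine Eq.trans (congrArg φ (Subtype.ext ?_)) ((map_pow φ ζ i).trans hi)
    exact MulChar.ofRootOfUnity_spec _ hg
  refine ⟨ω, fun x ↦ ?_⟩
  rcases eq_or_ne x 0 with rfl | hx
  · rw [MulChar.map_zero, map_zero]
  · rw [hω]
    exact MulChar.ofUnitHom_coe _ (Units.mk0 x hx)

end IsTeichmuller

theorem sum_algebraMap_trace_mul_inv (K F : Type*) [Field K] [Finite K] [Field F] [Fintype F]
    [Algebra K F] : ∑ x : F, algebraMap K F (Algebra.trace K F x) * x⁻¹ = -1 := by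
  classical
  set q := Nat.card K
  have hq : 1 < q := Finite.one_lt_card
  have hF : Fintype.card F = q ^ Module.finrank K F := by
    rw [← Nat.card_eq_fintype_card, Module.natCard_eq_pow_finrank (K := K)]
  have hpow : ∀ i ∈ Finset.range (Module.finrank K F), i ≠ 0 →
      ∑ x : F, x ^ q ^ i * x⁻¹ = 0 := fun i hi hi0 ↦ by
    have hone := Nat.one_lt_pow hi0 hq
    rw [← FiniteField.sum_pow_lt_card_sub_one F (q ^ i - 1) (by
      have := Nat.pow_lt_pow_right hq (Finset.mem_range.1 hi)
      omega)]
    refine Finset.sum_congr rfl fun x _ ↦ ?_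
    rcases eq_or_ne x 0 with rfl | hx
    · rw [inv_zero, mul_zero, zero_pow (by omega)]
    · rw [mul_inv_eq_iff_eq_mul₀ hx, ← pow_succ, Nat.sub_add_cancel hone.le]
  simp only [FiniteField.algebraMap_trace_eq_sum_pow, Finset.sum_mul]
  rw [Finset.sum_comm,
    Finset.sum_eq_single_of_mem 0 (Finset.mem_range.2 Module.finrank_pos) hpow]
  have hone : ∀ x : F, x ^ q ^ 0 * x⁻¹ = if x = 0 then 0 else 1 := fun x ↦ by
    rw [pow_zero, pow_one]
    split_ifs with hx
    · rw [hx, zero_mul]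
    · exact mul_inv_cancel₀ hx
  simp only [hone, Finset.sum_ite, Finset.sum_const_zero, zero_add, Finset.sum_const, nsmul_one]
  rw [Finset.filter_ne', Finset.card_erase_of_mem (Finset.mem_univ _), Finset.card_univ,
    Nat.cast_sub Fintype.card_pos, FiniteField.cast_card_eq_zero, Nat.cast_one, zero_sub]

theorem ringHom_apply_eq_one_of_pow_char_eq_one {A k : Type*} [CommRing A] [CommRing k]
    [IsDomain k] {p : ℕ} [Fact p.Prime] [CharP k p] (φ : A →+* k) {ζ : A} (hζ : ζ ^ p = 1) :
    φ ζ = 1 := by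
  refine sub_eq_zero.1 (pow_eq_zero_iff (n := p) (Fact.out : p.Prime).ne_zero |>.1 ?_)
  rw [sub_pow_char, ← map_pow, hζ, map_one, one_pow, sub_self]

theorem sum_digits_succ_of_not_dvd {p n : ℕ} (hp : 1 < p) (hn : ¬ p ∣ n + 1) :
    (p.digits (n + 1)).sum = (p.digits n).sum + 1 := by
  have hdiv : (n + 1) / p = n / p := Nat.succ_div_of_not_dvd hn
  have h := Nat.mod_add_div n p
  have h' := Nat.mod_add_div (n + 1) p
  rw [hdiv] at h'
  rw [Nat.digits_def' hp (n := n + 1) n.succ_pos, hdiv, List.sum_cons]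
  rcases Nat.eq_zero_or_pos n with rfl | hn0
  · simp only [zero_add, Nat.zero_div, Nat.digits_zero, List.sum_nil, Nat.mod_eq_of_lt hp,
      add_zero]
  · rw [Nat.digits_def' hp hn0, List.sum_cons]
    omega

theorem sum_digits_mul_mod {p f N M r e : ℕ} (hp : 1 < p) (hQ : p ^ f - 1 = N * M)
    (hQpos : 0 < p ^ f - 1) (he : ∑ i ∈ Finset.range f, p ^ i * r % N = N * e) :
    (p.digits (M * (r % N))).sum = (p - 1) * e := by
  have hN : 0 < N := Nat.pos_of_mul_pos_right (hQ ▸ hQpos)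
  have hM : 0 < M := Nat.pos_of_mul_pos_left (hQ ▸ hQpos)
  have hlt : M * (r % N) < p ^ f - 1 := by
    rw [hQ, mul_comm N]
    exact Nat.mul_lt_mul_of_pos_left (Nat.mod_lt _ hN) hM
  have h := sub_one_mul_sum_pow_mul_mod hp hlt
  have hmod : ∀ i, p ^ i * (M * (r % N)) % (p ^ f - 1) = M * (p ^ i * r % N) := fun i ↦ by
    rw [hQ, mul_comm N, mul_left_comm, Nat.mul_mod_mul_left, Nat.mul_mod_mod]
  simp only [hmod, ← Finset.mul_sum, he] at h
  refine Nat.eq_of_mul_eq_mul_left hQpos (h.symm.trans ?_)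
  rw [hQ]
  ring

section Stickelberger

variable {p : ℕ} [Fact p.Prime] {F : Type*} [Field F] [Fintype F] [Algebra (ZMod p) F]
  {k : Type*} [Field k] {φ : integralClosure ℤ ℂ →+* k} {ι : F →+* k} {ω : MulChar F ℂ}
  {Γ₀ : Type*} [LinearOrderedCommGroupWithZero Γ₀] {v : Valuation ℂ Γ₀}

theorem IsTeichmuller.exists_gaussSum_inv_eq (hω : IsTeichmuller φ ι ω) (hω1 : ω⁻¹ ≠ 1) :
    ∃ w : integralClosure ℤ ℂ, φ w = -1 ∧
      gaussSum ω⁻¹ (traceChar p F) = (zetaP p - 1) * w := by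
  have hp : p.Prime := Fact.out
  have hζ := zetaP_isPrimitiveRoot hp.ne_zero
  let ζ : integralClosure ℤ ℂ := ⟨zetaP p, hζ.isIntegral hp.pos⟩
  have : CharP F p := charP_of_injective_algebraMap (algebraMap (ZMod p) F).injective p
  have : CharP k p := charP_of_injective_ringHom ι.injective p
  have hφζ : φ ζ = 1 := ringHom_apply_eq_one_of_pow_char_eq_one φ (Subtype.ext hζ.pow_eq_one)
  let t : F → ℕ := fun x ↦ (Algebra.trace (ZMod p) F x).val
  let w : integralClosure ℤ ℂ :=
    ∑ x, ⟨ω⁻¹ x, isIntegral_mulChar_apply _ x⟩ * ∑ j ∈ Finset.range (t x), ζ ^ j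
  refine ⟨w, ?_, ?_⟩
  · rw [← map_one ι, ← map_neg, ← sum_algebraMap_trace_mul_inv (ZMod p) F, map_sum, map_sum]
    refine Finset.sum_congr rfl fun x _ ↦ ?_
    have hx : (⟨ω⁻¹ x, isIntegral_mulChar_apply _ x⟩ : integralClosure ℤ ℂ) =
        ⟨ω x⁻¹, isIntegral_mulChar_apply _ _⟩ := Subtype.ext (MulChar.inv_apply' ω x)
    rw [hx, map_mul, map_sum, ← reduceMulChar_apply, hω]
    simp only [map_pow, hφζ, one_pow, Finset.sum_const, Finset.card_range, nsmul_one]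
    rw [map_mul, mul_comm, ← map_natCast ι, ← map_natCast (algebraMap (ZMod p) F),
      ZMod.natCast_zmod_val]
  · have hsum : ∑ x, ω⁻¹ x = 0 := MulChar.sum_eq_zero_of_ne_one hω1
    rw [gaussSum, ← sub_zero (∑ x, _), ← hsum, ← Finset.sum_sub_distrib]
    push_cast [w, ζ]
    rw [Finset.mul_sum]
    refine Finset.sum_congr rfl fun x _ ↦ ?_
    rw [mul_left_comm, mul_geom_sum, traceChar_apply, mul_sub, mul_one]

theorem IsTeichmuller.valuation_le_gaussSum_inv (hω : IsTeichmuller φ ι ω)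
    (hv : ∀ a, φ a = 0 → v a < 1) :
    v (zetaP p - 1) ≤ v (gaussSum ω⁻¹ (traceChar p F)) := by
  have hp : p.Prime := Fact.out
  rcases eq_or_ne ω⁻¹ 1 with hω1 | hω1
  · rw [hω1, gaussSum_one_left traceChar_ne_one, Valuation.map_neg, map_one]
    exact valuation_le_one_of_isIntegral v
      (((zetaP_isPrimitiveRoot hp.ne_zero).isIntegral hp.pos).sub isIntegral_one)
  · obtain ⟨w, hw, hG⟩ := hω.exists_gaussSum_inv_eq (p := p) hω1
    have hw1 : v (w + 1) < 1 := hv (w + 1) (by rw [map_add, hw, map_one, neg_add_cancel])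
    have hvw : v w = 1 := by
      have h := Valuation.map_sub_eq_of_lt_right v (x := (w : ℂ) + 1) (y := 1) (by rwa [map_one])
      rwa [add_sub_cancel_right, map_one] at h
    rw [hG, map_mul, hvw, mul_one]

theorem valuation_pow_sum_digits_le_gaussSum {χ : MulChar F ℂ} {c : Γ₀}
    (hc : c ≤ v (gaussSum χ (traceChar p F))) {n : ℕ} (hn : n < orderOf χ) :
    c ^ (p.digits n).sum ≤ v (gaussSum (χ ^ n) (traceChar p F)) := by
  have hp : p.Prime := Fact.out
  induction n using Nat.strong_induction_on with
  | _ n ih =>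
    rcases Nat.eq_zero_or_pos n with rfl | hn0
    · rw [pow_zero, gaussSum_one_left traceChar_ne_one, Valuation.map_neg, map_one,
        Nat.digits_zero, List.sum_nil, pow_zero]
    by_cases hdvd : p ∣ n
    · obtain ⟨m, rfl⟩ := hdvd
      have hm : 0 < m := Nat.pos_of_mul_pos_left hn0
      have hlt : m < p * m := lt_mul_of_one_lt_left hm hp.one_lt
      have hfrob := gaussSum_pow_char_pow (p := p) (χ ^ m) 1
      rw [pow_one, ← pow_mul, mul_comm m] at hfrob
      rw [hfrob, Nat.digits_base_mul hp.one_lt hm, List.sum_cons, zero_add]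
      exact ih m hlt (hlt.trans hn)
    · obtain ⟨m, rfl⟩ := Nat.exists_eq_add_one_of_ne_zero hn0.ne'
      have hχ : χ ^ m * χ ≠ 1 := by
        rw [← pow_succ]
        exact fun h ↦ (Nat.le_of_dvd hn0 (orderOf_dvd_of_pow_eq_one h)).not_gt hn
      have hJ := congrArg v (jacobiSum_mul_nontrivial hχ (traceChar p F))
      rw [map_mul, map_mul, ← pow_succ] at hJ
      rw [sum_digits_succ_of_not_dvd hp.one_lt hdvd, pow_succ]
      calc c ^ (p.digits m).sum * c
          ≤ v (gaussSum (χ ^ m) (traceChar p F)) * v (gaussSum χ (traceChar p F)) :=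
            mul_le_mul' (ih m m.lt_succ_self (m.lt_succ_self.trans hn)) hc
        _ = v (gaussSum (χ ^ (m + 1)) (traceChar p F)) * v (jacobiSum (χ ^ m) χ) := hJ.symm
        _ ≤ v (gaussSum (χ ^ (m + 1)) (traceChar p F)) :=
            mul_le_of_le_one_right' (valuation_le_one_of_isIntegral v (isIntegral_jacobiSum _ _))

theorem exists_forall_pow_pow_eq_of_orderOf_pos {G : Type*} [LeftCancelMonoid G] {x : G}
    (hx : 0 < orderOf x) (a : ℕ) : ∃ k M : ℕ, orderOf x = orderOf (x ^ a) * M ∧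
      k.Coprime (orderOf (x ^ a)) ∧ ∀ m : ℕ, (x ^ a) ^ m = x ^ (M * (k * m % orderOf (x ^ a))) := by
  have hord : orderOf (x ^ a) = orderOf x / (orderOf x).gcd a :=
    IsOfFinOrder.orderOf_pow _ _ (orderOf_pos_iff.1 hx)
  set M := (orderOf x).gcd a
  have hQ : orderOf x = orderOf (x ^ a) * M := by
    rw [hord, Nat.div_mul_cancel (Nat.gcd_dvd_left _ _)]
  refine ⟨a / M, M, hQ,
    hord ▸ (Nat.coprime_div_gcd_div_gcd (Nat.gcd_pos_of_pos_left _ hx)).symm, fun m ↦ ?_⟩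
  rw [← pow_mul, pow_eq_pow_iff_modEq, hQ, mul_comm _ M]
  have haM : a * m = M * (a / M * m) := by
    rw [← mul_assoc, Nat.mul_div_cancel' (Nat.gcd_dvd_right _ _)]
  exact haM ▸ (Nat.mod_modEq _ _).symm.mul_left' M

theorem exists_valuation_pow_le_gaussSum {f : ℕ} (hf : Fintype.card F = p ^ f)
    (χ : MulChar F ℂ) :
    ∃ V : ValuationSubring ℂ, V.valuation (p : ℂ) < 1 ∧ ∃ k : ℕ, k.Coprime (orderOf χ) ∧
      ∀ m e : ℕ, stickelbergerSum p (orderOf χ) f (k * m) = orderOf χ * e →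
        V.valuation (p : ℂ) ^ e ≤ V.valuation (gaussSum (χ ^ m) (traceChar p F)) := by
  have hp : p.Prime := Fact.out
  obtain ⟨k, _, _, _, ⟨φ⟩⟩ := exists_integralClosure_ringHom p
  have : Algebra (ZMod p) k := ZMod.algebra k p
  let ι : F →+* k := (IsAlgClosed.lift : F →ₐ[ZMod p] k).toRingHom
  obtain ⟨V, hV⟩ := exists_valuationSubring_of_ringHom (A := (integralClosure ℤ ℂ).toSubring) φ
  obtain ⟨ω, hω⟩ := IsTeichmuller.exists_isTeichmuller φ ι
  refine ⟨V, hV p (by rw [map_natCast, CharP.cast_eq_zero]), ?_⟩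
  obtain ⟨a, ha⟩ := hω.exists_eq_pow χ⁻¹
  have hχ : χ = ω⁻¹ ^ a := by rw [inv_pow, ha, inv_inv]
  have hordω : orderOf ω⁻¹ = p ^ f - 1 := by rw [orderOf_inv, hω.orderOf_eq, hf]
  have hordω0 : 0 < orderOf ω⁻¹ := MulChar.orderOf_pos _
  obtain ⟨k, M, hQ, hk, hpow⟩ := exists_forall_pow_pow_eq_of_orderOf_pos hordω0 a
  rw [← hχ] at hQ hk hpow
  have hM : 0 < M := Nat.pos_of_mul_pos_left (hQ ▸ hordω0)
  refine ⟨k, hk, fun m e he ↦ ?_⟩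
  have hlt : M * (k * m % orderOf χ) < orderOf ω⁻¹ := by
    rw [hQ, mul_comm _ M]
    exact Nat.mul_lt_mul_of_pos_left (Nat.mod_lt _ χ.orderOf_pos) hM
  have hle := valuation_pow_sum_digits_le_gaussSum (p := p) (hω.valuation_le_gaussSum_inv hV) hlt
  rw [hordω] at hQ hordω0
  rwa [sum_digits_mul_mod hp.one_lt hQ hordω0 he, pow_mul,
    ← valuation_prime_eq_pow V.valuation (zetaP_isPrimitiveRoot hp.ne_zero), ← hpow] at hle

end Stickelberger

/-! ### Stickelberger sums when `p` generates a subgroup of index two -/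

section StickelbergerSum

variable {p N f : ℕ}

theorem dvd_stickelbergerSum (hp : IsCoprime ((p : ℤ) - 1) N) (hf : (p : ZMod N) ^ f = 1)
    (a : ℕ) : N ∣ stickelbergerSum p N f a := by
  have hgeom : ∑ i ∈ Finset.range f, (p : ZMod N) ^ i = 0 := by
    obtain ⟨u, v, huv⟩ := hp
    have hunit : (u : ZMod N) * (p - 1) = 1 := by
      simpa using congrArg (Int.cast (R := ZMod N)) huv
    have h := mul_geom_sum (p : ZMod N) f
    rw [hf, sub_self] at h
    rw [← one_mul (∑ i ∈ _, _), ← hunit, mul_assoc, h, mul_zero]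
  rw [← ZMod.natCast_eq_zero_iff, stickelbergerSum, Nat.cast_sum]
  simp only [ZMod.natCast_mod, Nat.cast_mul, Nat.cast_pow]
  rw [← Finset.sum_mul, hgeom, zero_mul]

theorem mod_add_sub_one_mul_mod {a : ℕ} (hN : 0 < N) (ha : ¬ N ∣ a) :
    a % N + (N - 1) * a % N = N := by
  have hdvd : N ∣ a % N + (N - 1) * a % N := by
    rw [Nat.dvd_iff_mod_eq_zero, ← Nat.add_mod, ← one_add_mul,
      Nat.add_sub_cancel' (Nat.one_le_of_lt hN), Nat.mul_mod_right]
  have : 0 < a % N := Nat.emod_pos_of_not_dvd ha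
  have hlt := Nat.mod_lt a hN
  have hlt' := Nat.mod_lt ((N - 1) * a) hN
  exact Nat.eq_of_dvd_of_lt_two_mul (by omega) hdvd (by omega)

theorem stickelbergerSum_add_stickelbergerSum_neg (hp : p.Coprime N) (hN : 0 < N) {a : ℕ}
    (ha : ¬ N ∣ a) :
    stickelbergerSum p N f a + stickelbergerSum p N f ((N - 1) * a) = N * f := by
  have hterm (i : ℕ) : p ^ i * a % N + p ^ i * ((N - 1) * a) % N = N := by
    rw [mul_left_comm]
    exact mod_add_sub_one_mul_mod hN fun h ↦
      ha ((Nat.Coprime.pow_right i hp.symm).dvd_of_dvd_mul_left h)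
  rw [stickelbergerSum, stickelbergerSum, ← Finset.sum_add_distrib,
    Finset.sum_congr rfl fun i _ ↦ hterm i, Finset.sum_const, Finset.card_range, smul_eq_mul,
    mul_comm]

end StickelbergerSum

section JacobiSymSums

theorem sum_range_mul_eq {M : Type*} [AddCommMonoid M] (g : ℕ → M) (a b : ℕ) :
    ∑ x ∈ Finset.range (a * b), g x =
      ∑ q ∈ Finset.range b, ∑ y ∈ Finset.range a, g (a * q + y) := by
  induction b with
  | zero => simp
  | succ b ih => rw [mul_add_one, Finset.sum_range_add, ih, Finset.sum_range_succ]

theorem jacobiSym_mul_add {D a : ℕ} (h : D ∣ a) (q y : ℕ) :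
    jacobiSym (a * q + y : ℕ) D = jacobiSym y D := by
  obtain ⟨s, rfl⟩ := h
  apply jacobiSym.mod_left'
  push_cast
  rw [mul_assoc, Int.mul_add_emod_self_left]

variable {D : ℕ}

theorem sum_range_jacobiSym (hD : D % 4 = 3) : ∑ y ∈ Finset.range D, jacobiSym y D = 0 := by
  have : NeZero D := ⟨by omega⟩
  have h := MulChar.sum_eq_zero_of_ne_one (jacobiChar_ne_one hD)
  rw [sum_zmod_eq_sum_range] at h
  simpa only [jacobiChar_natCast] using h

theorem sum_range_mul_jacobiSym (hD : D % 4 = 3) (s : ℕ) :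
    ∑ x ∈ Finset.range (D * s), (x : ℤ) * jacobiSym x D =
      s * ∑ k ∈ Finset.range D, (k : ℤ) * jacobiSym k D := by
  have hblock (q : ℕ) : ∑ y ∈ Finset.range D, ((D * q + y : ℕ) : ℤ) * jacobiSym (D * q + y : ℕ) D =
      ∑ k ∈ Finset.range D, (k : ℤ) * jacobiSym k D := by
    simp only [jacobiSym_mul_add dvd_rfl]
    simp only [Nat.cast_add, Nat.cast_mul, add_mul]
    rw [Finset.sum_add_distrib, ← Finset.mul_sum, sum_range_jacobiSym hD, mul_zero, zero_add]
  rw [sum_range_mul_eq, Finset.sum_congr rfl fun q _ ↦ hblock q, Finset.sum_const,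
    Finset.card_range, nsmul_eq_mul]

theorem sum_range_jacobiSym_mul_mod (hD : D % 4 = 3) (m s : ℕ) :
    ∑ x ∈ Finset.range (D * s * m), jacobiSym x D * (m * x % (D * s * m) : ℕ) =
      m ^ 2 * s * ∑ k ∈ Finset.range D, (k : ℤ) * jacobiSym k D := by
  have hblock (q : ℕ) : ∑ y ∈ Finset.range (D * s), jacobiSym (D * s * q + y : ℕ) D *
      (m * (D * s * q + y) % (D * s * m) : ℕ) =
        m * (s * ∑ k ∈ Finset.range D, (k : ℤ) * jacobiSym k D) := by
    rw [← sum_range_mul_jacobiSym hD, Finset.mul_sum]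
    refine Finset.sum_congr rfl fun y hy ↦ ?_
    rw [jacobiSym_mul_add (dvd_mul_right D s), mul_comm (D * s) m, Nat.mul_mod_mul_left,
      Nat.mul_add_mod, Nat.mod_eq_of_lt (Finset.mem_range.1 hy)]
    push_cast
    ring
  rw [sum_range_mul_eq, Finset.sum_congr rfl fun q _ ↦ hblock q, Finset.sum_const,
    Finset.card_range, nsmul_eq_mul]
  ring

end JacobiSymSums

/-- The arithmetic situation in which Gauss sums of order `N` lie in `ℚ(√-D)`: the prime `p` has
order `f = φ(N) / 2` modulo `N`, and the subgroup of index two that it generates in `(ℤ/N)ˣ` is the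
kernel of the Jacobi symbol modulo `D`, where `D ≡ 3 (mod 4)` is squarefree with the same prime
divisors as `N`. That `p - 1` is prime to `N` makes characters of order `N` trivial on `𝔽_p`. -/
structure QuadraticIndexTwo (p N D f : ℕ) : Prop where
  prime : p.Prime
  coprime : p.Coprime N
  isCoprime_sub_one : IsCoprime ((p : ℤ) - 1) N
  squarefree : Squarefree D
  mod_four : D % 4 = 3
  three_lt : 3 < D
  dvd : D ∣ N
  pos : 0 < N
  dvd_of_prime_dvd : ∀ l : ℕ, l.Prime → l ∣ N → l ∣ D
  jacobiSym_eq_one : jacobiSym p D = 1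
  orderOf_eq : orderOf (p : ZMod N) = f
  two_mul_eq : 2 * f = N.totient

namespace QuadraticIndexTwo

variable {p N D f : ℕ} (h : QuadraticIndexTwo p N D f)

include h

theorem neZero_left : NeZero N := ⟨h.pos.ne'⟩

theorem neZero_right : NeZero D := ⟨h.squarefree.ne_zero⟩

theorem odd : Odd D := Nat.odd_iff.2 (by have := h.mod_four; omega)

theorem pow_eq_one : (p : ZMod N) ^ f = 1 := h.orderOf_eq ▸ pow_orderOf_eq_one _

theorem coprime_of_coprime {a : ℕ} (ha : a.Coprime D) : a.Coprime N :=
  Nat.coprime_of_dvd fun l hl hla hlN ↦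
    Nat.not_coprime_of_dvd_of_dvd hl.one_lt hla (h.dvd_of_prime_dvd l hl hlN) ha

section

variable [NeZero D]

theorem jacobiChar_pow (i : ℕ) : jacobiChar D (ZMod.castHom h.dvd (ZMod D) (p ^ i)) = 1 := by
  rw [map_pow, map_natCast, map_pow, jacobiChar_natCast, h.jacobiSym_eq_one, one_pow]

theorem jacobiChar_neg_pow (i : ℕ) :
    jacobiChar D (ZMod.castHom h.dvd (ZMod D) (-p ^ i)) = -1 := by
  rw [map_neg, jacobiChar_neg h.mod_four, h.jacobiChar_pow]

variable [NeZero N]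

theorem bijective_pow_or_neg_pow :
    Function.Bijective (Sum.elim (fun i : Fin f ↦ ZMod.unitOfCoprime p h.coprime ^ (i : ℕ))
      (fun i : Fin f ↦ -ZMod.unitOfCoprime p h.coprime ^ (i : ℕ))) := by
  set u := ZMod.unitOfCoprime p h.coprime
  have hval (i : ℕ) : ((u ^ i : (ZMod N)ˣ) : ZMod N) = p ^ i := by
    rw [Units.val_pow_eq_pow_val, ZMod.coe_unitOfCoprime]
  have hord : orderOf u = f := by rw [← orderOf_units, ZMod.coe_unitOfCoprime, h.orderOf_eq]
  have hinj : Function.Injective fun i : Fin f ↦ u ^ (i : ℕ) := fun i j hij ↦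
    Fin.ext (pow_injOn_Iio_orderOf (i.2.trans_eq hord.symm) (j.2.trans_eq hord.symm) hij)
  have hne (i j : Fin f) : u ^ (i : ℕ) ≠ -u ^ (j : ℕ) := fun hij ↦ by
    have hcast := congrArg (Units.val : (ZMod N)ˣ → ZMod N) hij
    rw [Units.val_neg, hval, hval] at hcast
    have hjac := h.jacobiChar_pow i
    rw [hcast, h.jacobiChar_neg_pow] at hjac
    omega
  refine (Fintype.bijective_iff_injective_and_card _).2
    ⟨hinj.sumElim (neg_injective.comp hinj) hne, ?_⟩
  rw [Fintype.card_sum, Fintype.card_fin, ← two_mul, h.two_mul_eq, ZMod.card_units_eq_totient]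

theorem sum_units {M : Type*} [AddCommMonoid M] (g : ZMod N → M) :
    ∑ u : (ZMod N)ˣ, g u =
      ∑ i ∈ Finset.range f, g (p ^ i) + ∑ i ∈ Finset.range f, g (-p ^ i) := by
  rw [← h.bijective_pow_or_neg_pow.sum_comp, Fintype.sum_sum_type,
    ← Fin.sum_univ_eq_sum_range (fun i ↦ g (p ^ i)),
    ← Fin.sum_univ_eq_sum_range (fun i ↦ g (-p ^ i))]
  simp only [Sum.elim_inl, Sum.elim_inr, Units.val_neg, Units.val_pow_eq_pow_val,
    ZMod.coe_unitOfCoprime]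

end

theorem eq_pow_or_eq_neg_pow {a : ℕ} (ha : a.Coprime N) :
    (jacobiSym a D = 1 ∧ ∃ i, (a : ZMod N) = p ^ i) ∨
      (jacobiSym a D = -1 ∧ ∃ i, (a : ZMod N) = -p ^ i) := by
  have := h.neZero_left
  have := h.neZero_right
  have hjac : jacobiSym a D = jacobiChar D (ZMod.castHom h.dvd (ZMod D) a) := by
    rw [map_natCast, jacobiChar_natCast]
  obtain ⟨i | i, hi⟩ := h.bijective_pow_or_neg_pow.surjective (ZMod.unitOfCoprime a ha)
  all_goals
    have hval := congrArg (Units.val : (ZMod N)ˣ → ZMod N) hi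
    simp only [Sum.elim_inl, Sum.elim_inr, Units.val_neg, Units.val_pow_eq_pow_val,
      ZMod.coe_unitOfCoprime] at hval
  · exact .inl ⟨by rw [hjac, ← hval, h.jacobiChar_pow], i, hval.symm⟩
  · exact .inr ⟨by rw [hjac, ← hval, h.jacobiChar_neg_pow], i, hval.symm⟩

theorem sum_units_jacobiChar_mul_val [NeZero N] [NeZero D] (m : ℕ) :
    ∑ u : (ZMod N)ˣ, jacobiChar D (ZMod.castHom h.dvd (ZMod D) u) * ((m * u : ZMod N).val : ℤ) =
      ∑ x ∈ Finset.range N, jacobiSym x D * (m * x % N : ℕ) := by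
  have hall : ∑ u : (ZMod N)ˣ,
      jacobiChar D (ZMod.castHom h.dvd (ZMod D) u) * ((m * u : ZMod N).val : ℤ) =
        ∑ x : ZMod N,
          jacobiChar D (ZMod.castHom h.dvd (ZMod D) x) * ((m * x : ZMod N).val : ℤ) := by
    refine Finset.sum_of_injOn Units.val Units.val_injective.injOn (fun _ _ ↦ Finset.mem_univ _)
      (fun x _ hx ↦ ?_) fun _ _ ↦ rfl
    obtain ⟨n, rfl⟩ := ZMod.natCast_zmod_surjective x
    rw [map_natCast, MulChar.map_nonunit, zero_mul]
    rw [ZMod.isUnit_iff_coprime]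
    exact fun hn ↦ hx ⟨ZMod.unitOfCoprime n (h.coprime_of_coprime hn), by simp⟩
  rw [hall, sum_zmod_eq_sum_range]
  simp only [map_natCast, jacobiChar_natCast, ← Nat.cast_mul, ZMod.val_natCast]

theorem jacobiSym_mul_self {k : ℕ} (hk : k.Coprime N) : jacobiSym k D * jacobiSym k D = 1 := by
  rcases h.eq_pow_or_eq_neg_pow hk with ⟨hj, -⟩ | ⟨hj, -⟩ <;> rw [hj] <;> norm_num

theorem stickelbergerSum_sub_stickelbergerSum_neg {k : ℕ} (hk : k.Coprime N) (m : ℕ) :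
    (stickelbergerSum p N f (k * m) : ℤ) - stickelbergerSum p N f ((N - 1) * (k * m)) =
      jacobiSym k D * ∑ x ∈ Finset.range N, jacobiSym x D * (m * x % N : ℕ) := by
  have := h.neZero_left
  have := h.neZero_right
  let J (x : ZMod N) : ℤ := jacobiChar D (ZMod.castHom h.dvd (ZMod D) x)
  have hsplit : (stickelbergerSum p N f (k * m) : ℤ) - stickelbergerSum p N f ((N - 1) * (k * m)) =
      ∑ u : (ZMod N)ˣ, J u * ((m * (k * u) : ZMod N).val : ℤ) := by
    rw [h.sum_units (fun x ↦ J x * ((m * (k * x) : ZMod N).val : ℤ)), sub_eq_add_neg,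
      stickelbergerSum, stickelbergerSum, Nat.cast_sum, Nat.cast_sum, ← Finset.sum_neg_distrib]
    simp only [J, h.jacobiChar_pow, h.jacobiChar_neg_pow, ← ZMod.val_natCast, one_mul,
      neg_one_mul]
    congr! 5 with i _ i _
    · push_cast
      ring
    · push_cast [Nat.cast_sub h.pos, ZMod.natCast_self]
      ring
  have htwist : jacobiSym k D * ∑ u : (ZMod N)ˣ, J u * ((m * (k * u) : ZMod N).val : ℤ) =
      ∑ u : (ZMod N)ˣ, J u * ((m * u : ZMod N).val : ℤ) := by
    rw [← Equiv.sum_comp (Equiv.mulLeft (ZMod.unitOfCoprime k hk))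
      (fun u : (ZMod N)ˣ ↦ J u * ((m * u : ZMod N).val : ℤ)), Finset.mul_sum]
    refine Finset.sum_congr rfl fun u _ ↦ ?_
    simp only [J, Equiv.coe_mulLeft, Units.val_mul, ZMod.coe_unitOfCoprime, map_mul, map_natCast,
      jacobiChar_natCast]
    ring
  rw [← h.sum_units_jacobiChar_mul_val, ← htwist, ← mul_assoc (jacobiSym k D),
    h.jacobiSym_mul_self hk, one_mul, hsplit]

theorem not_dvd_of_mul_dvd {m : ℕ} (hm : m * D ∣ N) : ¬ N ∣ m := fun hNm ↦ by
  have hm0 : 0 < m := Nat.pos_of_dvd_of_pos ((dvd_mul_right m D).trans hm) h.pos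
  have hle := Nat.le_of_dvd hm0 (hm.trans hNm)
  have hlt := (Nat.mul_lt_mul_left hm0).2 h.three_lt
  omega

theorem sum_range_jacobiSym_mul_mod {m : ℕ} (hm : m * D ∣ N) :
    (D : ℤ) * ∑ x ∈ Finset.range N, jacobiSym x D * (m * x % N : ℕ) =
      N * (m * ∑ k ∈ Finset.range D, (k : ℤ) * jacobiSym k D) := by
  obtain ⟨s, rfl⟩ := hm
  rw [show m * D * s = D * s * m by ring, _root_.sum_range_jacobiSym_mul_mod h.mod_four]
  push_cast
  ring

theorem exists_stickelbergerSum_eq {k : ℕ} (hk : k.Coprime N) :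
    ∃ ε : ℤ, (ε = 1 ∨ ε = -1) ∧ ∀ m : ℕ, m * D ∣ N → ∃ e e' : ℕ,
      stickelbergerSum p N f (k * m) = N * e ∧
      stickelbergerSum p N f (k * ((N - 1) * m)) = N * e' ∧
      e + e' = f ∧ (e : ℤ) - e' = ε * (m * classNumSqrtNeg D) := by
  have hN : (N : ℤ) ≠ 0 := mod_cast h.pos.ne'
  have hD : (D : ℤ) ≠ 0 := mod_cast h.squarefree.ne_zero
  have hclass := mul_classNumSqrtNeg_eq_abs_sum h.mod_four h.squarefree h.three_lt
  set S := ∑ k ∈ Finset.range D, (k : ℤ) * jacobiSym k D with hS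
  obtain ⟨δ, hδ, hSδ⟩ : ∃ δ : ℤ, (δ = 1 ∨ δ = -1) ∧ S = δ * (D * classNumSqrtNeg D) := by
    rcases abs_choice S with habs | habs
    · exact ⟨1, .inl rfl, by rw [hclass, habs, one_mul]⟩
    · exact ⟨-1, .inr rfl, by rw [hclass, habs, neg_one_mul, neg_neg]⟩
  refine ⟨jacobiSym k D * δ, ?_, fun m hm ↦ ?_⟩
  · rcases h.eq_pow_or_eq_neg_pow hk with ⟨hj, -⟩ | ⟨hj, -⟩ <;> rcases hδ with rfl | rfl <;>
      simp [hj]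
  obtain ⟨e, he⟩ := dvd_stickelbergerSum h.isCoprime_sub_one h.pow_eq_one (k * m)
  obtain ⟨e', he'⟩ := dvd_stickelbergerSum h.isCoprime_sub_one h.pow_eq_one ((N - 1) * (k * m))
  have hadd := stickelbergerSum_add_stickelbergerSum_neg (f := f) h.coprime h.pos (a := k * m)
    fun hdvd ↦ h.not_dvd_of_mul_dvd hm (hk.symm.dvd_of_dvd_mul_left hdvd)
  have hsub := h.stickelbergerSum_sub_stickelbergerSum_neg hk m
  have hsum := h.sum_range_jacobiSym_mul_mod hm
  rw [← hS, hSδ] at hsum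
  rw [he, he'] at hadd hsub
  refine ⟨e, e', he, by rw [mul_left_comm, he'], ?_, ?_⟩
  · exact Nat.eq_of_mul_eq_mul_left h.pos (by rw [mul_add, hadd])
  · refine mul_left_cancel₀ (mul_ne_zero hD hN) ?_
    rw [Nat.cast_mul, Nat.cast_mul] at hsub
    linear_combination (D : ℤ) * hsub + jacobiSym k D * hsum

end QuadraticIndexTwo

/-! ### Gauss sums in the imaginary quadratic field -/

theorem exists_rat_eq_of_forall_aeval_primitiveRoots {N : ℕ} (hN : 0 < N) {P : ℚ[X]} {z : ℂ}
    (h : ∀ μ ∈ primitiveRoots N ℂ, aeval μ P = z) : ∃ q : ℚ, z = q := by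
  have hmonic := cyclotomic.monic N ℚ
  set Q : ℂ[X] := (P %ₘ cyclotomic N ℚ).map (algebraMap ℚ ℂ)
  have hQ : Q - C z = 0 := by
    refine eq_zero_of_degree_lt_of_eval_finset_eq_zero (primitiveRoots N ℂ) ?_ fun μ hμ ↦ ?_
    · rw [Complex.card_primitiveRoots]
      have hdeg := degree_modByMonic_lt P hmonic
      rw [degree_cyclotomic] at hdeg
      refine (degree_sub_le _ _).trans_lt (max_lt ((degree_map_le).trans_lt hdeg) ?_)
      exact degree_C_le.trans_lt (mod_cast Nat.totient_pos.2 hN)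
    · have hroot : aeval μ (cyclotomic N ℚ) = 0 := by
        rw [aeval_def, eval₂_eq_eval_map, map_cyclotomic]
        exact IsPrimitiveRoot.isRoot_cyclotomic hN ((mem_primitiveRoots hN).1 hμ)
      rw [eval_sub, eval_C, eval_map_algebraMap, aeval_modByMonic_eq_self_of_root hroot, h μ hμ,
        sub_self]
  refine ⟨(P %ₘ cyclotomic N ℚ).coeff 0, ?_⟩
  rw [sub_eq_zero] at hQ
  rw [← coeff_C_zero (a := z), ← hQ, coeff_map, eq_ratCast]

theorem mulChar_pow_algebraMap_eq_one {k F R : Type*} [Field k] [Field F] [Algebra k F]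
    [CommRing R] {χ : MulChar F R} (hχ : ∀ a : k, a ≠ 0 → χ (algebraMap k F a) = 1) (n : ℕ) {a : k}
    (ha : a ≠ 0) : (χ ^ n) (algebraMap k F a) = 1 := by
  have ha' : algebraMap k F a ≠ 0 := (_root_.map_ne_zero _).2 ha
  rw [← Units.val_mk0 ha', MulChar.pow_apply_coe, Units.val_mk0, hχ a ha, one_pow]

section TraceZero

variable {p : ℕ} [Fact p.Prime] {F : Type*} [Field F] [Fintype F] [Algebra (ZMod p) F]
  {χ : MulChar F ℂ}

theorem sum_mul_traceChar_smul (hχ : ∀ a : ZMod p, a ≠ 0 → χ (algebraMap (ZMod p) F a) = 1)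
    {a : ZMod p} (ha : a ≠ 0) :
    ∑ x : F, χ x * traceChar p F (a • x) = gaussSum χ (traceChar p F) := by
  have ha' : algebraMap (ZMod p) F a ≠ 0 := (_root_.map_ne_zero _).2 ha
  refine (Finset.sum_congr rfl fun x _ ↦ ?_).trans
    (Equiv.sum_comp (Equiv.mulLeft₀ _ ha') fun x ↦ χ x * traceChar p F x)
  rw [show Equiv.mulLeft₀ _ ha' x = algebraMap (ZMod p) F a * x from rfl, map_mul, hχ a ha, one_mul,
    Algebra.smul_def]

theorem sub_one_mul_gaussSum_eq_sum_trace_eq_zero (h1 : χ ≠ 1)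
    (hχ : ∀ a : ZMod p, a ≠ 0 → χ (algebraMap (ZMod p) F a) = 1) :
    ((p : ℂ) - 1) * gaussSum χ (traceChar p F) =
      p * ∑ x : F, if Algebra.trace (ZMod p) F x = 0 then χ x else 0 := by
  have hp : p.Prime := Fact.out
  have hzero : ∑ x : F, χ x * traceChar p F ((0 : ZMod p) • x) = 0 := by
    simp only [zero_smul, AddChar.map_zero_eq_one, mul_one, MulChar.sum_eq_zero_of_ne_one h1]
  calc ((p : ℂ) - 1) * gaussSum χ (traceChar p F)
      = ∑ a : ZMod p, ∑ x : F, χ x * traceChar p F (a • x) := by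
        rw [← Finset.sum_erase_add _ _ (Finset.mem_univ (0 : ZMod p)), hzero, add_zero,
          Finset.sum_congr rfl fun a ha ↦ sum_mul_traceChar_smul hχ (Finset.ne_of_mem_erase ha),
          Finset.sum_const, Finset.card_erase_of_mem (Finset.mem_univ _), Finset.card_univ,
          ZMod.card, nsmul_eq_mul, Nat.cast_sub hp.one_le, Nat.cast_one]
    _ = p * ∑ x : F, if Algebra.trace (ZMod p) F x = 0 then χ x else 0 := by
        rw [Finset.sum_comm, Finset.mul_sum]
        refine Finset.sum_congr rfl fun x _ ↦ ?_
        rw [← Finset.mul_sum, sum_traceChar_smul, mul_ite, mul_ite, mul_zero, mul_zero, mul_comm]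

theorem exists_aeval_eq_gaussSum {N : ℕ} [NeZero N] {z : ℂ} (hz : IsPrimitiveRoot z N)
    (hχN : χ ^ N = 1) (hχ : ∀ a : ZMod p, a ≠ 0 → χ (algebraMap (ZMod p) F a) = 1) :
    ∃ P : ℚ[X], ∀ a : ℕ, χ ^ a ≠ 1 → aeval (z ^ a) P = gaussSum (χ ^ a) (traceChar p F) := by
  classical
  have hp : p.Prime := Fact.out
  choose! d hd using fun (x : F) (hx : x ≠ 0) ↦ MulChar.exists_apply_eq_pow hχN hz hx
  have hterm (a : ℕ) (x : F) : aeval (z ^ a) (if Algebra.trace (ZMod p) F x = 0 ∧ x ≠ 0 then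
      (X : ℚ[X]) ^ d x else 0) = if Algebra.trace (ZMod p) F x = 0 then (χ ^ a) x else 0 := by
    rcases eq_or_ne x 0 with rfl | hx
    · simp only [ne_eq, not_true_eq_false, and_false, if_false, map_zero, MulChar.map_zero,
        ite_self]
    · rw [← Units.val_mk0 hx, MulChar.pow_apply_coe, Units.val_mk0, (hd x hx).2]
      split_ifs <;> simp_all [← pow_mul, mul_comm]
  refine ⟨C ((p : ℚ) / (p - 1)) * ∑ x : F,
    if Algebra.trace (ZMod p) F x = 0 ∧ x ≠ 0 then X ^ d x else 0, fun a ha ↦ ?_⟩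
  have hp1 : (p : ℂ) - 1 ≠ 0 := sub_ne_zero.2 (mod_cast hp.one_lt.ne')
  rw [map_mul, map_sum, Finset.sum_congr rfl fun x _ ↦ hterm a x, aeval_C, eq_ratCast,
    Rat.cast_div, Rat.cast_sub, Rat.cast_natCast, Rat.cast_one, div_mul_eq_mul_div,
    ← sub_one_mul_gaussSum_eq_sum_trace_eq_zero ha fun _ ↦ mulChar_pow_algebraMap_eq_one hχ a,
    mul_div_cancel_left₀ _ hp1]

end TraceZero

theorem exists_aeval_eq_jacobiSym_mul_gaussSum {N D : ℕ} [NeZero N] [NeZero D] (hsq : Squarefree D)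
    (hodd : Odd D) (hD : D ∣ N) : ∃ T : ℚ[X], ∀ a : ℕ,
      aeval (Complex.exp (2 * Real.pi * I / N) ^ a) T =
        jacobiSym a D * gaussSum (complexJacobiChar D) ZMod.stdAddChar := by
  obtain ⟨M, rfl⟩ := hD
  refine ⟨∑ y ∈ Finset.range D, C (jacobiSym y D : ℚ) * X ^ (M * y), fun a ↦ ?_⟩
  have hexp (y : ℕ) : (Complex.exp (2 * Real.pi * I / (D * M : ℕ)) ^ a) ^ (M * y) =
      ZMod.stdAddChar ((a : ZMod D) * (y : ZMod D)) := by
    have h := ZMod.stdAddChar_coe (N := D) (a * y : ℤ)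
    push_cast at h
    rw [h, ← pow_mul, ← Complex.exp_nat_mul]
    have hDM := NeZero.ne (D * M)
    rw [Nat.mul_ne_zero_iff] at hDM
    congr 1
    have h1 : (D : ℂ) ≠ 0 := mod_cast hDM.1
    have h2 : (M : ℂ) ≠ 0 := mod_cast hDM.2
    push_cast
    field_simp
  rw [← jacobiChar_natCast, ← complexJacobiChar_apply,
    ← sum_complexJacobiChar_mul_stdAddChar hsq hodd, sum_zmod_eq_sum_range, map_sum]
  refine Finset.sum_congr rfl fun y _ ↦ ?_
  rw [map_mul, aeval_C, map_pow, aeval_X, hexp, complexJacobiChar_apply, jacobiChar_natCast,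
    eq_ratCast, Rat.cast_intCast]

theorem pow_eq_pow_of_natCast_zmod_eq {G : Type*} [Group G] {g : G} {N : ℕ} (hg : g ^ N = 1)
    {a b : ℕ} (hab : (a : ZMod N) = b) : g ^ a = g ^ b :=
  pow_eq_pow_iff_modEq.2
    (((ZMod.natCast_eq_natCast_iff _ _ _).1 hab).of_dvd (orderOf_dvd_of_pow_eq_one hg))

namespace QuadraticIndexTwo

variable {p N D f : ℕ} [Fact p.Prime] (h : QuadraticIndexTwo p N D f)
  {F : Type*} [Field F] [Algebra (ZMod p) F] {χ : MulChar F ℂ} (hχ : χ ^ N = 1)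

include h hχ

theorem mulChar_algebraMap {a : ZMod p} (ha : a ≠ 0) : χ (algebraMap (ZMod p) F a) = 1 := by
  have ha' : algebraMap (ZMod p) F a ≠ 0 := (_root_.map_ne_zero _).2 ha
  set z := χ (algebraMap (ZMod p) F a) with hz
  have hz1 : z ^ (p - 1) = 1 := by
    rw [hz, ← map_pow, ← map_pow, ZMod.pow_card_sub_one_eq_one ha, map_one, map_one]
  have hz2 : z ^ N = 1 := by
    rw [hz, ← Units.val_mk0 ha', ← MulChar.pow_apply_coe, hχ, MulChar.one_apply_coe]
  have hc : (p - 1).Coprime N := by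
    rw [← Nat.isCoprime_iff_coprime, Nat.cast_sub h.prime.one_le, Nat.cast_one]
    exact h.isCoprime_sub_one
  have hdvd := Nat.dvd_gcd (orderOf_dvd_of_pow_eq_one hz1) (orderOf_dvd_of_pow_eq_one hz2)
  rw [hc] at hdvd
  exact orderOf_eq_one_iff.1 (Nat.dvd_one.1 hdvd)

theorem mulChar_neg_one : χ (-1) = 1 := by
  simpa using h.mulChar_algebraMap hχ (neg_ne_zero.2 one_ne_zero)

variable [Fintype F]

theorem star_gaussSum : starRingEnd ℂ (gaussSum χ (traceChar p F)) =
    gaussSum χ⁻¹ (traceChar p F) :=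
  star_gaussSum_of_apply_neg_one (h.mulChar_neg_one hχ) _

theorem gaussSum_pow {a : ℕ} (ha : a.Coprime N) :
    gaussSum (χ ^ a) (traceChar p F) = gaussSum χ (traceChar p F) ∧ jacobiSym a D = 1 ∨
    gaussSum (χ ^ a) (traceChar p F) = starRingEnd ℂ (gaussSum χ (traceChar p F)) ∧
      jacobiSym a D = -1 := by
  have : NeZero N := h.neZero_left
  have : NeZero D := h.neZero_right
  rcases h.eq_pow_or_eq_neg_pow ha with ⟨hj, i, hi⟩ | ⟨hj, i, hi⟩
  · refine Or.inl ⟨?_, hj⟩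
    rw [pow_eq_pow_of_natCast_zmod_eq hχ (b := p ^ i) (by rw [hi, Nat.cast_pow]),
      gaussSum_pow_char_pow]
  · refine Or.inr ⟨?_, hj⟩
    have hinv : χ ^ a = χ⁻¹ ^ p ^ i := by
      rw [inv_pow, eq_inv_iff_mul_eq_one, ← pow_add,
        pow_eq_pow_of_natCast_zmod_eq hχ (b := 0) (by push_cast; rw [hi, neg_add_cancel]), pow_zero]
    rw [hinv, gaussSum_pow_char_pow, h.star_gaussSum hχ]

theorem exists_rat_gaussSum_add_star_and_sub_star [NeZero D] (h1 : χ ≠ 1) : ∃ q r : ℚ,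
    gaussSum χ (traceChar p F) + starRingEnd ℂ (gaussSum χ (traceChar p F)) = q ∧
    (gaussSum χ (traceChar p F) - starRingEnd ℂ (gaussSum χ (traceChar p F))) *
      gaussSum (complexJacobiChar D) ZMod.stdAddChar = r := by
  have : NeZero N := h.neZero_left
  have hz := Complex.isPrimitiveRoot_exp N (NeZero.ne N)
  have hχi : χ⁻¹ ^ N = 1 := by rw [inv_pow, hχ, inv_one]
  have hne {η : MulChar F ℂ} (hη : η ^ N = 1) (hη1 : η ≠ 1) {a : ℕ} (ha : a.Coprime N) :
      η ^ a ≠ 1 := fun hηa ↦ hη1 (by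
    simpa only [ha.gcd_eq_one, pow_one] using pow_gcd_eq_one.2 ⟨hηa, hη⟩)
  obtain ⟨P, hP⟩ := exists_aeval_eq_gaussSum hz hχ fun _ ↦ h.mulChar_algebraMap hχ
  obtain ⟨Q, hQ⟩ := exists_aeval_eq_gaussSum hz hχi fun _ ↦ h.mulChar_algebraMap hχi
  obtain ⟨T, hT⟩ := exists_aeval_eq_jacobiSym_mul_gaussSum h.squarefree h.odd h.dvd
  set G := gaussSum χ (traceChar p F)
  set τ := gaussSum (complexJacobiChar D) ZMod.stdAddChar
  have haeval (μ : ℂ) (hμ : μ ∈ primitiveRoots N ℂ) :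
      aeval μ (P + Q) = G + starRingEnd ℂ G ∧
        aeval μ ((P - Q) * T) = (G - starRingEnd ℂ G) * τ := by
    rw [mem_primitiveRoots h.pos] at hμ
    obtain ⟨a, -, ha, rfl⟩ := hz.isPrimitiveRoot_iff.1 hμ
    have hχa : (χ ^ a) ^ N = 1 := by rw [pow_right_comm, hχ, one_pow]
    rw [map_mul, map_add, map_sub, hP a (hne hχ h1 ha), hQ a (hne hχi (inv_ne_one.2 h1) ha), hT,
      inv_pow, ← h.star_gaussSum hχa]
    rcases h.gaussSum_pow hχ ha with ⟨hg, hj⟩ | ⟨hg, hj⟩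
    · rw [hg, hj, Int.cast_one, one_mul]
      exact ⟨rfl, rfl⟩
    · rw [hg, hj, conj_conj, Int.cast_neg, Int.cast_one]
      exact ⟨add_comm _ _, by ring⟩
  obtain ⟨q, hq⟩ := exists_rat_eq_of_forall_aeval_primitiveRoots h.pos fun μ hμ ↦ (haeval μ hμ).1
  obtain ⟨r, hr⟩ := exists_rat_eq_of_forall_aeval_primitiveRoots h.pos fun μ hμ ↦ (haeval μ hμ).2
  exact ⟨q, r, hq, hr⟩

theorem exists_gaussSum_eq_add_mul_sqrtNeg (h1 : χ ≠ 1) :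
    ∃ u v : ℚ, gaussSum χ (traceChar p F) = u + v * sqrtNeg D := by
  have : NeZero D := h.neZero_right
  obtain ⟨q, r, hq, hr⟩ := h.exists_rat_gaussSum_add_star_and_sub_star hχ h1
  set G := gaussSum χ (traceChar p F)
  set τ := gaussSum (complexJacobiChar D) ZMod.stdAddChar
  have hτ : τ ^ 2 = -D := gaussSum_complexJacobiChar_sq h.squarefree h.mod_four
  have hD : (D : ℂ) ≠ 0 := mod_cast NeZero.ne D
  have hdiff : G - starRingEnd ℂ G = -(r / D) * τ := by
    have hτ0 : τ ≠ 0 := fun h0 ↦ hD (by simpa [h0] using hτ)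
    apply mul_right_cancel₀ hτ0
    rw [hr, mul_assoc, ← sq, hτ]
    field_simp
  rcases sq_eq_sq_iff_eq_or_eq_neg.1 (hτ.trans (sqrtNeg_sq D).symm) with h' | h'
  · refine ⟨q / 2, -(r / D) / 2, ?_⟩
    push_cast
    linear_combination (hq + hdiff - r / D * h') / 2
  · refine ⟨q / 2, r / D / 2, ?_⟩
    push_cast
    linear_combination (hq + hdiff - r / D * h') / 2

end QuadraticIndexTwo

theorem prime_dvd_of_valuation_intCast_lt_one {K Γ₀ : Type*} [Field K]
    [LinearOrderedCommGroupWithZero Γ₀] (v : Valuation K Γ₀) {p : ℕ} (hp : p.Prime)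
    (hv : v p < 1) {n : ℤ} (hn : v n < 1) : (p : ℤ) ∣ n := by
  by_contra hpn
  obtain ⟨a, b, hab⟩ :=
    ((Nat.prime_iff_prime_int.1 hp).irreducible.coprime_iff_not_dvd).2 hpn
  have hle (c : ℤ) : v (c : K) ≤ 1 := valuation_le_one_of_isIntegral v isIntegral_algebraMap
  have hmul {c m : ℤ} (hm : v (m : K) < 1) : v ((c * m : ℤ) : K) < 1 := by
    rw [Int.cast_mul, map_mul]
    exact mul_lt_one_of_nonneg_of_lt_one_right (hle c) zero_le hm
  have hlt := v.map_add_lt (hmul (c := a) (m := p) (by rwa [Int.cast_natCast])) (hmul (c := b) hn)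
  rw [← Int.cast_add, hab, Int.cast_one, map_one] at hlt
  exact lt_irrefl _ hlt

theorem prime_pow_dvd_of_valuation_le {K Γ₀ : Type*} [Field K] [CharZero K]
    [LinearOrderedCommGroupWithZero Γ₀] (v : Valuation K Γ₀) {p : ℕ} (hp : p.Prime)
    (hv : v p < 1) {w : ℕ} {n : ℤ} (hn : v n ≤ v p ^ w) : (p : ℤ) ^ w ∣ n := by
  induction w generalizing n with
  | zero => simp
  | succ w ih =>
    obtain ⟨m, rfl⟩ := prime_dvd_of_valuation_intCast_lt_one v hp hv
      (hn.trans_lt (pow_lt_one₀ zero_le hv w.succ_ne_zero))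
    have hvp : 0 < v p := zero_lt_iff.2 ((v.ne_zero_iff).2 (mod_cast hp.ne_zero))
    rw [pow_succ']
    refine mul_dvd_mul_left _ (ih ?_)
    rw [Int.cast_mul, Int.cast_natCast, map_mul, pow_succ'] at hn
    exact le_of_mul_le_mul_left hn hvp

theorem eq_two_or_neg_two_and_eq_zero_of_sq_add_mul_sq_eq_four {D : ℕ} (hD : 4 < D) {a b : ℤ}
    (h : a ^ 2 + D * b ^ 2 = 4) : (a = 2 ∨ a = -2) ∧ b = 0 := by
  have : (4 : ℤ) < D := mod_cast hD
  obtain rfl : b = 0 := by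
    by_contra hb
    have : 0 < b ^ 2 := by positivity
    nlinarith [sq_nonneg a]
  exact ⟨sq_eq_sq_iff_eq_or_eq_neg.1 (by linarith), rfl⟩

/-- An integer of `ℚ(√-D)` is divisible by `p ^ w` as soon as it and its conjugate are so at one
place above `p`, because the trace of the quotient is then an integer. -/
theorem exists_eq_prime_pow_mul_of_valuation_le {Γ₀ : Type*} [LinearOrderedCommGroupWithZero Γ₀]
    (v : Valuation ℂ Γ₀) {p D w : ℕ} (hp : p.Prime) (hv : v p < 1) (hD4 : D % 4 = 3)
    (hD : Squarefree D) {z : ℂ} (hz : z ∈ ℚ⟮sqrtNeg D⟯) (hint : IsIntegral ℤ z)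
    (hvz : v z ≤ v p ^ w) (hvz' : v (starRingEnd ℂ z) ≤ v p ^ w) {n : ℤ}
    (hn : z * starRingEnd ℂ z = p ^ (2 * w) * n) :
    ∃ a b : ℤ, z = p ^ w * ((a + b * sqrtNeg D) / 2) ∧ a ^ 2 + D * b ^ 2 = 4 * n := by
  have hpw : (p : ℂ) ^ w ≠ 0 := pow_ne_zero _ (mod_cast hp.ne_zero)
  obtain ⟨t, ht⟩ := exists_int_add_star_eq hz hint
  obtain ⟨s, rfl⟩ : (p : ℤ) ^ w ∣ t := prime_pow_dvd_of_valuation_le v hp hv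
    (ht ▸ v.map_add_le hvz hvz')
  have hquot : IsIntegral ℤ (z / p ^ w) := by
    refine ⟨X ^ 2 - C s * X + C n, by monicity!, ?_⟩
    rw [← aeval_def]
    simp only [map_add, map_sub, map_mul, map_pow, aeval_X, eq_intCast, map_intCast]
    field_simp
    push_cast at ht
    linear_combination z * ht - hn
  have hmem : z / p ^ w ∈ ℚ⟮sqrtNeg D⟯ := div_mem hz (pow_mem (_root_.natCast_mem _ _) _)
  obtain ⟨a, b, hab, -⟩ := exists_eq_div_two_of_isIntegral hD4 hD hmem hquot
  rw [div_eq_iff hpw, mul_comm] at hab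
  refine ⟨a, b, hab, ?_⟩
  have hnorm : ((a ^ 2 + D * b ^ 2 : ℤ) : ℂ) = (4 * n : ℤ) := by
    apply mul_left_cancel₀ (pow_ne_zero 2 hpw)
    rw [← pow_mul, mul_comm w 2]
    push_cast
    rw [mul_left_comm, ← hn, hab]
    simp only [map_mul, map_add, map_div₀, map_pow, map_natCast, map_intCast, map_ofNat,
      star_sqrtNeg]
    linear_combination ((p : ℂ) ^ w) ^ 2 * b ^ 2 * sqrtNeg_sq D
  exact_mod_cast hnorm

/-! ### Gauss sums modulo an auxiliary prime -/

section Semiprimitive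

variable {p : ℕ} [Fact p.Prime] {F : Type*} [Field F] [Fintype F] [Algebra (ZMod p) F]

variable (p) in
/-- The Gauss sum of `χ` for the trace character, as an element of the ring of all algebraic
integers. -/
noncomputable def integralGaussSum (χ : MulChar F ℂ) : integralClosure ℤ ℂ :=
  ⟨gaussSum χ (traceChar p F), isIntegral_gaussSum _ _⟩

variable {χ : MulChar F ℂ} (hχ : ∀ a : ZMod p, a ≠ 0 → χ (algebraMap (ZMod p) F a) = 1)

include hχ

theorem map_integralGaussSum_pow_char {l : ℕ} [Fact l.Prime] (hlp : l ≠ p) {k : Type*} [CommRing k]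
    [CharP k l] (φ : integralClosure ℤ ℂ →+* k) :
    φ (integralGaussSum p χ) ^ l = φ (integralGaussSum p (χ ^ l)) := by
  have hl0 : (l : ZMod p) ≠ 0 := by
    rw [Ne, ZMod.natCast_eq_zero_iff, Nat.prime_dvd_prime_iff_eq Fact.out Fact.out]
    exact hlp.symm
  have hunit : IsUnit (l : F) := by
    rw [← map_natCast (algebraMap (ZMod p) F)]
    exact hl0.isUnit.map _
  have hχl : reduceMulChar φ (χ ^ l) (hunit.unit : F) = 1 := by
    rw [hunit.unit_spec, reduceMulChar_apply, ← map_one φ]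
    congr 1
    refine Subtype.ext ?_
    simpa using mulChar_pow_algebraMap_eq_one hχ l hl0
  rw [integralGaussSum, integralGaussSum, ← gaussSum_reduce, ← gaussSum_reduce, gaussSum_frob,
    AddChar.pow_mulShift, ← reduceMulChar_pow,
    ← gaussSum_mulShift (reduceMulChar φ (χ ^ l)) (reduceAddChar φ _) hunit.unit, hχl, one_mul,
    hunit.unit_spec]

theorem map_integralGaussSum_pow_char_pow {l : ℕ} [Fact l.Prime] (hlp : l ≠ p) {k : Type*}
    [CommRing k] [CharP k l] (φ : integralClosure ℤ ℂ →+* k) (n : ℕ) :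
    φ (integralGaussSum p χ) ^ l ^ n = φ (integralGaussSum p (χ ^ l ^ n)) := by
  induction n with
  | zero => rw [pow_zero, pow_one, pow_one]
  | succ n ih =>
    rw [pow_succ, pow_mul, ih, pow_mul, map_integralGaussSum_pow_char
      (fun _ ↦ mulChar_pow_algebraMap_eq_one hχ _) hlp]

theorem map_integralGaussSum_eq_of_pow {l : ℕ} [Fact l.Prime] (hlp : l ≠ p) {k : Type*} [CommRing k]
    [IsReduced k] [CharP k l] (φ : integralClosure ℤ ℂ →+* k) {n : ℕ} {c : k}
    (hc : c ^ l ^ n = c) (hχn : φ (integralGaussSum p (χ ^ l ^ n)) = c) :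
    φ (integralGaussSum p χ) = c := by
  refine iterateFrobenius_inj k l n ?_
  rw [iterateFrobenius_def, iterateFrobenius_def, hc,
    map_integralGaussSum_pow_char_pow hχ hlp, hχn]

theorem gaussSum_sq_eq_card (h1 : χ ≠ 1) {M i : ℕ} (hχM : χ ^ M = 1) (hM : M ∣ p ^ i + 1) :
    gaussSum χ (traceChar p F) ^ 2 = Fintype.card F := by
  have hχ1 : χ (-1) = 1 := by simpa using hχ (-1) (neg_ne_zero.2 one_ne_zero)
  obtain ⟨q, hq⟩ := hM
  have hinv : χ⁻¹ = χ ^ p ^ i := by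
    rw [inv_eq_iff_mul_eq_one, ← pow_succ', hq, pow_mul, hχM, one_pow]
  rw [← gaussSum_mul_star_gaussSum h1 (traceChar_ne_one (p := p)),
    star_gaussSum_of_apply_neg_one hχ1, hinv, gaussSum_pow_char_pow, sq]

/-- The semi-primitive case: modulo `l` the Gauss sum is congruent to that of the trivial character,
which is `-1`, and this determines the sign of the square root of `p ^ f`. -/
theorem gaussSum_eq_of_dvd_pow_add_one (h1 : χ ≠ 1) {l n i e : ℕ} (hl : l.Prime) (hl2 : l ≠ 2)
    (hlp : l ≠ p) (hχl : χ ^ l ^ n = 1) (hi : l ^ n ∣ p ^ i + 1) (hF : Fintype.card F = p ^ (2 * e))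
    {c : ℤ} (hc : c = 1 ∨ c = -1) (hpc : (l : ℤ) ∣ p ^ e - c) :
    gaussSum χ (traceChar p F) = -c * p ^ e := by
  have : Fact l.Prime := ⟨hl⟩
  obtain ⟨k, _, _, _, ⟨φ⟩⟩ := exists_integralClosure_ringHom l
  have hφ : φ (integralGaussSum p χ) = -1 := by
    refine map_integralGaussSum_eq_of_pow hχ hlp φ
      (((hl.odd_of_ne_two hl2).pow).neg_one_pow) (n := n) ?_
    rw [hχl, ← map_one φ, ← map_neg]
    congr 1
    exact Subtype.ext (gaussSum_one_left traceChar_ne_one)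
  have hpk : (p : k) ^ e = c := by
    rw [← sub_eq_zero]
    exact_mod_cast (CharP.intCast_eq_zero_iff k l _).2 hpc
  have hsq : gaussSum χ (traceChar p F) ^ 2 = (-c * (p : ℂ) ^ e) ^ 2 := by
    have hc2 : (c : ℂ) ^ 2 = 1 := by rcases hc with rfl | rfl <;> norm_num
    rw [gaussSum_sq_eq_card hχ h1 hχl hi, hF, Nat.cast_pow, mul_pow, neg_sq, hc2, one_mul,
      ← pow_mul, mul_comm]
  refine (sq_eq_sq_iff_eq_or_eq_neg.1 hsq).resolve_right fun hneg ↦ ?_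
  have hint : integralGaussSum p χ = (c * p ^ e : ℤ) := Subtype.ext <| by
    rw [neg_mul, neg_neg] at hneg
    simpa [integralGaussSum] using hneg
  have hone : (c : k) * c = 1 := by rcases hc with rfl | rfl <;> norm_num
  rw [hint, map_intCast, Int.cast_mul, Int.cast_pow, Int.cast_natCast, hpk, hone] at hφ
  have h2 : ((2 : ℕ) : k) = 0 := by
    rw [Nat.cast_two, ← one_add_one_eq_two]
    nth_rw 1 [hφ]
    exact neg_add_cancel 1
  exact hl2 ((Nat.prime_dvd_prime_iff_eq hl Nat.prime_two).1 ((CharP.cast_eq_zero_iff k l 2).1 h2))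

end Semiprimitive

/-! ### Evaluation of index two Gauss sums -/

theorem mulChar_pow_pow_eq_one {F : Type*} [Field F] {χ : MulChar F ℂ} {N : ℕ} (hχ : orderOf χ = N)
    (m : ℕ) : (χ ^ m) ^ N = 1 := by
  rw [pow_right_comm, ← hχ, pow_orderOf_eq_one, one_pow]

namespace QuadraticIndexTwo

variable {p N D f : ℕ} (h : QuadraticIndexTwo p N D f) {F : Type*} [Field F] {χ : MulChar F ℂ}
  (hχ : orderOf χ = N)

include h hχ

theorem pow_ne_one {m : ℕ} (hm : m * D ∣ N) : χ ^ m ≠ 1 := fun h1 ↦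
  h.not_dvd_of_mul_dvd hm (hχ ▸ orderOf_dvd_of_pow_eq_one h1)

variable [Fact p.Prime] [Fintype F] [Algebra (ZMod p) F]

theorem gaussSum_pow_mem_adjoin {m : ℕ} (hm : m * D ∣ N) :
    gaussSum (χ ^ m) (traceChar p F) ∈ ℚ⟮sqrtNeg D⟯ :=
  mem_adjoin_sqrtNeg_iff.2
    (h.exists_gaussSum_eq_add_mul_sqrtNeg (mulChar_pow_pow_eq_one hχ m) (h.pow_ne_one hχ hm))

variable (hF : Fintype.card F = p ^ f)

include hF

theorem gaussSum_pow_mul_star {m : ℕ} (hm : m * D ∣ N) :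
    gaussSum (χ ^ m) (traceChar p F) * starRingEnd ℂ (gaussSum (χ ^ m) (traceChar p F)) =
      p ^ f := by
  rw [gaussSum_mul_star_gaussSum (h.pow_ne_one hχ hm) traceChar_ne_one, hF, Nat.cast_pow]

theorem exists_valuation_gaussSum_eq : ∃ V : ValuationSubring ℂ, V.valuation (p : ℂ) < 1 ∧
    ∃ ε : ℤ, (ε = 1 ∨ ε = -1) ∧ ∀ m : ℕ, m * D ∣ N → ∃ e e' : ℕ,
      e + e' = f ∧ (e : ℤ) - e' = ε * (m * classNumSqrtNeg D) ∧
      V.valuation (gaussSum (χ ^ m) (traceChar p F)) = V.valuation (p : ℂ) ^ e ∧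
      V.valuation (starRingEnd ℂ (gaussSum (χ ^ m) (traceChar p F))) =
        V.valuation (p : ℂ) ^ e' := by
  obtain ⟨V, hV, k, hk, hval⟩ := exists_valuation_pow_le_gaussSum hF χ
  rw [hχ] at hk hval
  obtain ⟨ε, hε, hst⟩ := h.exists_stickelbergerSum_eq hk
  refine ⟨V, hV, ε, hε, fun m hm ↦ ?_⟩
  obtain ⟨e, e', he, he', hadd, hsub⟩ := hst m hm
  have hconj : starRingEnd ℂ (gaussSum (χ ^ m) (traceChar p F)) =
      gaussSum (χ ^ ((N - 1) * m)) (traceChar p F) := by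
    rw [h.star_gaussSum (mulChar_pow_pow_eq_one hχ m)]
    congr 1
    rw [inv_eq_iff_mul_eq_one, ← pow_add, ← one_add_mul,
      Nat.add_sub_cancel' (show 1 ≤ N from h.pos), mul_comm, pow_mul, mulChar_pow_pow_eq_one hχ]
  have hle := hval _ _ he
  have hle' := hval _ _ he'
  rw [← hconj] at hle'
  have hp0 : 0 < V.valuation (p : ℂ) :=
    zero_lt_iff.2 ((Valuation.ne_zero_iff _).2 (mod_cast h.prime.ne_zero))
  have hmul := congrArg V.valuation (h.gaussSum_pow_mul_star hχ hF hm)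
  rw [map_mul, map_pow, ← hadd, pow_add] at hmul
  have hpos' := (pow_pos hp0 e').trans_le hle'
  obtain ⟨heq, heq'⟩ := (mul_eq_mul_iff_eq_and_eq_of_pos hle hle' (pow_pos hp0 e) hpos').1 hmul.symm
  exact ⟨e, e', hadd, hsub, heq.symm, heq'.symm⟩

theorem exists_gaussSum_eq_pow_mul : ∃ w : ℕ, f = 2 * w + classNumSqrtNeg D ∧ ∃ a b : ℤ,
    gaussSum χ (traceChar p F) = p ^ w * ((a + b * sqrtNeg D) / 2) ∧
    a ^ 2 + D * b ^ 2 = 4 * (p : ℤ) ^ classNumSqrtNeg D := by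
  have hD : 1 * D ∣ N := (one_mul D).symm ▸ h.dvd
  obtain ⟨V, hV, ε, hε, hval⟩ := h.exists_valuation_gaussSum_eq hχ hF
  obtain ⟨e, e', hadd, hsub, hve, hve'⟩ := hval 1 hD
  have hnorm := h.gaussSum_pow_mul_star hχ hF hD
  have hmem := h.gaussSum_pow_mem_adjoin hχ hD
  rw [pow_one] at hve hve' hnorm hmem
  rw [Nat.cast_one, one_mul] at hsub
  obtain ⟨w, hw⟩ : ∃ w, f = 2 * w + classNumSqrtNeg D := by
    rcases hε with rfl | rfl
    · exact ⟨e', by omega⟩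
    · exact ⟨e, by omega⟩
  have hwe : w ≤ e ∧ w ≤ e' := by rcases hε with rfl | rfl <;> omega
  refine ⟨w, hw, exists_eq_prime_pow_mul_of_valuation_le V.valuation h.prime hV h.mod_four
    h.squarefree hmem (isIntegral_gaussSum _ _) ?_ ?_ ?_⟩
  · exact hve.trans_le (pow_le_pow_right_of_le_one' hV.le hwe.1)
  · exact hve'.trans_le (pow_le_pow_right_of_le_one' hV.le hwe.2)
  · rw [hnorm, hw, pow_add]
    push_cast
    rfl

theorem gaussSum_pow_mul_star_gaussSum_pow {m W : ℕ} (hm : m * D ∣ N) (hW : 2 * W = f * (m + 1)) :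
    gaussSum χ (traceChar p F) ^ m * starRingEnd ℂ (gaussSum (χ ^ m) (traceChar p F)) = p ^ W ∨
    gaussSum χ (traceChar p F) ^ m * starRingEnd ℂ (gaussSum (χ ^ m) (traceChar p F)) =
      -p ^ W := by
  have hD : 1 * D ∣ N := (one_mul D).symm ▸ h.dvd
  obtain ⟨V, hV, ε, -, hval⟩ := h.exists_valuation_gaussSum_eq hχ hF
  obtain ⟨e, e', hadd, hsub, hve, hve'⟩ := hval 1 hD
  obtain ⟨d, d', hadd', hsub', hvd, hvd'⟩ := hval m hm
  have hnorm := h.gaussSum_pow_mul_star hχ hF hD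
  have hnorm' := h.gaussSum_pow_mul_star hχ hF hm
  have hmem := h.gaussSum_pow_mem_adjoin hχ hD
  have hmem' := h.gaussSum_pow_mem_adjoin hχ hm
  have hint : IsIntegral ℤ (gaussSum χ (traceChar p F)) := isIntegral_gaussSum _ _
  have hint' : IsIntegral ℤ (gaussSum (χ ^ m) (traceChar p F)) := isIntegral_gaussSum _ _
  rw [pow_one] at hve hve' hnorm hmem
  set g := gaussSum χ (traceChar p F)
  set G := gaussSum (χ ^ m) (traceChar p F)
  have hWe : W = e * m + d' ∧ W = e' * m + d := by
    rw [Nat.cast_one, one_mul] at hsub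
    have hdiff : (d : ℤ) - d' = (e - e') * m := by rw [hsub', hsub]; ring
    have hsum : (e : ℤ) * m + e' * m = f * m := by
      rw [← add_mul]
      exact mod_cast congrArg (· * m) hadd
    have hW' : (2 * W : ℤ) = f * m + f := by exact mod_cast hW
    zify at hadd' ⊢
    rw [sub_mul] at hdiff
    omega
  obtain ⟨a, b, hab, hab'⟩ := exists_eq_prime_pow_mul_of_valuation_le (w := W) (n := 1) V.valuation
    h.prime hV h.mod_four h.squarefree (mul_mem (pow_mem hmem m) (star_mem_adjoin_sqrtNeg hmem'))
    ((hint.pow m).mul (isIntegral_conj hint'))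
    (by rw [map_mul, map_pow, hve, hvd', ← pow_mul, ← pow_add, ← hWe.1])
    (by rw [map_mul, map_pow, map_mul, map_pow, conj_conj, hve', hvd, ← pow_mul, ← pow_add,
      ← hWe.2])
    (by
      rw [map_mul, map_pow, conj_conj, mul_mul_mul_comm, ← mul_pow, hnorm, mul_comm _ G, hnorm',
        ← pow_mul, ← pow_add, hW, Int.cast_one, mul_one, mul_add_one])
  have hD4 : 4 < D := by have := h.mod_four; have := h.three_lt; omega
  obtain ⟨ha, rfl⟩ := eq_two_or_neg_two_and_eq_zero_of_sq_add_mul_sq_eq_four hD4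
    (hab'.trans (mul_one 4))
  rcases ha with rfl | rfl
  · left; rw [hab]; push_cast; ring
  · right; rw [hab]; push_cast; ring

section Reduction

variable {k : Type*} [CommRing k] (φ : integralClosure ℤ ℂ →+* k) {e : ℕ} (hfe : f = 2 * e)
  (hpe : (p : k) ^ e = 1)
  (hφ : ∀ m, m * D ∣ N → φ (integralGaussSum p (χ ^ m)) = 1)

include hfe hpe hφ

theorem map_integralGaussSum_pow_inv {m : ℕ} (hm : m * D ∣ N) :
    φ (integralGaussSum p (χ ^ m)⁻¹) = 1 := by
  have hmul : integralGaussSum p (χ ^ m) * integralGaussSum p (χ ^ m)⁻¹ = p ^ f := by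
    refine Subtype.ext ?_
    have := h.gaussSum_pow_mul_star hχ hF hm
    rw [h.star_gaussSum (mulChar_pow_pow_eq_one hχ m)] at this
    simpa [integralGaussSum] using this
  have := congrArg φ hmul
  rwa [map_mul, hφ m hm, one_mul, map_pow, map_natCast, hfe, mul_comm, pow_mul, hpe,
    one_pow] at this

theorem gaussSum_pow_mul_star_gaussSum_pow_eq (h2 : (2 : k) ≠ 0) {m : ℕ} (hm : m * D ∣ N) :
    gaussSum χ (traceChar p F) ^ m * starRingEnd ℂ (gaussSum (χ ^ m) (traceChar p F)) =
      p ^ (e * (m + 1)) := by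
  refine (h.gaussSum_pow_mul_star_gaussSum_pow hχ hF hm
    (by rw [hfe, mul_assoc])).resolve_right fun hneg ↦ h2 ?_
  have hneg' : integralGaussSum p χ ^ m * integralGaussSum p (χ ^ m)⁻¹ = -p ^ (e * (m + 1)) := by
    refine Subtype.ext ?_
    rw [h.star_gaussSum (mulChar_pow_pow_eq_one hχ m)] at hneg
    simpa [integralGaussSum] using hneg
  have h1 := hφ 1 ((one_mul D).symm ▸ h.dvd)
  have hred := congrArg φ hneg'
  rw [pow_one] at h1
  rw [map_mul, map_pow, h1, one_pow, one_mul, h.map_integralGaussSum_pow_inv hχ hF φ hfe hpe hφ hm,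
    map_neg, map_pow, map_natCast, pow_mul, hpe, one_pow] at hred
  linear_combination hred

theorem two_mul_pow_eq_intCast {w : ℕ} (hw : f = 2 * w + classNumSqrtNeg D) {a b : ℤ}
    (hg : gaussSum χ (traceChar p F) = p ^ w * ((a + b * sqrtNeg D) / 2)) :
    2 * (p : k) ^ (classNumSqrtNeg D / 2) = a := by
  have hD : 1 * D ∣ N := (one_mul D).symm ▸ h.dvd
  have htrace : integralGaussSum p (χ ^ 1) + integralGaussSum p (χ ^ 1)⁻¹ = p ^ w * a := by
    refine Subtype.ext ?_
    have hstar := h.star_gaussSum (mulChar_pow_pow_eq_one hχ 1)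
    have hconj := star_add_mul_sqrtNeg D a b
    rw [Rat.cast_intCast, Rat.cast_intCast] at hconj
    rw [pow_one, hg, map_mul, map_pow, map_div₀, map_natCast, map_ofNat, hconj] at hstar
    push_cast [integralGaussSum]
    rw [pow_one, hg, ← hstar]
    ring
  have hred := congrArg φ htrace
  rw [map_add, hφ 1 hD, h.map_integralGaussSum_pow_inv hχ hF φ hfe hpe hφ hD, map_mul, map_pow,
    map_natCast, map_intCast] at hred
  have he : e = classNumSqrtNeg D / 2 + w := by omega
  rw [he, pow_add] at hpe
  linear_combination (a : k) * hpe + (p : k) ^ (classNumSqrtNeg D / 2) * hred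

theorem gaussSum_pow_eq (h2 : (2 : k) ≠ 0) {w : ℕ} (hw : f = 2 * w + classNumSqrtNeg D) {α : ℂ}
    (hg : gaussSum χ (traceChar p F) = p ^ w * α) {m : ℕ} (hm : m * D ∣ N) :
    gaussSum (χ ^ m) (traceChar p F) =
      (p : ℂ) ^ (((f : ℤ) - classNumSqrtNeg D * m) / 2) * α ^ m := by
  have hp0 : (p : ℂ) ≠ 0 := mod_cast h.prime.ne_zero
  have hexp : ((f : ℤ) - classNumSqrtNeg D * m) / 2 =
      (w * m + f : ℕ) - (e * (m + 1) : ℕ) := by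
    have : (classNumSqrtNeg D * m : ℤ) = 2 * (e * m) - 2 * (w * m) := by
      rw [← mul_assoc, ← mul_assoc, ← sub_mul]
      congr 1
      omega
    push_cast
    rw [this, mul_add_one]
    omega
  have hnorm := h.gaussSum_pow_mul_star hχ hF hm
  have hprod := h.gaussSum_pow_mul_star_gaussSum_pow_eq hχ hF φ hfe hpe hφ h2 hm
  rw [hexp, zpow_sub₀ hp0, zpow_natCast, zpow_natCast, div_mul_eq_mul_div, eq_div_iff
    (pow_ne_zero _ hp0), ← hprod, pow_add, ← hnorm, pow_mul, hg, mul_pow]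
  ring

theorem exists_forall_gaussSum_pow_eq {l : ℕ} [CharP k l] (h2 : (2 : k) ≠ 0) : ∃ a b : ℤ,
    4 * (p : ℤ) ^ classNumSqrtNeg D = a ^ 2 + D * b ^ 2 ∧
    a ≡ 2 * (p : ℤ) ^ (classNumSqrtNeg D / 2) [ZMOD l] ∧
    ∀ m : ℕ, m * D ∣ N → gaussSum (χ ^ m) (traceChar p F) =
      (p : ℂ) ^ (((f : ℤ) - classNumSqrtNeg D * m) / 2) * ((a + b * sqrtNeg D) / 2) ^ m := by
  obtain ⟨w, hw, a, b, hg, hab⟩ := h.exists_gaussSum_eq_pow_mul hχ hF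
  refine ⟨a, b, hab.symm, ?_, fun m hm ↦ h.gaussSum_pow_eq hχ hF φ hfe hpe hφ h2 hw hg hm⟩
  rw [← CharP.intCast_eq_intCast k l]
  push_cast
  exact (h.two_mul_pow_eq_intCast hχ hF φ hfe hpe hφ hw hg).symm

end Reduction

end QuadraticIndexTwo

/-! ### Primitive roots modulo odd prime powers -/

section PrimitiveRoot

variable {l r : ℕ} (hl : l.Prime)

include hl

theorem two_mul_totient_prime_pow_half (hl2 : l ≠ 2) (hr : r ≠ 0) :
    2 * ((l ^ r).totient / 2) = (l ^ r).totient :=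
  Nat.mul_div_cancel' (Nat.totient_even ((lt_of_le_of_ne hl.two_le hl2.symm).trans_le
    (Nat.le_self_pow hr l))).two_dvd

theorem totient_prime_pow_half (hl2 : l ≠ 2) (hr : r ≠ 0) :
    (l ^ r).totient / 2 = l ^ (r - 1) * (l / 2) := by
  have hodd := hl.eq_two_or_odd.resolve_left hl2
  rw [Nat.totient_prime_pow hl (Nat.pos_of_ne_zero hr), Nat.mul_div_assoc _ (by omega)]
  congr 1
  omega

theorem odd_totient_prime_pow_half (hl4 : l % 4 = 3) (hr : r ≠ 0) :
    Odd ((l ^ r).totient / 2) := by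
  rw [totient_prime_pow_half hl (by omega) hr]
  exact (Nat.odd_iff.2 (by omega)).pow.mul (Nat.odd_iff.2 (by omega))

theorem even_totient_prime_pow_half (hl4 : l % 4 = 1) (hr : r ≠ 0) :
    Even ((l ^ r).totient / 2) := by
  rw [totient_prime_pow_half hl (by omega) hr]
  exact (Nat.even_iff.2 (by omega)).mul_left _

variable {p : ℕ} (hl2 : l ≠ 2) (hr : r ≠ 0) (ho : orderOf (p : ZMod (l ^ r)) = (l ^ r).totient)

include hl2 hr ho

theorem prime_pow_dvd_pow_totient_half_add_one :
    ((l ^ r : ℕ) : ℤ) ∣ (p : ℤ) ^ ((l ^ r).totient / 2) + 1 := by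
  have h2 := two_mul_totient_prime_pow_half hl hl2 hr
  have hpos : 0 < (l ^ r).totient := Nat.totient_pos.2 (pow_pos hl.pos r)
  set n := (l ^ r).totient / 2
  have hprod : ((l ^ r : ℕ) : ℤ) ∣ ((p : ℤ) ^ n + 1) * ((p : ℤ) ^ n - 1) := by
    have hone := pow_orderOf_eq_one (p : ZMod (l ^ r))
    rw [ho, ← h2, mul_comm, pow_mul] at hone
    rw [← ZMod.intCast_zmod_eq_zero_iff_dvd]
    push_cast
    linear_combination hone
  have hcop {a : ℤ} (ha : ¬ (l : ℤ) ∣ a) : IsCoprime ((l ^ r : ℕ) : ℤ) a := by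
    rw [Nat.cast_pow]
    exact ((Prime.coprime_iff_not_dvd (Nat.prime_iff_prime_int.1 hl)).2 ha).pow_left
  by_cases hsub : (l : ℤ) ∣ (p : ℤ) ^ n - 1
  · exfalso
    have hadd : ¬ (l : ℤ) ∣ (p : ℤ) ^ n + 1 := fun hadd ↦ by
      have htwo := dvd_sub hadd hsub
      rw [add_sub_sub_cancel, one_add_one_eq_two] at htwo
      exact hl2 ((Nat.prime_dvd_prime_iff_eq hl Nat.prime_two).1 (mod_cast htwo))
    have hdvd := (hcop hadd).dvd_of_dvd_mul_left hprod
    rw [← ZMod.intCast_zmod_eq_zero_iff_dvd] at hdvd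
    push_cast at hdvd
    have hord := orderOf_dvd_of_pow_eq_one (sub_eq_zero.1 hdvd)
    rw [ho] at hord
    have := Nat.le_of_dvd (by omega) hord
    omega
  · exact (hcop hsub).dvd_of_dvd_mul_right hprod

theorem natCast_pow_totient_half_eq_neg_one : (p : ZMod l) ^ ((l ^ r).totient / 2) = -1 := by
  have hdvd : (l : ℤ) ∣ (p : ℤ) ^ ((l ^ r).totient / 2) + 1 :=
    (Int.natCast_dvd_natCast.2 (dvd_pow_self l hr)).trans
      (prime_pow_dvd_pow_totient_half_add_one hl hl2 hr ho)
  rw [← ZMod.intCast_zmod_eq_zero_iff_dvd] at hdvd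
  push_cast at hdvd
  exact eq_neg_of_add_eq_zero_left hdvd

theorem jacobiSym_eq_neg_one_of_orderOf_eq_totient : jacobiSym p l = -1 := by
  have : Fact l.Prime := ⟨hl⟩
  have : Fact (2 < l) := ⟨lt_of_le_of_ne hl.two_le hl2.symm⟩
  have hpow := natCast_pow_totient_half_eq_neg_one hl hl2 hr ho
  rw [totient_prime_pow_half hl hl2 hr, mul_comm, pow_mul, ZMod.pow_card_pow,
    ← Int.cast_natCast, ← legendreSym.eq_pow] at hpow
  rw [← jacobiSym.legendreSym.to_jacobiSym]
  have h0 : ((p : ℤ) : ZMod l) ≠ 0 := fun h0 ↦ by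
    rw [(legendreSym.eq_zero_iff l p).2 h0, Int.cast_zero] at hpow
    exact neg_ne_zero.2 one_ne_zero hpow.symm
  refine (legendreSym.eq_one_or_neg_one l h0).resolve_left fun h1 ↦ ?_
  rw [h1, Int.cast_one] at hpow
  exact ZMod.neg_one_ne_one hpow.symm

theorem isCoprime_sub_one_of_orderOf_eq_totient : IsCoprime ((p : ℤ) - 1) l := by
  refine ((Prime.coprime_iff_not_dvd (Nat.prime_iff_prime_int.1 hl)).2 fun hdvd ↦ ?_).symm
  have hmod : jacobiSym p l = jacobiSym 1 l :=
    jacobiSym.mod_left' (Int.modEq_iff_dvd.2 hdvd).symm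
  rw [jacobiSym_eq_neg_one_of_orderOf_eq_totient hl hl2 hr ho, jacobiSym.one_left] at hmod
  omega

end PrimitiveRoot

/-! ### Case B1 -/

/-- Case B1 of the index two Gauss sums: `N = l1 ^ r1 * l2 ^ r2` for primes `l1 ≡ 3` and `l2 ≡ 1`
modulo `4`, and `p` is a primitive root modulo both prime powers, of order `f = φ(N) / 2`
modulo `N`. -/
structure CaseB1 (p l1 l2 r1 r2 N f : ℕ) : Prop where
  prime : p.Prime
  prime_left : l1.Prime
  prime_right : l2.Prime
  mod_four_left : l1 % 4 = 3
  mod_four_right : l2 % 4 = 1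
  ne_zero_left : r1 ≠ 0
  ne_zero_right : r2 ≠ 0
  eq_mul : N = l1 ^ r1 * l2 ^ r2
  coprime : p.Coprime N
  orderOf_left : orderOf (p : ZMod (l1 ^ r1)) = (l1 ^ r1).totient
  orderOf_right : orderOf (p : ZMod (l2 ^ r2)) = (l2 ^ r2).totient
  orderOf_eq : orderOf (p : ZMod N) = f
  eq_half : f = N.totient / 2

namespace CaseB1

variable {p l1 l2 r1 r2 N f : ℕ} (c : CaseB1 p l1 l2 r1 r2 N f)

include c

theorem ne_two_left : l1 ≠ 2 := by have := c.mod_four_left; omega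

theorem ne_two_right : l2 ≠ 2 := by have := c.mod_four_right; omega

theorem coprime_left_right : l1.Coprime l2 :=
  (Nat.coprime_primes c.prime_left c.prime_right).2 <| by
    rintro rfl
    have := c.mod_four_left
    have := c.mod_four_right
    omega

theorem dvd_left : l1 ∣ N := c.eq_mul ▸ (dvd_pow_self l1 c.ne_zero_left).mul_right _

theorem dvd_right : l2 ∣ N := c.eq_mul ▸ (dvd_pow_self l2 c.ne_zero_right).mul_left _

theorem ne_of_dvd {l : ℕ} (hl : l ∣ N) (hl1 : l ≠ 1) : l ≠ p := by
  rintro rfl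
  exact hl1 (c.coprime.eq_one_of_dvd hl)

theorem two_mul_eq : 2 * f = N.totient := by
  rw [c.eq_half, Nat.mul_div_cancel']
  rw [c.eq_mul, Nat.totient_mul (Nat.Coprime.pow _ _ c.coprime_left_right),
    ← two_mul_totient_prime_pow_half c.prime_left c.ne_two_left c.ne_zero_left]
  exact (dvd_mul_right 2 _).mul_right _

theorem eq_two_mul : f = 2 * ((l1 ^ r1).totient / 2 * ((l2 ^ r2).totient / 2)) := by
  have h := c.two_mul_eq
  rw [c.eq_mul, Nat.totient_mul (Nat.Coprime.pow _ _ c.coprime_left_right),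
    ← two_mul_totient_prime_pow_half c.prime_left c.ne_two_left c.ne_zero_left,
    ← two_mul_totient_prime_pow_half c.prime_right c.ne_two_right c.ne_zero_right] at h
  linarith

theorem natCast_pow_half_left : (p : ZMod l1) ^ (f / 2) = 1 := by
  rw [c.eq_two_mul, Nat.mul_div_cancel_left _ two_pos, pow_mul,
    natCast_pow_totient_half_eq_neg_one c.prime_left c.ne_two_left c.ne_zero_left c.orderOf_left]
  exact (even_totient_prime_pow_half c.prime_right c.mod_four_right c.ne_zero_right).neg_one_pow

theorem natCast_pow_half_right : (p : ZMod l2) ^ (f / 2) = -1 := by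
  rw [c.eq_two_mul, Nat.mul_div_cancel_left _ two_pos, mul_comm, pow_mul,
    natCast_pow_totient_half_eq_neg_one c.prime_right c.ne_two_right c.ne_zero_right
      c.orderOf_right]
  exact (odd_totient_prime_pow_half c.prime_left c.mod_four_left c.ne_zero_left).neg_one_pow

theorem natCast_pow_half_of_charP (k : Type*) [CommRing k] [CharP k l1] :
    (p : k) ^ (f / 2) = 1 := by
  have h := congrArg (ZMod.castHom dvd_rfl k) c.natCast_pow_half_left
  rwa [map_pow, map_natCast, map_one] at h

theorem not_pow_dvd_of_mul_dvd {m : ℕ} (hm : m * (l1 * l2) ∣ N) : ¬ l2 ^ r2 ∣ m := fun hdvd ↦ by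
  have h := (mul_dvd_mul hdvd (dvd_mul_left l2 l1)).trans hm
  rw [c.eq_mul, mul_comm (l1 ^ r1)] at h
  exact c.prime_right.ne_one ((c.coprime_left_right.symm.pow_right r1).eq_one_of_dvd
    (Nat.dvd_of_mul_dvd_mul_left (pow_pos c.prime_right.pos _) h))

theorem quadraticIndexTwo : QuadraticIndexTwo p N (l1 * l2) f where
  prime := c.prime
  coprime := c.coprime
  isCoprime_sub_one := by
    rw [c.eq_mul]
    push_cast
    exact (isCoprime_sub_one_of_orderOf_eq_totient c.prime_left c.ne_two_left c.ne_zero_left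
      c.orderOf_left).pow_right.mul_right (isCoprime_sub_one_of_orderOf_eq_totient c.prime_right
        c.ne_two_right c.ne_zero_right c.orderOf_right).pow_right
  squarefree := (Nat.squarefree_mul c.coprime_left_right).2
    ⟨c.prime_left.prime.squarefree, c.prime_right.prime.squarefree⟩
  mod_four := by rw [Nat.mul_mod, c.mod_four_left, c.mod_four_right]
  three_lt := by nlinarith [c.prime_left.two_le, c.prime_right.two_le]
  dvd := c.coprime_left_right.mul_dvd_of_dvd_of_dvd c.dvd_left c.dvd_right
  pos := c.eq_mul ▸ Nat.mul_pos (pow_pos c.prime_left.pos _) (pow_pos c.prime_right.pos _)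
  dvd_of_prime_dvd l hl hlN := by
    rw [c.eq_mul, hl.dvd_mul] at hlN
    exact hlN.elim (fun h ↦ (hl.dvd_of_dvd_pow h).mul_right _)
      fun h ↦ (hl.dvd_of_dvd_pow h).mul_left _
  jacobiSym_eq_one := by
    have := NeZero.mk c.prime_left.ne_zero
    have := NeZero.mk c.prime_right.ne_zero
    rw [jacobiSym.mul_right,
      jacobiSym_eq_neg_one_of_orderOf_eq_totient c.prime_left c.ne_two_left c.ne_zero_left
        c.orderOf_left,
      jacobiSym_eq_neg_one_of_orderOf_eq_totient c.prime_right c.ne_two_right c.ne_zero_right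
        c.orderOf_right, neg_one_mul, neg_neg]
  orderOf_eq := c.orderOf_eq
  two_mul_eq := c.two_mul_eq

variable [Fact p.Prime] {F : Type*} [Field F] [Fintype F] [Algebra (ZMod p) F]
  (hF : Fintype.card F = p ^ f) {χ : MulChar F ℂ} (hχ : orderOf χ = N)

include hF hχ

theorem gaussSum_pow_left {m : ℕ} (hm : ¬ l2 ^ r2 ∣ m) :
    gaussSum (χ ^ (l1 ^ r1 * m)) (traceChar p F) = p ^ (f / 2) := by
  have h1 : χ ^ (l1 ^ r1 * m) ≠ 1 := fun h1 ↦ hm <| by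
    have := orderOf_dvd_of_pow_eq_one h1
    rw [hχ, c.eq_mul] at this
    exact Nat.dvd_of_mul_dvd_mul_left (pow_pos c.prime_left.pos _) this
  have hpow : (χ ^ (l1 ^ r1 * m)) ^ l2 ^ r2 = 1 := by
    rw [← pow_mul, mul_right_comm, ← c.eq_mul, pow_mul, ← hχ, pow_orderOf_eq_one, one_pow]
  have hhalf : f = 2 * (f / 2) := by have := c.eq_two_mul; omega
  have hdvd := prime_pow_dvd_pow_totient_half_add_one c.prime_right c.ne_two_right c.ne_zero_right
    c.orderOf_right
  rw [gaussSum_eq_of_dvd_pow_add_one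
    (fun _ ↦ c.quadraticIndexTwo.mulChar_algebraMap (mulChar_pow_pow_eq_one hχ _))
    h1 c.prime_right c.ne_two_right (c.ne_of_dvd c.dvd_right c.prime_right.ne_one) hpow
    (mod_cast hdvd) (hhalf ▸ hF) (Or.inr rfl) ?_]
  · norm_num
  · rw [← ZMod.intCast_zmod_eq_zero_iff_dvd]
    push_cast
    rw [c.natCast_pow_half_right, sub_self]

theorem gaussSum_pow_right {m : ℕ} (hm : ¬ l1 ^ r1 ∣ m) :
    gaussSum (χ ^ (m * l2 ^ r2)) (traceChar p F) = -p ^ (f / 2) := by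
  have h1 : χ ^ (m * l2 ^ r2) ≠ 1 := fun h1 ↦ hm <| by
    have := orderOf_dvd_of_pow_eq_one h1
    rw [hχ, c.eq_mul] at this
    exact Nat.dvd_of_mul_dvd_mul_right (pow_pos c.prime_right.pos _) this
  have hpow : (χ ^ (m * l2 ^ r2)) ^ l1 ^ r1 = 1 := by
    rw [← pow_mul, mul_assoc, mul_comm (l2 ^ r2), ← c.eq_mul, pow_mul, mulChar_pow_pow_eq_one hχ]
  have hhalf : f = 2 * (f / 2) := by have := c.eq_two_mul; omega
  have hdvd := prime_pow_dvd_pow_totient_half_add_one c.prime_left c.ne_two_left c.ne_zero_left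
    c.orderOf_left
  rw [gaussSum_eq_of_dvd_pow_add_one
    (fun _ ↦ c.quadraticIndexTwo.mulChar_algebraMap (mulChar_pow_pow_eq_one hχ _))
    h1 c.prime_left c.ne_two_left (c.ne_of_dvd c.dvd_left c.prime_left.ne_one) hpow
    (mod_cast hdvd) (hhalf ▸ hF) (Or.inl rfl) ?_]
  · norm_num
  · rw [← ZMod.intCast_zmod_eq_zero_iff_dvd]
    push_cast
    rw [c.natCast_pow_half_left, sub_self]

theorem map_integralGaussSum_pow_eq_one {k : Type*} [CommRing k] [IsReduced k] [CharP k l1]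
    (φ : integralClosure ℤ ℂ →+* k) {m : ℕ} (hm : m * (l1 * l2) ∣ N) :
    φ (integralGaussSum p (χ ^ m)) = 1 := by
  have : Fact l1.Prime := ⟨c.prime_left⟩
  refine map_integralGaussSum_eq_of_pow
    (fun _ ↦ c.quadraticIndexTwo.mulChar_algebraMap (mulChar_pow_pow_eq_one hχ m))
    (c.ne_of_dvd c.dvd_left c.prime_left.ne_one) φ (n := r1) (one_pow _) ?_
  have hval : integralGaussSum p ((χ ^ m) ^ l1 ^ r1) = p ^ (f / 2) := Subtype.ext <| by
    rw [← pow_mul, mul_comm m]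
    exact c.gaussSum_pow_left hF hχ (c.not_pow_dvd_of_mul_dvd hm)
  rw [hval, map_pow, map_natCast, c.natCast_pow_half_of_charP k]

theorem exists_forall_gaussSum_pow_eq : ∃ a b : ℤ,
    4 * (p : ℤ) ^ classNumSqrtNeg (l1 * l2) = a ^ 2 + (l1 * l2 : ℕ) * b ^ 2 ∧
    a ≡ 2 * (p : ℤ) ^ (classNumSqrtNeg (l1 * l2) / 2) [ZMOD l1] ∧
    ∀ m : ℕ, m * (l1 * l2) ∣ N → gaussSum (χ ^ m) (traceChar p F) =
      (p : ℂ) ^ (((f : ℤ) - classNumSqrtNeg (l1 * l2) * m) / 2) *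
        ((a + b * sqrtNeg (l1 * l2)) / 2) ^ m := by
  have : Fact l1.Prime := ⟨c.prime_left⟩
  obtain ⟨k, _, _, _, ⟨φ⟩⟩ := exists_integralClosure_ringHom l1
  have hfe : f = 2 * (f / 2) := by have := c.eq_two_mul; omega
  exact c.quadraticIndexTwo.exists_forall_gaussSum_pow_eq hχ hF φ hfe
    (c.natCast_pow_half_of_charP k) (fun m hm ↦ c.map_integralGaussSum_pow_eq_one hF hχ φ hm)
    (Ring.two_ne_zero (ringChar.eq k l1 ▸ c.ne_two_left))

end CaseB1

theorem statement17 (p l1 l2 r1 r2 N f : ℕ) (hp : p.Prime)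
    (hl1 : l1.Prime) (hl2 : l2.Prime) (hne : l1 ≠ l2)
    (hl1m : l1 % 4 = 3) (hl2m : l2 % 4 = 1)
    (hr1 : 1 ≤ r1) (hr2 : 1 ≤ r2) (hN : N = l1 ^ r1 * l2 ^ r2) (hNp : Nat.gcd N p = 1)
    (hord1 : orderOf (p : ZMod (l1 ^ r1)) = Nat.totient (l1 ^ r1))
    (hord2 : orderOf (p : ZMod (l2 ^ r2)) = Nat.totient (l2 ^ r2))
    (hf : orderOf (p : ZMod N) = f) (hind : f = Nat.totient N / 2)
    (F : Type) [Field F] [Fintype F] [Algebra (ZMod p) F]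
    (hcard : Fintype.card F = p ^ f)
    (χ : MulChar F ℂ) (hχord : orderOf χ = N) :
    ∃ a b : ℤ,
      4 * (p : ℤ) ^ classNumSqrtNeg (l1 * l2) = a ^ 2 + (l1 : ℤ) * (l2 : ℤ) * b ^ 2 ∧
      a ≡ 2 * (p : ℤ) ^ (classNumSqrtNeg (l1 * l2) / 2) [ZMOD (l1 : ℤ)] ∧
      ∀ t1 t2 : ℕ, t1 < r1 → t2 < r2 →
        gaussSumN p χ (l1 ^ t1 * l2 ^ t2) =
          (p : ℂ) ^
              (((f : ℤ) - (classNumSqrtNeg (l1 * l2) : ℤ) * ((l1 : ℤ) ^ t1 * (l2 : ℤ) ^ t2)) / 2) *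
            (((a : ℂ) + (b : ℂ) * sqrtNeg (l1 * l2)) / 2) ^ (l1 ^ t1 * l2 ^ t2) ∧
        gaussSumN p χ (l1 ^ r1 * l2 ^ t2) = (p : ℂ) ^ ((f : ℤ) / 2) ∧
        gaussSumN p χ (l1 ^ t1 * l2 ^ r2) = -(p : ℂ) ^ ((f : ℤ) / 2) := by
  have : Fact p.Prime := ⟨hp⟩
  have c : CaseB1 p l1 l2 r1 r2 N f := ⟨hp, hl1, hl2, hl1m, hl2m, Nat.one_le_iff_ne_zero.1 hr1,
    Nat.one_le_iff_ne_zero.1 hr2, hN, Nat.Coprime.symm hNp, hord1, hord2, hf, hind⟩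
  have hhalf : (p : ℂ) ^ ((f : ℤ) / 2) = p ^ (f / 2) := by
    rw [← zpow_natCast, Int.natCast_div, Nat.cast_ofNat]
  obtain ⟨a, b, hab, hmod, hval⟩ := c.exists_forall_gaussSum_pow_eq hcard hχord
  refine ⟨a, b, mod_cast hab, hmod, fun t1 t2 ht1 ht2 ↦ ?_⟩
  rw [gaussSumN_eq_gaussSum, gaussSumN_eq_gaussSum, gaussSumN_eq_gaussSum, hhalf]
  refine ⟨?_, c.gaussSum_pow_left hcard hχord ?_, c.gaussSum_pow_right hcard hχord ?_⟩
  · have hdvd : l1 ^ t1 * l2 ^ t2 * (l1 * l2) ∣ N := by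
      rw [hN, mul_mul_mul_comm, ← pow_succ, ← pow_succ]
      exact mul_dvd_mul (pow_dvd_pow l1 ht1) (pow_dvd_pow l2 ht2)
    rw [hval _ hdvd]
    push_cast
    rfl
  · rwa [Nat.pow_dvd_pow_iff_le_right hl2.one_lt, not_le]
  · rwa [Nat.pow_dvd_pow_iff_le_right hl1.one_lt, not_le]
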